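/- There exists an integer n₀ such that every oriented graph G on n ≥ n₀ vertices with minimum semidegree δ⁰(G) ≥ (3n − 4)/8 contains a Hamilton cycle. -/

import Mathlib

/-- The outdegree of a vertex `x` in the digraph with adjacency relation `G`. -/
noncomputable def outDeg {V : Type*} (G : V → V → Prop) (x : V) : ℕ :=
  Nat.card {y : V // G x y}

/-- The indegree of a vertex `x` in the digraph with adjacency relation `G`. -/
noncomputable def inDeg {V : Type*} (G : V → V → Prop) (x : V) : ℕ :=
  Nat.card {y : V // G y x}

/-- An oriented graph: no loops and no 2-cycles. -/
def IsOriented {V : Type*} (G : V → V → Prop) : Prop :=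
  ∀ x y : V, G x y → ¬ G y x

/-- `f` is a Hamilton cycle of the digraph `G`. -/
def IsHamCycle {V : Type*} [Fintype V] (G : V → V → Prop)
    (f : ZMod (Fintype.card V) → V) : Prop :=
  Function.Bijective f ∧ ∀ i, G (f i) (f (i + 1))

/-!
A labelled digraph is one in which every vertex has an outlabel and an inlabel, both Boolean, and
every edge joins an outlabel to an equal inlabel. A robustly expanding labelled digraph that is
robustly strongly connected and whose outlabels and inlabels are balanced is Hamiltonian: many
short detours link into one path that can absorb any path with matching end labels; this path is
extended to a 1-factor, whose short cycles are destroyed by swaps along robust neighbourhoods;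
the remaining long cycles are few and are absorbed one after the other.

If an oriented graph of minimum semidegree about `3 n / 8` has many edges between any two large sets
whose sizes sum to about `n`, it is itself such an expander, with all labels equal. Otherwise it has
a sparse pair of sets, and counting degrees shows that the labels it induces split the vertices into
four cells of size about `n / 4` arranged as in the extremal example. The edges respecting the
labels form an expander, but the labels need not be balanced. The exact bound `(3 n - 4) / 8` yields
a small matching of edges violating the labels that balances them; a path through this matching
becomes the start of the absorbing path.
-/

namespace OrientedHamilton

open Finset
open scoped Classical

section Neighbourhoods

variable {V : Type*}

lemma exists_mem_notMem_of_card_lt {S U : Finset V} (h : #U < #S) : ∃ x ∈ S, x ∉ U :=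
  not_subset.1 fun hSU => (card_le_card hSU).not_gt h

variable [Fintype V]

lemma exists_mem_inter_notMem {S T U : Finset V} (h : Fintype.card V + #U < #S + #T) :
    ∃ x ∈ S, x ∈ T ∧ x ∉ U := by
  have hST := card_union_add_card_inter S T
  have hle := card_le_univ (S ∪ T)
  obtain ⟨x, hx, hxU⟩ := exists_mem_notMem_of_card_lt (S := S ∩ T) (U := U) (by omega)
  exact ⟨x, (mem_inter.1 hx).1, (mem_inter.1 hx).2, hxU⟩

/-- The outneighbourhood `N⁺(x)`. -/
noncomputable def outNbrs (H : V → V → Prop) (x : V) : Finset V := univ.filter fun y => H x y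

/-- The inneighbourhood `N⁻(y)`. -/
noncomputable def inNbrs (H : V → V → Prop) (y : V) : Finset V := univ.filter fun x => H x y

/-- The robust inneighbourhood `RN⁻(S)`: the vertices with at least `r` outneighbours in `S`. -/
noncomputable def robustIn (H : V → V → Prop) (r : ℕ) (S : Finset V) : Finset V :=
  univ.filter fun x => r ≤ #(outNbrs H x ∩ S)

/-- The robust outneighbourhood `RN⁺(S)`: the vertices with at least `r` inneighbours in `S`. -/
noncomputable def robustOut (H : V → V → Prop) (r : ℕ) (S : Finset V) : Finset V :=
  univ.filter fun y => r ≤ #(inNbrs H y ∩ S)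

variable {H : V → V → Prop} {r : ℕ} {S : Finset V} {x y : V}

@[simp] lemma mem_outNbrs : y ∈ outNbrs H x ↔ H x y := by simp [outNbrs]

@[simp] lemma mem_inNbrs : x ∈ inNbrs H y ↔ H x y := by simp [inNbrs]

@[simp] lemma mem_robustIn : x ∈ robustIn H r S ↔ r ≤ #(outNbrs H x ∩ S) := by simp [robustIn]

@[simp] lemma mem_robustOut : x ∈ robustOut H r S ↔ r ≤ #(inNbrs H x ∩ S) := by simp [robustOut]

lemma robustIn_flip (H : V → V → Prop) (r : ℕ) (S : Finset V) :
    robustIn (flip H) r S = robustOut H r S := rfl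

end Neighbourhoods

section Expander

variable {V : Type*} [Fintype V]

/-- The vertices with label `j`. -/
noncomputable def labelClass (o : V → Bool) (j : Bool) : Finset V := univ.filter fun x => o x = j

@[simp] lemma mem_labelClass {o : V → Bool} {j : Bool} {x : V} : x ∈ labelClass o j ↔ o x = j := by
  simp [labelClass]

lemma disjoint_labelClass (o : V → Bool) (j : Bool) :
    Disjoint (labelClass o j) (labelClass o (!j)) :=
  disjoint_left.2 fun x hx hx' => by simp_all

lemma labelClass_union (o : V → Bool) (j : Bool) : labelClass o j ∪ labelClass o (!j) = univ := by
  ext x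
  cases j <;> cases h : o x <;> simp [h]

lemma card_labelClass_add (o : V → Bool) (j : Bool) :
    #(labelClass o j) + #(labelClass o (!j)) = Fintype.card V := by
  rw [← card_union_of_disjoint (disjoint_labelClass o j), labelClass_union, card_univ]

/-- A digraph with an outlabel `o x` and an inlabel `i x` at every vertex `x`. Every edge leaves
with the label with which it arrives, so that the digraph is the union of two bipartite graphs, one
for each label. Each of them is a robust expander in both directions, of minimum degree `D` and
with almost balanced sides, where a set of size at least `τ` grows by `g` until it misses fewer than
`τ` vertices. -/
structure LabelledExpander (H : V → V → Prop) (o i : V → Bool) (D τ g r : ℕ) : Prop where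
  label : ∀ x y, H x y → o x = i y
  outdeg : ∀ x, D ≤ #(outNbrs H x)
  indeg : ∀ x, D ≤ #(inNbrs H x)
  expand_in : ∀ j, ∀ S ⊆ labelClass i j, τ ≤ #S →
    #(labelClass o j) ≤ #(robustIn H r S) + τ ∨ #S + g ≤ #(robustIn H r S)
  expand_out : ∀ j, ∀ S ⊆ labelClass o j, τ ≤ #S →
    #(labelClass i j) ≤ #(robustOut H r S) + τ ∨ #S + g ≤ #(robustOut H r S)
  balanced : ∀ j, #(labelClass o j) ≤ #(labelClass i j) + g

/-- A labelled expander which is robustly strongly connected as a whole. -/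
structure Expander (H : V → V → Prop) (o i : V → Bool) (D τ g r : ℕ) : Prop extends
    LabelledExpander H o i D τ g r where
  cut : ∀ S, τ ≤ #S → Fintype.card V ≤ #S + τ ∨ #S + g ≤ #(S ∪ robustIn H r S)

variable {H : V → V → Prop} {o i : V → Bool} {D τ g r : ℕ}

lemma LabelledExpander.balanced' (hE : LabelledExpander H o i D τ g r) (j : Bool) :
    #(labelClass i j) ≤ #(labelClass o j) + g := by
  have h := hE.balanced (!j)
  have ho := card_labelClass_add o j
  have hi := card_labelClass_add i j
  omega

lemma LabelledExpander.flip (hE : LabelledExpander H o i D τ g r) :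
    LabelledExpander (flip H) i o D τ g r where
  label x y h := (hE.label y x h).symm
  outdeg := hE.indeg
  indeg := hE.outdeg
  expand_in := hE.expand_out
  expand_out := hE.expand_in
  balanced := hE.balanced'

/-- The vertices from which `y` can robustly be reached in at most `k + 1` steps. -/
noncomputable def robustReach (H : V → V → Prop) (r : ℕ) (y : V) : ℕ → Finset V
  | 0 => inNbrs H y
  | k + 1 => robustReach H r y k ∪ robustIn H r (robustReach H r y k)

lemma exists_path_of_mem_robustReach {y z : V} {k : ℕ} {U : Finset V}
    (hz : z ∈ robustReach H r y k) (hU : #U + k + 1 ≤ r) (hzU : z ∉ U) :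
    ∃ l : List V, (z :: (l ++ [y])).IsChain H ∧ (z :: l).Nodup ∧ (∀ w ∈ z :: l, w ∉ U) ∧
      l.length ≤ k := by
  induction k generalizing z U with
  | zero => exact ⟨[], by simpa [robustReach] using hz, by simp, by simpa using hzU, le_rfl⟩
  | succ k ih =>
    rcases mem_union.1 hz with hz | hz
    · obtain ⟨l, hchain, hnodup, hlU, hlen⟩ := ih hz (by omega) hzU
      exact ⟨l, hchain, hnodup, hlU, hlen.trans k.le_succ⟩
    · have hcard := card_insert_le z U
      rw [mem_robustIn] at hz
      obtain ⟨w, hw, hwU⟩ := exists_mem_notMem_of_card_lt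
        (S := outNbrs H z ∩ robustReach H r y k) (U := insert z U) (by omega)
      rw [mem_inter, mem_outNbrs] at hw
      obtain ⟨l, hchain, hnodup, hlU, hlen⟩ := ih hw.2 (by omega) hwU
      refine ⟨w :: l, hchain.cons_cons hw.1, ?_, ?_, by simpa using hlen⟩
      · exact List.nodup_cons.2 ⟨fun h => hlU z h (mem_insert_self z U), hnodup⟩
      · exact List.forall_mem_cons.2 ⟨hzU, fun v hv h => hlU v hv (mem_insert_of_mem h)⟩

lemma Expander.card_robustReach (hE : Expander H o i D τ g r) (hD : τ ≤ D) (y : V) (k : ℕ) :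
    Fintype.card V ≤ #(robustReach H r y k) + τ ∨
      (τ ≤ #(robustReach H r y k) ∧ k * g ≤ #(robustReach H r y k)) := by
  induction k with
  | zero => exact Or.inr ⟨hD.trans (hE.indeg y), by simp⟩
  | succ k ih =>
    have hmono : #(robustReach H r y k) ≤ #(robustReach H r y (k + 1)) :=
      card_le_card subset_union_left
    rcases ih with hall | ⟨hτ, hk⟩
    · exact Or.inl (by omega)
    · rcases hE.cut _ hτ with hall | hgrow
      · exact Or.inl (by omega)
      · change _ ≤ #(robustReach H r y (k + 1)) at hgrow
        exact Or.inr ⟨by omega, by rw [Nat.succ_mul]; omega⟩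

lemma Expander.exists_link (hE : Expander H o i D τ g r) {K : ℕ} (hK : Fintype.card V ≤ K * g)
    (x y : V) {U : Finset V} (hU : #U + K + 1 ≤ r) (hD : τ + #U < D) :
    ∃ l : List V, (x :: (l ++ [y])).IsChain H ∧ l.Nodup ∧ (∀ w ∈ l, w ∉ U) ∧
      l.length ≤ K + 1 := by
  have hreach : Fintype.card V ≤ #(robustReach H r y K) + τ := by
    rcases hE.card_robustReach (by omega) y K with h | h <;> omega
  have hx := hE.outdeg x
  obtain ⟨z, hxz, hz, hzU⟩ := exists_mem_inter_notMem (S := outNbrs H x)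
    (T := robustReach H r y K) (U := U) (by omega)
  obtain ⟨l, hchain, hnodup, hlU, hlen⟩ := exists_path_of_mem_robustReach hz hU hzU
  exact ⟨z :: l, hchain.cons_cons (mem_outNbrs.1 hxz), hnodup, hlU, by simpa using hlen⟩

end Expander

section Absorber

variable {V : Type*}

/-- A nonempty list of distinct vertices forming a directed path. -/
structure IsPath (H : V → V → Prop) (Z : List V) : Prop where
  chain : Z.IsChain H
  nodup : Z.Nodup
  ne_nil : Z ≠ []

/-- `Z'` has the ends of `Z`, and its vertices are those of `Z` together with those of `Q`. -/
structure IsInsertion (Z Q Z' : List V) : Prop where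
  head : Z'.head? = Z.head?
  last : Z'.getLast? = Z.getLast?
  perm : Z'.Perm (Z ++ Q)

/-- `Absorber H A m Z`: the path `Z` can insert, one after the other, any `m` disjoint paths such
that `A t s` holds for the last vertex `t` and the first vertex `s` of each of them. -/
def Absorber (H A : V → V → Prop) : ℕ → List V → Prop
  | 0, Z => IsPath H Z
  | m + 1, Z => IsPath H Z ∧ ∀ Q, IsPath H Q → Q.Disjoint Z →
      ∀ s ∈ Q.head?, ∀ t ∈ Q.getLast?, A t s → ∃ Z', IsInsertion Z Q Z' ∧ Absorber H A m Z'

variable {H A A' : V → V → Prop} {X Y Z Z' Q Z₁ Z₂ l : List V} {m : ℕ}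

lemma IsInsertion.nodup (h : IsInsertion Z Q Z') (hZ : Z.Nodup) (hQ : Q.Nodup)
    (hd : Q.Disjoint Z) : Z'.Nodup :=
  h.perm.nodup_iff.2 (hZ.append hQ hd.symm)

lemma IsInsertion.context (h : IsInsertion Z Q Z') (X Y : List V) :
    IsInsertion (X ++ Z ++ Y) Q (X ++ Z' ++ Y) where
  head := by simp [List.head?_append, h.head]
  last := by simp [List.getLast?_append, h.last]
  perm := List.perm_iff_count.2 fun a => by
    have ha := List.perm_iff_count.1 h.perm a
    simp only [List.count_append] at ha ⊢
    omega

lemma IsInsertion.isChain (h : IsInsertion Z Q Z') (hZ : (X ++ Z ++ Y).IsChain H)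
    (hZ' : Z'.IsChain H) (hne : Z ≠ []) (hne' : Z' ≠ []) : (X ++ Z' ++ Y).IsChain H := by
  rw [List.append_assoc, List.isChain_append, List.isChain_append] at hZ ⊢
  rw [List.head?_append_of_ne_nil _ hne] at hZ
  rw [List.head?_append_of_ne_nil _ hne', h.head, h.last]
  exact ⟨hZ.1, ⟨hZ', hZ.2.1.2⟩, hZ.2.2⟩

lemma IsInsertion.isPath (h : IsInsertion Z Q Z') (hP : IsPath H (X ++ Z ++ Y))
    (hne : Z ≠ []) (hZ' : IsPath H Z') (hQ : Q.Nodup) (hd : Q.Disjoint (X ++ Z ++ Y)) :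
    IsPath H (X ++ Z' ++ Y) where
  chain := h.isChain hP.chain hZ'.chain hne hZ'.ne_nil
  nodup := (h.context X Y).nodup hP.nodup hQ hd
  ne_nil := by simp [hZ'.ne_nil]

lemma Absorber.isPath (h : Absorber H A m Z) : IsPath H Z := by
  cases m with
  | zero => exact h
  | succ m => exact h.1

lemma Absorber.mono (hA : ∀ t s, A' t s → A t s) (h : Absorber H A m Z) : Absorber H A' m Z := by
  induction m generalizing Z with
  | zero => exact h
  | succ m ih =>
    refine ⟨h.1, fun Q hQ hd s hs t ht hts => ?_⟩
    obtain ⟨Z', hins, hZ'⟩ := h.2 Q hQ hd s hs t ht (hA t s hts)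
    exact ⟨Z', hins, ih hZ'⟩

lemma Absorber.context (h : Absorber H A m Z) (hP : IsPath H (X ++ Z ++ Y)) :
    Absorber H A m (X ++ Z ++ Y) := by
  induction m generalizing Z with
  | zero => exact hP
  | succ m ih =>
    refine ⟨hP, fun Q hQ hd s hs t ht hts => ?_⟩
    obtain ⟨Z', hins, hZ'⟩ := h.2 Q hQ (fun v hv hvZ => hd hv (by simp [hvZ])) s hs t ht hts
    exact ⟨X ++ Z' ++ Y, hins.context X Y,
      ih hZ' (hins.isPath hP h.isPath.ne_nil hZ'.isPath hQ.nodup hd)⟩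

lemma Absorber.append (h₁ : Absorber H A 1 Z₁) (h₂ : Absorber H A m Z₂)
    (hP : IsPath H (Z₁ ++ l ++ Z₂)) : Absorber H A (m + 1) (Z₁ ++ l ++ Z₂) := by
  refine ⟨hP, fun Q hQ hd s hs t ht hts => ?_⟩
  have hP' : IsPath H ([] ++ Z₁ ++ (l ++ Z₂)) := by simpa using hP
  obtain ⟨Z', hins, hZ'⟩ := h₁.2 Q hQ (fun v hv hvZ => hd hv (by simp [hvZ])) s hs t ht hts
  have hpath : IsPath H ((Z' ++ l) ++ Z₂ ++ []) := by
    simpa using hins.isPath hP' h₁.isPath.ne_nil hZ'.isPath hQ.nodup (by simpa using hd)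
  exact ⟨Z' ++ l ++ Z₂, by simpa using hins.context [] (l ++ Z₂), by simpa using h₂.context hpath⟩

lemma Absorber.or (h₁ : Absorber H A 1 Z₁) (h₂ : Absorber H A' 1 Z₂)
    (hP : IsPath H (Z₁ ++ l ++ Z₂)) :
    Absorber H (fun t s => A t s ∨ A' t s) 1 (Z₁ ++ l ++ Z₂) := by
  have h₁' : Absorber H A 1 (Z₁ ++ l ++ Z₂) := by
    simpa using h₁.context (X := []) (Y := l ++ Z₂) (by simpa using hP)
  have h₂' : Absorber H A' 1 (Z₁ ++ l ++ Z₂) := by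
    simpa using h₂.context (X := Z₁ ++ l) (Y := []) (by simpa using hP)
  refine ⟨hP, fun Q hQ hd s hs t ht hts => ?_⟩
  rcases hts with hA | hA'
  · exact h₁'.2 Q hQ hd s hs t ht hA
  · exact h₂'.2 Q hQ hd s hs t ht hA'

lemma absorber_pair {p q : V} (hqp : H q p) (hne : p ≠ q) :
    Absorber H (fun t s => H t p ∧ H q s) 1 [q, p] := by
  have hpath : IsPath H [q, p] := ⟨by simpa using hqp, by simpa using hne.symm, by simp⟩
  refine ⟨hpath, fun Q hQ hd s hs t ht hts => ?_⟩
  have hins : IsInsertion [q, p] Q (q :: (Q ++ [p])) := by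
    refine ⟨rfl, by simp [List.getLast?_cons], List.perm_iff_count.2 fun a => ?_⟩
    simp only [List.count_cons, List.count_append, List.count_nil]
    omega
  refine ⟨_, hins, List.isChain_cons.2 ⟨?_, ?_⟩, hins.nodup hpath.nodup hQ.nodup hd, by simp⟩
  · rw [List.head?_append_of_ne_nil _ hQ.ne_nil]
    exact fun y hy => Option.mem_unique hs hy ▸ hts.2
  · refine List.isChain_append.2 ⟨hQ.chain, .singleton p, fun x hx y hy => ?_⟩
    obtain rfl : p = y := by simpa using hy
    exact Option.mem_unique ht hx ▸ hts.1

/-- The segment from `p` to `c` is detached, the gap is closed by the edge `a b`, and `B` absorbs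
`Q` followed by the segment. -/
lemma absorber_step {p q a b c d : V} {l l' B : List V}
    (hB : Absorber H (fun t s => H t d ∧ H q s) 1 B)
    (hP : IsPath H ([a, p] ++ l ++ [c, b] ++ l' ++ B)) (hab : H a b) (hcd : H c d) :
    Absorber H (fun t s => H t p ∧ H q s) 1 ([a, p] ++ l ++ [c, b] ++ l' ++ B) := by
  refine ⟨hP, fun Q hQ hd s hs t ht hts => ?_⟩
  have hsplit :
      [a, p] ++ l ++ [c, b] ++ l' ++ B = [a] ++ ((p :: (l ++ [c])) ++ (b :: l' ++ B)) := by
    simp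
  have hchain := hsplit ▸ hP.chain
  have hnodup := hsplit ▸ hP.nodup
  rw [List.isChain_append, List.isChain_append] at hchain
  rw [List.nodup_append', List.nodup_append'] at hnodup
  have hQ' : IsPath H (Q ++ p :: (l ++ [c])) := by
    refine ⟨List.isChain_append.2 ⟨hQ.chain, hchain.2.1.1, fun x hx y hy => ?_⟩,
      hQ.nodup.append hnodup.2.1.1 fun v hv hv' => hd hv ?_, by simp⟩
    · obtain rfl : p = y := by simpa using hy
      exact Option.mem_unique ht hx ▸ hts.1
    · exact hsplit ▸ List.mem_append_right _ (List.mem_append_left _ hv')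
  have hdB : (Q ++ p :: (l ++ [c])).Disjoint B := by
    refine List.disjoint_append_left.2 ⟨fun v hv hvB => hd hv (by simp [hvB]), fun v hv hvB => ?_⟩
    exact hnodup.2.1.2.2 hv (by simp [hvB])
  obtain ⟨B', hins, hB'⟩ := hB.2 _ hQ' hdB s (by rwa [List.head?_append_of_ne_nil _ hQ.ne_nil]) c
    (by simp [List.getLast?_append, List.getLast?_cons]) ⟨hcd, hts.2⟩
  have hins' : IsInsertion ([a, p] ++ l ++ [c, b] ++ l' ++ B) Q (a :: b :: l' ++ B') := by
    refine ⟨by simp, ?_, List.perm_iff_count.2 fun v => ?_⟩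
    · rw [List.getLast?_append, List.getLast?_append, hins.last,
        List.getLast?_eq_some_getLast hB.isPath.ne_nil]
      rfl
    · have hv := List.perm_iff_count.1 hins.perm v
      simp only [List.count_append, List.count_cons, List.count_nil] at hv ⊢
      omega
  refine ⟨_, hins', ?_, hins'.nodup hP.nodup hQ.nodup hd, by simp⟩
  have hbB : (b :: l' ++ B' ++ []).IsChain H :=
    hins.isChain (by simpa using hchain.2.1.2.1) hB'.isPath.chain hB.isPath.ne_nil hB'.isPath.ne_nil
  exact List.IsChain.cons_cons hab (by simpa using hbB)

end Absorber

section Link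

variable {V : Type*} {H R : V → V → Prop}

lemma IsPath.append_link {Z₁ Z₂ l : List V} (h₁ : IsPath R Z₁) (h₂ : IsPath R Z₂)
    (hd : Z₁.Disjoint Z₂)
    (hl : (Z₁.getLast h₁.ne_nil :: (l ++ [Z₂.head h₂.ne_nil])).IsChain R) (hnd : l.Nodup)
    (hl₁ : l.Disjoint Z₁) (hl₂ : l.Disjoint Z₂) : IsPath R (Z₁ ++ l ++ Z₂) where
  chain := by
    have hsplit : Z₁ ++ l ++ Z₂ =
        Z₁.dropLast ++ ((Z₁.getLast h₁.ne_nil :: (l ++ [Z₂.head h₂.ne_nil])) ++ Z₂.tail) := by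
      conv_lhs => rw [← List.dropLast_append_getLast h₁.ne_nil, ← List.cons_head_tail h₂.ne_nil]
      simp
    have hc₁ := h₁.chain
    have hc₂ := h₂.chain
    rw [← List.dropLast_append_getLast h₁.ne_nil, List.isChain_append] at hc₁
    rw [← List.cons_head_tail h₂.ne_nil, List.isChain_cons] at hc₂
    rw [hsplit, List.isChain_append, List.isChain_append]
    refine ⟨hc₁.1, ⟨hl, hc₂.2, fun x hx y hy => ?_⟩, fun x hx y hy => ?_⟩
    · obtain rfl : Z₂.head h₂.ne_nil = x := by
        rw [← List.cons_append, List.getLast?_append] at hx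
        simpa using hx
      exact hc₂.1 y hy
    · exact hc₁.2.2 x hx y (by simpa using hy)
  nodup := (h₁.nodup.append hnd hl₁.symm).append h₂.nodup (List.disjoint_append_left.2 ⟨hd, hl₂⟩)
  ne_nil := by simp [h₁.ne_nil]

/-- The heads and tails of a list of edges. -/
def endpoints (M : List (V × V)) : List V := M.flatMap fun e => [e.1, e.2]

@[simp] lemma endpoints_cons (e : V × V) (M : List (V × V)) :
    endpoints (e :: M) = e.1 :: e.2 :: endpoints M := rfl

/-- A list of pairwise disjoint edges. -/
structure IsMatching (F : V → V → Prop) (M : List (V × V)) : Prop where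
  edge : ∀ e ∈ M, F e.1 e.2
  nodup : (endpoints M).Nodup

variable [Fintype V] {o i : V → Bool} {D τ g r K : ℕ}

lemma Expander.exists_link_paths (hE : Expander H o i D τ g r) (hK : Fintype.card V ≤ K * g)
    {U : Finset V} (hR : ∀ x ∉ U, ∀ y, H x y → R x y) {Z₁ Z₂ : List V} (h₁ : IsPath R Z₁)
    (h₂ : IsPath R Z₂) (hlast : ∀ x ∈ Z₁.getLast?, ∀ y, H x y → R x y) (hd : Z₁.Disjoint Z₂)
    (hU : #U + Z₁.length + Z₂.length + K + 1 ≤ r) (hD : τ + #U + Z₁.length + Z₂.length < D) :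
    ∃ l : List V, IsPath R (Z₁ ++ l ++ Z₂) ∧ (∀ w ∈ l, w ∉ U) ∧ l.length ≤ K + 1 := by
  have hcard : #(U ∪ (Z₁ ++ Z₂).toFinset) ≤ #U + Z₁.length + Z₂.length := by
    have h := card_union_le U (Z₁ ++ Z₂).toFinset
    have h' := List.toFinset_card_le (Z₁ ++ Z₂)
    rw [List.length_append] at h'
    omega
  obtain ⟨l, hchain, hnodup, havoid, hlen⟩ := hE.exists_link hK (Z₁.getLast h₁.ne_nil)
    (Z₂.head h₂.ne_nil) (U := U ∪ (Z₁ ++ Z₂).toFinset) (by omega) (by omega)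
  simp only [mem_union, List.mem_toFinset, List.mem_append, not_or] at havoid
  refine ⟨l, h₁.append_link h₂ hd ?_ hnodup (fun v hv => (havoid v hv).2.1)
    (fun v hv => (havoid v hv).2.2), fun w hw => (havoid w hw).1, hlen⟩
  have hmem : ∀ v ∈ Z₁.getLast h₁.ne_nil :: l, ∀ y, H v y → R v y := List.forall_mem_cons.2
    ⟨hlast _ (List.getLast?_eq_some_getLast h₁.ne_nil), fun v hv => hR v (havoid v hv).1⟩
  rw [← List.cons_append, List.isChain_append] at hchain ⊢
  exact ⟨hchain.1.imp_of_mem_imp fun a b ha _ h => hmem a ha b h, by simp,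
    fun a ha b hb => hmem a (List.mem_of_getLast? ha) b (hchain.2.2 a ha b hb)⟩

lemma Expander.exists_path_through (hE : Expander H o i D τ g r) (hK : Fintype.card V ≤ K * g)
    {U : Finset V} (hR : ∀ x ∉ U, ∀ y, H x y → R x y) {Z : List V} (hZ : IsPath R Z)
    (hZU : ∀ v ∈ Z, v ∉ U) {M : List (V × V)} (hM : IsMatching R M)
    (hMU : ∀ v ∈ endpoints M, v ∈ U) (hMR : ∀ e ∈ M, ∀ y, H e.2 y → R e.2 y)
    (hU : #U + Z.length + (M.length + 1) * (K + 3) ≤ r)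
    (hD : τ + #U + Z.length + (M.length + 1) * (K + 3) < D) :
    ∃ X : List V, IsPath R (X ++ Z) ∧ (∀ v ∈ X, v ∈ endpoints M ∨ v ∉ U) ∧
      (∀ e ∈ M, e.1 ∈ X) ∧ X.length ≤ M.length * (K + 3) := by
  induction M with
  | nil => exact ⟨[], by simpa using hZ, by simp, by simp, by simp⟩
  | cons e M ih =>
    obtain ⟨he, hM'⟩ := List.forall_mem_cons.1 hM.edge
    obtain ⟨heR, hMR'⟩ := List.forall_mem_cons.1 hMR
    have hnd := hM.nodup
    rw [endpoints_cons, List.forall_mem_cons, List.forall_mem_cons] at hMU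
    simp only [endpoints_cons, List.nodup_cons, List.mem_cons, not_or] at hnd
    simp only [List.length_cons, Nat.add_mul] at hU hD ih ⊢
    obtain ⟨X, hXZ, hXU, hMX, hXlen⟩ := ih ⟨hM', hnd.2.2⟩ hMU.2.2 hMR' (by omega) (by omega)
    have he' : IsPath R [e.1, e.2] := ⟨by simpa using he, by simpa using hnd.1.1, by simp⟩
    have hd : [e.1, e.2].Disjoint (X ++ Z) := by
      refine List.disjoint_append_right.2 ⟨fun v hv hvX => ?_, fun v hv hvZ => ?_⟩
      · have := hXU v hvX
        simp only [List.mem_cons, List.not_mem_nil, or_false] at hv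
        rcases hv with rfl | rfl <;> tauto
      · have := hZU v hvZ
        simp only [List.mem_cons, List.not_mem_nil, or_false] at hv
        rcases hv with rfl | rfl <;> tauto
    obtain ⟨l, hl, hlU, hllen⟩ := hE.exists_link_paths hK hR he' hXZ (by simpa using heR) hd
      (by simp only [List.length_cons, List.length_nil, List.length_append]; omega)
      (by simp only [List.length_cons, List.length_nil, List.length_append]; omega)
    refine ⟨[e.1, e.2] ++ l ++ X, by simpa using hl, fun v hv => ?_,
      List.forall_mem_cons.2 ⟨by simp, fun e' he' => by simp [hMX e' he']⟩, ?_⟩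
    · have := hXU v
      have := hlU v
      simp only [List.mem_append, List.mem_cons, List.not_mem_nil, or_false, endpoints_cons] at hv ⊢
      tauto
    · simp only [List.length_append, List.length_cons, List.length_nil]
      omega

/-- The vertices `p` for which absorbers at the pair `(p, q)` are built in `k` steps of
`absorber_step`. -/
noncomputable def absorbSet (H : V → V → Prop) (r : ℕ) (q : V) : ℕ → Finset V
  | 0 => outNbrs H q
  | k + 1 => robustOut H r (robustIn H r (robustOut H r (robustIn H r (absorbSet H r q k))))

lemma exists_zigzag_of_mem_absorbSet {p q : V} {k : ℕ} {U : Finset V}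
    (hp : p ∈ absorbSet H r q (k + 1)) (hU : #U + 4 ≤ r) :
    ∃ a b c, ∃ d ∈ absorbSet H r q k, H a p ∧ H a b ∧ H c b ∧ H c d ∧
      [a, b, c, d].Nodup ∧ ∀ v ∈ [a, b, c, d], v ∉ U := by
  rw [absorbSet, mem_robustOut] at hp
  obtain ⟨a, ha, haU⟩ := exists_mem_notMem_of_card_lt (U := U) (lt_of_lt_of_le (by omega) hp)
  rw [mem_inter, mem_inNbrs, mem_robustIn] at ha
  have hca := card_insert_le a U
  obtain ⟨b, hb, hbU⟩ := exists_mem_notMem_of_card_lt (U := insert a U)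
    (lt_of_lt_of_le (by omega) ha.2)
  rw [mem_inter, mem_outNbrs, mem_robustOut] at hb
  have hcb := card_insert_le b (insert a U)
  obtain ⟨c, hc, hcU⟩ := exists_mem_notMem_of_card_lt (U := insert b (insert a U))
    (lt_of_lt_of_le (by omega) hb.2)
  rw [mem_inter, mem_inNbrs, mem_robustIn] at hc
  have hcc := card_insert_le c (insert b (insert a U))
  obtain ⟨d, hd, hdU⟩ := exists_mem_notMem_of_card_lt (U := insert c (insert b (insert a U)))
    (lt_of_lt_of_le (by omega) hc.2)
  rw [mem_inter, mem_outNbrs] at hd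
  exact ⟨a, b, c, d, hd.2, ha.1, hb.1, hc.1, hd.1, by grind, by grind⟩

lemma Expander.exists_absorber_extend (hE : Expander H o i D τ g r)
    (hK : Fintype.card V ≤ K * g) {p q a b c d : V} {B : List V} {U : Finset V}
    (hB : Absorber H (fun t s => H t d ∧ H q s) 1 B) (hap : H a p) (hab : H a b) (hcb : H c b)
    (hcd : H c d) (hnd : [a, p, c, b].Nodup) (hBd : [a, p, c, b].Disjoint B)
    (hV : ∀ v ∈ [a, p, c, b] ++ B, v ∉ U) (hUr : #U + B.length + 2 * K + 6 ≤ r)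
    (hUD : τ + #U + B.length + 2 * K + 6 ≤ D) :
    ∃ Z, Absorber H (fun t s => H t p ∧ H q s) 1 Z ∧ (∀ v ∈ Z, v ∉ U) ∧
      Z.length ≤ B.length + 2 * K + 6 := by
  have hcb' : IsPath H [c, b] := ⟨by simpa using hcb, by grind, by simp⟩
  have hap' : IsPath H [a, p] := ⟨by simpa using hap, by grind, by simp⟩
  have hcard : #(insert a (insert p U)) ≤ #U + 2 := by
    have h := card_insert_le a (insert p U)
    have h' := card_insert_le p U
    omega
  obtain ⟨l', hl', hlU', hllen'⟩ := hE.exists_link_paths hK (U := insert a (insert p U))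
    (fun _ _ _ h => h) hcb' hB.isPath (fun _ _ _ h => h) (fun v hv hv' => hBd (by grind) hv')
    (by simp only [List.length_cons, List.length_nil]; omega)
    (by simp only [List.length_cons, List.length_nil]; omega)
  simp only [mem_insert, not_or] at hlU'
  have hd : [a, p].Disjoint ([c, b] ++ l' ++ B) := by
    intro v hv hv'
    have hvB : v ∉ B := fun h => hBd (by grind) h
    grind
  obtain ⟨l, hl, hlU, hllen⟩ := hE.exists_link_paths hK (U := U) (fun _ _ _ h => h) hap' hl'
    (fun _ _ _ h => h) hd
    (by simp only [List.length_cons, List.length_nil, List.length_append]; omega)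
    (by simp only [List.length_cons, List.length_nil, List.length_append]; omega)
  refine ⟨_, absorber_step hB (by simpa using hl) hab hcd, by grind, ?_⟩
  simp only [List.length_append, List.length_cons, List.length_nil]
  omega

lemma Expander.exists_block (hE : Expander H o i D τ g r) (hK : Fintype.card V ≤ K * g) {q : V}
    {k : ℕ} {p : V} {U : Finset V} (hp : p ∈ absorbSet H r q k) (hpq : p ≠ q) (hpU : p ∉ U)
    (hqU : q ∉ U) (hUr : #U + (k + 2) * (2 * K + 6) ≤ r)
    (hUD : τ + #U + (k + 2) * (2 * K + 6) ≤ D) :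
    ∃ Z, Absorber H (fun t s => H t p ∧ H q s) 1 Z ∧ (∀ v ∈ Z, v ∉ U) ∧
      Z.length + (2 * K + 4) ≤ (k + 1) * (2 * K + 6) := by
  induction k generalizing p U with
  | zero =>
    refine ⟨[q, p], absorber_pair (mem_outNbrs.1 hp) hpq, by simp [hpU, hqU], ?_⟩
    simp only [List.length_cons, List.length_nil]
    omega
  | succ k ih =>
    simp only [Nat.add_mul] at hUr hUD ih ⊢
    have hcard : #(insert p (insert q U)) ≤ #U + 2 := by
      have h := card_insert_le p (insert q U)
      have h' := card_insert_le q U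
      omega
    obtain ⟨a, b, c, d, hd, hap, hab, hcb, hcd, hnd, hV⟩ :=
      exists_zigzag_of_mem_absorbSet (U := insert p (insert q U)) hp (by omega)
    simp only [List.forall_mem_cons, mem_insert, not_or] at hV
    have hcard' : #(U ∪ {a, p, c, b}) ≤ #U + 4 :=
      (card_union_le _ _).trans (Nat.add_le_add_left card_le_four _)
    obtain ⟨B, hB, hBU, hBlen⟩ := ih (p := d) (U := U ∪ {a, p, c, b}) hd (by grind)
      (by grind) (by grind) (by omega) (by omega)
    simp only [mem_union, mem_insert, mem_singleton, not_or] at hBU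
    obtain ⟨Z, hZ, hZU, hZlen⟩ := hE.exists_absorber_extend hK (U := U) hB hap hab hcb hcd
      (by grind) (fun v hv hvB => by grind) (by grind) (by omega) (by omega)
    exact ⟨Z, hZ, hZU, by omega⟩

end Link

section ExistsAbsorber

variable {V : Type*} [Fintype V] {H : V → V → Prop} {o i : V → Bool} {D τ g r : ℕ}

namespace LabelledExpander

lemma robustIn_subset (hE : LabelledExpander H o i D τ g r) (hr : 0 < r) {j : Bool}
    {S : Finset V} (hS : S ⊆ labelClass i j) : robustIn H r S ⊆ labelClass o j := by
  intro x hx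
  rw [mem_robustIn] at hx
  obtain ⟨y, hy⟩ := card_pos.1 (hr.trans_le hx)
  rw [mem_inter, mem_outNbrs] at hy
  rw [mem_labelClass, hE.label _ _ hy.1]
  exact mem_labelClass.1 (hS hy.2)

lemma robustOut_subset (hE : LabelledExpander H o i D τ g r) (hr : 0 < r) {j : Bool}
    {S : Finset V} (hS : S ⊆ labelClass o j) : robustOut H r S ⊆ labelClass i j :=
  hE.flip.robustIn_subset hr hS

lemma outNbrs_subset (hE : LabelledExpander H o i D τ g r) (x : V) :
    outNbrs H x ⊆ labelClass i (o x) := by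
  intro y hy
  rw [mem_labelClass, hE.label _ _ (mem_outNbrs.1 hy)]

lemma inNbrs_subset (hE : LabelledExpander H o i D τ g r) (x : V) :
    inNbrs H x ⊆ labelClass o (i x) :=
  hE.flip.outNbrs_subset x

lemma card_robustIn (hE : LabelledExpander H o i D τ g r) (hτ : 0 < τ) (hD : 2 * τ ≤ D) {j : Bool}
    {S : Finset V} (hS : S ⊆ labelClass i j) (hSτ : τ ≤ #S) :
    τ ≤ #(robustIn H r S) ∧
      (#(labelClass o j) ≤ #(robustIn H r S) + τ ∨ #S + g ≤ #(robustIn H r S)) ∧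
      (#(labelClass i j) ≤ #S + τ → #(labelClass o j) ≤ #(robustIn H r S) + τ) := by
  obtain ⟨y, hy⟩ := card_pos.1 (hτ.trans_le hSτ)
  have hsub := card_le_card (hE.inNbrs_subset y)
  rw [mem_labelClass.1 (hS hy)] at hsub
  have hdeg := hE.indeg y
  have hbal := hE.balanced j
  have hexp := hE.expand_in j S hS hSτ
  omega

lemma card_robustOut_robustIn (hE : LabelledExpander H o i D τ g r) (hr : 0 < r) (hτ : 0 < τ)
    (hD : 2 * τ ≤ D) {j : Bool} {S : Finset V} (hS : S ⊆ labelClass i j) (hSτ : τ ≤ #S) :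
    robustOut H r (robustIn H r S) ⊆ labelClass i j ∧ τ ≤ #(robustOut H r (robustIn H r S)) ∧
      (#(labelClass i j) ≤ #(robustOut H r (robustIn H r S)) + τ ∨
        #S + g ≤ #(robustOut H r (robustIn H r S))) := by
  have hsub := hE.robustIn_subset hr hS
  obtain ⟨hge, hgrow, hfull⟩ := hE.card_robustIn hτ hD hS hSτ
  obtain ⟨hge', hgrow', hfull'⟩ := hE.flip.card_robustIn hτ hD hsub hge
  rw [robustIn_flip] at hge' hgrow' hfull'
  exact ⟨hE.robustOut_subset hr hsub, hge', by omega⟩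

lemma card_absorbSet (hE : LabelledExpander H o i D τ g r) (hr : 0 < r) (hτ : 0 < τ)
    (hD : 2 * τ ≤ D) (q : V) (k : ℕ) :
    absorbSet H r q k ⊆ labelClass i (o q) ∧ τ ≤ #(absorbSet H r q k) ∧
      (#(labelClass i (o q)) ≤ #(absorbSet H r q k) + τ ∨ k * g ≤ #(absorbSet H r q k)) := by
  induction k with
  | zero =>
    have hdeg := hE.outdeg q
    exact ⟨hE.outNbrs_subset q, by rw [absorbSet]; omega, by simp⟩
  | succ k ih =>
    obtain ⟨hsub, hge, hgrow⟩ := ih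
    obtain ⟨hsub', hge', hgrow'⟩ := hE.card_robustOut_robustIn hr hτ hD hsub hge
    obtain ⟨hsub'', hge'', hgrow''⟩ := hE.card_robustOut_robustIn hr hτ hD hsub' hge'
    rw [absorbSet, Nat.succ_mul]
    exact ⟨hsub'', hge'', by omega⟩

lemma mem_absorbSet (hE : LabelledExpander H o i D τ g r) (hr : 0 < r) (hτ : 0 < τ)
    (hD : 2 * τ ≤ D) (hDr : τ + r ≤ D) {K : ℕ} (hK : Fintype.card V ≤ K * g) {p q : V}
    (hpq : i p = o q) : p ∈ absorbSet H r q (K + 1) := by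
  obtain ⟨hsub, hge, hgrow⟩ := hE.card_absorbSet hr hτ hD q K
  obtain ⟨hsub', hge', hgrow'⟩ := hE.card_robustOut_robustIn hr hτ hD hsub hge
  obtain ⟨-, -, hfull⟩ := hE.card_robustIn hτ hD hsub' hge'
  have huniv := card_le_univ (labelClass i (o q))
  have hdeg := hE.indeg p
  have hcard := card_union_add_card_inter (inNbrs H p)
    (robustIn H r (robustOut H r (robustIn H r (absorbSet H r q K))))
  have hunion := card_le_card
    (union_subset (hpq ▸ hE.inNbrs_subset p) (hE.robustIn_subset hr hsub'))
  rw [absorbSet, mem_robustOut]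
  omega

end LabelledExpander

lemma sq_le_card_absorbing_pairs {U : Finset V} {t s : V} {u : ℕ} (hU : #U + 1 ≤ u) (hu : u < D)
    (ht : D ≤ #(outNbrs H t)) (hs : D ≤ #(inNbrs H s)) :
    (D - u) ^ 2 ≤ #{y : V × V | (y.1 ∉ U ∧ y.2 ∉ U ∧ y.1 ≠ y.2) ∧ H t y.1 ∧ H y.2 s} := by
  set S := outNbrs H t \ U
  set T := inNbrs H s \ U
  have hS : D ≤ #S + #U := by
    have : _ ≤ #S := le_card_sdiff U (outNbrs H t)
    omega
  have hT : D ≤ #T + #U := by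
    have : _ ≤ #T := le_card_sdiff U (inNbrs H s)
    omega
  have hsub : (S ×ˢ T) \ S.diag ⊆
      ({y | (y.1 ∉ U ∧ y.2 ∉ U ∧ y.1 ≠ y.2) ∧ H t y.1 ∧ H y.2 s} : Finset (V × V)) := by
    rintro ⟨y, z⟩ hyz
    simp only [S, T, mem_sdiff, mem_product, mem_diag, mem_outNbrs, mem_inNbrs, mem_filter,
      mem_univ, true_and] at hyz ⊢
    tauto
  obtain ⟨k, hk⟩ : ∃ k, #T = k + 1 := ⟨#T - 1, by omega⟩
  have hdiag := le_card_sdiff S.diag (S ×ˢ T)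
  rw [card_product, diag_card, hk, mul_add, mul_one, Nat.add_sub_cancel] at hdiag
  calc (D - u) ^ 2 = (D - u) * (D - u) := pow_two _
    _ ≤ #S * k := Nat.mul_le_mul (by omega) (by omega)
    _ ≤ _ := hdiag.trans (card_le_card hsub)

/-- Averaging over all `p` and `q`. -/
lemma exists_popular_pair (hout : ∀ x, D ≤ #(outNbrs H x)) (hin : ∀ x, D ≤ #(inNbrs H x))
    {U : Finset V} {u : ℕ} (hU : #U + 1 ≤ u) (hu : u < D) {W : Finset (V × V)}
    (hW : W.Nonempty) :
    ∃ p ∉ U, ∃ q ∉ U, p ≠ q ∧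
      #W * (D - u) ^ 2 ≤ Fintype.card V ^ 2 * #{x ∈ W | H x.1 p ∧ H q x.2} := by
  set P : Finset (V × V) := {y | y.1 ∉ U ∧ y.2 ∉ U ∧ y.1 ≠ y.2} with hP
  have hsum : #W * (D - u) ^ 2 ≤ ∑ y ∈ P, #{x ∈ W | H x.1 y.1 ∧ H y.2 x.2} := by
    calc #W * (D - u) ^ 2
        ≤ ∑ x ∈ W, #{y ∈ P | H x.1 y.1 ∧ H y.2 x.2} := by
          rw [← smul_eq_mul]
          refine card_nsmul_le_sum _ _ _ fun x _ => ?_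
          rw [hP, filter_filter]
          exact sq_le_card_absorbing_pairs hU hu (hout _) (hin _)
      _ = _ := sum_card_bipartiteAbove_eq_sum_card_bipartiteBelow
          (fun (x y : V × V) => H x.1 y.1 ∧ H y.2 x.2)
  have hPcard : #P ≤ Fintype.card V ^ 2 := by
    rw [pow_two, ← Fintype.card_prod]
    exact card_le_univ _
  have hpos : 0 < #W * (D - u) ^ 2 :=
    Nat.mul_pos (card_pos.2 hW) (pow_pos (Nat.sub_pos_of_lt hu) _)
  have hPne : P.Nonempty := by
    by_contra hne
    rw [not_nonempty_iff_eq_empty.1 hne, sum_empty] at hsum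
    omega
  by_contra! hc
  have hlt : ∑ y ∈ P, Fintype.card V ^ 2 * #{x ∈ W | H x.1 y.1 ∧ H y.2 x.2} <
      #P * (#W * (D - u) ^ 2) := by
    rw [← smul_eq_mul, ← sum_const]
    refine sum_lt_sum_of_nonempty hPne fun y hy => ?_
    simp only [P, mem_filter, mem_univ, true_and] at hy
    exact hc y.1 hy.1 y.2 hy.2.1 hy.2.2
  rw [← mul_sum] at hlt
  exact (Nat.mul_le_mul hPcard hsum).not_gt hlt

lemma card_filter_not_le {α : Type*} {W : Finset α} {P : α → Prop} [DecidablePred P]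
    {c d n : ℝ} (hn : 0 < n) (hc : c * n ≤ d) (hP : #W * d ≤ n * #{x ∈ W | P x}) :
    (#{x ∈ W | ¬ P x} : ℝ) ≤ (1 - c) * #W := by
  have hsplit : (#{x ∈ W | P x} : ℝ) + #{x ∈ W | ¬ P x} = #W := by
    exact_mod_cast card_filter_add_card_filter_not (s := W) P
  have hfrac : c * #W ≤ #{x ∈ W | P x} := by
    refine le_of_mul_le_mul_left ?_ hn
    linarith [mul_le_mul_of_nonneg_left hc (Nat.cast_nonneg (α := ℝ) #W)]
  linarith

variable {K N : ℕ} {U : Finset V}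

lemma Expander.exists_absorber_or (hE : Expander H o i D τ g r) (hτ : 0 < τ) (hD : 2 * τ ≤ D)
    (hDr : τ + r ≤ D) (hK : Fintype.card V ≤ K * g) {A : V → V → Prop} {Z : List V}
    (hZ : Absorber H A 1 Z) (hZU : ∀ v ∈ Z, v ∉ U) {p q : V} (hp : p ∉ U ∪ Z.toFinset)
    (hq : q ∉ U ∪ Z.toFinset) (hne : p ≠ q) (hpq : i p = o q)
    (hr : #U + Z.length + 2 * (K + 3) ^ 2 ≤ r) :
    ∃ Z', Absorber H (fun t s => A t s ∨ H t p ∧ H q s) 1 Z' ∧ (∀ v ∈ Z', v ∉ U) ∧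
      Z'.length ≤ Z.length + 2 * (K + 3) ^ 2 := by
  have hlen : 2 * (K + 3) ^ 2 = (K + 1 + 1) * (2 * K + 6) + (2 * K + 6) := by ring
  have hlen' : (K + 1 + 2) * (2 * K + 6) = (K + 1 + 1) * (2 * K + 6) + (2 * K + 6) := by ring
  have hcard := card_union_le U Z.toFinset
  have hcard' := List.toFinset_card_le Z
  obtain ⟨B, hB, hBU, hBlen⟩ := hE.exists_block hK
    (hE.mem_absorbSet (by omega) hτ hD hDr hK hpq) hne hp hq (by omega) (by omega)
  simp only [mem_union, List.mem_toFinset, not_or] at hBU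
  obtain ⟨l, hl, hlU, hllen⟩ := hE.exists_link_paths hK (fun _ _ _ h => h) hZ.isPath hB.isPath
    (fun _ _ _ h => h) (fun v hv hv' => (hBU v hv').2 hv) (U := U) (by omega) (by omega)
  refine ⟨_, hZ.or hB hl, by grind, ?_⟩
  simp only [List.length_append]
  omega

/-- The pairs which `Z` cannot absorb yet lie in `W`, and `W` decays exponentially in the number
`m` of rounds. -/
lemma Expander.exists_partial_absorber [Nonempty V] (hE : Expander H o i D τ g r) (hτ : 0 < τ)
    (hD : 2 * τ ≤ D) (hDr : τ + r ≤ D) (hK : Fintype.card V ≤ K * g) {c : ℝ} (hc1 : c ≤ 1)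
    (hND : N < D) (hc : c * (Fintype.card V : ℝ) ^ 2 ≤ ((D - N : ℕ) : ℝ) ^ 2) (hNr : N ≤ r)
    {m : ℕ} (hm : #U + (m + 1) * (2 * (K + 3) ^ 2) ≤ N) :
    ∃ Z, ∃ W : Finset (V × V), Absorber H (fun t s => o t = i s ∧ (t, s) ∉ W) 1 Z ∧
      (∀ v ∈ Z, v ∉ U) ∧ Z.length ≤ m * (2 * (K + 3) ^ 2) + 1 ∧
      (∀ x ∈ W, o x.1 = i x.2) ∧ (#W : ℝ) ≤ (1 - c) ^ m * (Fintype.card V : ℝ) ^ 2 := by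
  have hlen : 1 < 2 * (K + 3) ^ 2 := by nlinarith
  induction m with
  | zero =>
    obtain ⟨v⟩ := ‹Nonempty V›
    have hdeg := hE.outdeg v
    obtain ⟨z, -, hz⟩ := exists_mem_notMem_of_card_lt (S := outNbrs H v) (U := U) (by omega)
    refine ⟨[z], univ.filter fun x => o x.1 = i x.2, ⟨⟨by simp, by simp, by simp⟩, ?_⟩,
      by simpa using hz, by simp, by simp, ?_⟩
    · simp
    · rw [pow_zero, one_mul, pow_two]
      exact_mod_cast (card_le_univ _).trans_eq (Fintype.card_prod V V)
  | succ m ih =>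
    simp only [Nat.add_mul, one_mul] at hm ih ⊢
    obtain ⟨Z, W, hZ, hZU, hZlen, hWlabel, hWcard⟩ := ih (by omega)
    rcases W.eq_empty_or_nonempty with rfl | hW
    · have : (0 : ℝ) ≤ 1 - c := by linarith
      exact ⟨Z, ∅, hZ, hZU, by omega, by simp, by rw [card_empty, Nat.cast_zero]; positivity⟩
    have hcard : #(U ∪ Z.toFinset) ≤ #U + Z.length :=
      (card_union_le _ _).trans (Nat.add_le_add_left (List.toFinset_card_le _) _)
    obtain ⟨p, hp, q, hq, hne, hpop⟩ := exists_popular_pair hE.outdeg hE.indeg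
      (U := U ∪ Z.toFinset) (u := N) (by omega) hND hW
    have hpos : 0 < #W * (D - N) ^ 2 :=
      Nat.mul_pos (card_pos.2 hW) (pow_pos (Nat.sub_pos_of_lt hND) _)
    obtain ⟨x, hx⟩ := card_pos.1 (Nat.pos_of_mul_pos_left (hpos.trans_le hpop))
    rw [mem_filter] at hx
    have hpq : i p = o q := by
      rw [← hE.label _ _ hx.2.1, hE.label _ _ hx.2.2, hWlabel x hx.1]
    obtain ⟨Z', hZ', hZU', hZlen'⟩ :=
      hE.exists_absorber_or hτ hD hDr hK hZ hZU hp hq hne hpq (by omega)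
    refine ⟨Z', {x ∈ W | ¬ (H x.1 p ∧ H q x.2)}, hZ'.mono fun t s hts => ?_, hZU', by omega,
      fun x hx => hWlabel x (mem_filter.1 hx).1, ?_⟩
    · simp only [mem_filter, not_and] at hts
      tauto
    · calc (#{x ∈ W | ¬ (H x.1 p ∧ H q x.2)} : ℝ)
          ≤ (1 - c) * #W := card_filter_not_le (by positivity) hc (by exact_mod_cast hpop)
        _ ≤ (1 - c) * ((1 - c) ^ m * (Fintype.card V : ℝ) ^ 2) :=
          mul_le_mul_of_nonneg_left hWcard (by linarith)
        _ = (1 - c) ^ (m + 1) * (Fintype.card V : ℝ) ^ 2 := by ring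

lemma Expander.exists_absorber_one [Nonempty V] (hE : Expander H o i D τ g r) (hτ : 0 < τ)
    (hD : 2 * τ ≤ D) (hDr : τ + r ≤ D) (hK : Fintype.card V ≤ K * g) {c : ℝ} (hc1 : c ≤ 1)
    (hND : N < D) (hc : c * (Fintype.card V : ℝ) ^ 2 ≤ ((D - N : ℕ) : ℝ) ^ 2) (hNr : N ≤ r)
    {t : ℕ} (ht : (1 - c) ^ t * (Fintype.card V : ℝ) ^ 2 < 1)
    (hN : #U + (t + 1) * (2 * (K + 3) ^ 2) ≤ N) :
    ∃ Z, Absorber H (fun t s => o t = i s) 1 Z ∧ (∀ v ∈ Z, v ∉ U) ∧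
      Z.length ≤ t * (2 * (K + 3) ^ 2) + 1 := by
  obtain ⟨Z, W, hZ, hZU, hZlen, -, hWcard⟩ :=
    hE.exists_partial_absorber hτ hD hDr hK hc1 hND hc hNr hN
  have hW : W = ∅ := by
    have hlt : #W < 1 := by exact_mod_cast hWcard.trans_lt ht
    exact card_eq_zero.1 (by omega)
  exact ⟨Z, hZ.mono (by simp [hW]), hZU, hZlen⟩

lemma Expander.exists_absorber [Nonempty V] (hE : Expander H o i D τ g r) (hτ : 0 < τ)
    (hD : 2 * τ ≤ D) (hDr : τ + r ≤ D) (hK : Fintype.card V ≤ K * g) {c : ℝ} (hc1 : c ≤ 1)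
    (hND : N < D) (hc : c * (Fintype.card V : ℝ) ^ 2 ≤ ((D - N : ℕ) : ℝ) ^ 2) (hNr : N ≤ r)
    {t : ℕ} (ht : (1 - c) ^ t * (Fintype.card V : ℝ) ^ 2 < 1)
    {m : ℕ} (hN : #U + (m + 1) * ((t + 2) * (2 * (K + 3) ^ 2)) ≤ N) :
    ∃ Z, Absorber H (fun t s => o t = i s) m Z ∧ (∀ v ∈ Z, v ∉ U) ∧
      Z.length + 2 * (K + 3) ^ 2 ≤ (m + 1) * ((t + 2) * (2 * (K + 3) ^ 2)) := by
  have hlen : K + 2 < 2 * (K + 3) ^ 2 := by nlinarith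
  induction m with
  | zero =>
    simp only [Nat.add_mul] at hN ⊢
    obtain ⟨Z, hZ, hZU, hZlen⟩ := hE.exists_absorber_one (U := U) hτ hD hDr hK hc1 hND hc hNr ht
      (by rw [Nat.add_mul]; omega)
    exact ⟨Z, hZ.isPath, hZU, by omega⟩
  | succ m ih =>
    simp only [Nat.add_mul] at hN ih ⊢
    obtain ⟨Z, hZ, hZU, hZlen⟩ := ih (by omega)
    have hcard : #(U ∪ Z.toFinset) ≤ #U + Z.length :=
      (card_union_le _ _).trans (Nat.add_le_add_left (List.toFinset_card_le _) _)
    obtain ⟨Y, hY, hYU, hYlen⟩ := hE.exists_absorber_one (U := U ∪ Z.toFinset) hτ hD hDr hK hc1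
      hND hc hNr ht (by rw [Nat.add_mul]; omega)
    simp only [mem_union, List.mem_toFinset, not_or] at hYU
    obtain ⟨l, hl, hlU, hllen⟩ := hE.exists_link_paths hK (fun _ _ _ h => h) hY.isPath hZ.isPath
      (fun _ _ _ h => h) (fun v hv hv' => (hYU v hv).2 hv') (U := U) (by omega) (by omega)
    refine ⟨_, hY.append hZ hl, by grind, ?_⟩
    simp only [List.length_append]
    omega

end ExistsAbsorber

section Factor

variable {V : Type*}

/-- Every cycle of `e` of length less than `L` meets `T`. -/
def ShortCyclesMeet (L : ℕ) (e : Equiv.Perm V) (T : Finset V) : Prop :=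
  ∀ x a, 0 < a → a < L → (e ^ a) x = x → ∃ b : ℕ, (e ^ b) x ∈ T

lemma pow_mul_swap_apply {e : Equiv.Perm V} {t u w : V} {k : ℕ} (hk : 0 < k)
    (h : ∀ j, 0 < j → j < k →
      ((e * Equiv.swap t u) ^ j) w ≠ t ∧ ((e * Equiv.swap t u) ^ j) w ≠ u) :
    ((e * Equiv.swap t u) ^ k) w = (e ^ k) (Equiv.swap t u w) := by
  induction k, hk using Nat.le_induction with
  | base => simp
  | succ k hk ih =>
    obtain ⟨ht, hu⟩ := h k hk k.lt_succ_self
    rw [pow_succ', Equiv.Perm.mul_apply, Equiv.Perm.mul_apply,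
      Equiv.swap_apply_of_ne_of_ne ht hu, ih fun j hj hjk => h j hj (hjk.trans k.lt_succ_self),
      ← Equiv.Perm.mul_apply, ← pow_succ']

lemma exists_first_return {e : Equiv.Perm V} {t u w : V} {a : ℕ} (ha : 0 < a)
    (hw : ((e * Equiv.swap t u) ^ a) w = t ∨ ((e * Equiv.swap t u) ^ a) w = u) :
    ∃ k, 0 < k ∧ k ≤ a ∧
      (((e * Equiv.swap t u) ^ k) w = t ∨ ((e * Equiv.swap t u) ^ k) w = u) ∧
      (∀ j, 0 < j → j < k → ((e * Equiv.swap t u) ^ j) w ≠ t) ∧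
      ∀ j, 0 < j → j ≤ k → ((e * Equiv.swap t u) ^ j) w = (e ^ j) (Equiv.swap t u w) := by
  have hex : ∃ k, 0 < k ∧
      (((e * Equiv.swap t u) ^ k) w = t ∨ ((e * Equiv.swap t u) ^ k) w = u) := ⟨a, ha, hw⟩
  have hmin : ∀ j, 0 < j → j < Nat.find hex →
      ((e * Equiv.swap t u) ^ j) w ≠ t ∧ ((e * Equiv.swap t u) ^ j) w ≠ u := fun j hj hjk =>
    not_or.1 fun h => Nat.find_min hex hjk ⟨hj, h⟩
  exact ⟨Nat.find hex, (Nat.find_spec hex).1, Nat.find_min' hex ⟨ha, hw⟩, (Nat.find_spec hex).2,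
    fun j hj hjk => (hmin j hj hjk).1, fun j hj hjk =>
      pow_mul_swap_apply hj fun m hm hmj => hmin m hm (hmj.trans_le hjk)⟩

lemma exists_pow_apply_mem_of_pow_apply_eq {e : Equiv.Perm V} {x : V} {a b : ℕ} {T : Finset V}
    (ha : 0 < a) (hx : (e ^ a) x = x) (hb : (e ^ b) x ∈ T) :
    ∃ c, 0 < c ∧ c ≤ a ∧ (e ^ c) x ∈ T := by
  have hmod : (e ^ (b % a)) x = (e ^ b) x := by
    simp only [← Equiv.Perm.iterate_eq_pow] at hx ⊢
    exact Function.IsPeriodicPt.iterate_mod_apply hx b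
  rcases Nat.eq_zero_or_pos (b % a) with h0 | h0
  · rw [h0, pow_zero, Equiv.Perm.one_apply] at hmod
    exact ⟨a, ha, le_rfl, by rwa [hx, hmod]⟩
  · exact ⟨b % a, h0, (Nat.mod_lt b ha).le, by rwa [hmod]⟩

-- If the cycle contains `t`, it runs from `t` along the cycle of `e` through `u`; being short, it
-- returns to `u` before it reaches `t`, so that `u` lies on a short cycle of `e`.
lemma ShortCyclesMeet.mul_swap {L : ℕ} {e : Equiv.Perm V} {T : Finset V}
    (hs : ShortCyclesMeet L e T) {t u : V}
    (hfar : ∀ a < L, (e ^ a) u ≠ t ∧ (e ^ a) t ≠ u) (htu : t ≠ u) :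
    ShortCyclesMeet L (e * Equiv.swap t u) (T.erase t) := by
  intro x a ha haL hx
  set f := e * Equiv.swap t u with hf
  have hper : ∀ b, (f ^ a) ((f ^ b) x) = (f ^ b) x := fun b => by
    rw [← Equiv.Perm.mul_apply, ← pow_add, add_comm, pow_add, Equiv.Perm.mul_apply, hx]
  by_cases ht : ∃ b, (f ^ b) x = t
  · obtain ⟨b, hb⟩ := ht
    obtain ⟨k, hk, hka, hreturn, hne, hiter⟩ := exists_first_return ha (Or.inl (hb ▸ hper b))
    rw [Equiv.swap_apply_left] at hiter
    rw [← hf, hiter k hk le_rfl] at hreturn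
    have hku : (e ^ k) u = u := hreturn.resolve_left (hfar k (by omega)).1
    obtain ⟨c, hc⟩ := hs u k hk (by omega) hku
    obtain ⟨d, hd, hdk, hdT⟩ := exists_pow_apply_mem_of_pow_apply_eq hk hku hc
    refine ⟨d + b, ?_⟩
    rw [pow_add, Equiv.Perm.mul_apply, hb, hiter d hd hdk]
    refine mem_erase.2 ⟨?_, hdT⟩
    rcases hdk.lt_or_eq with hlt | hdk
    · exact hiter d hd hlt.le ▸ hne d hd hlt
    · rw [hdk, hku]
      exact htu.symm
  push Not at ht
  by_cases hu : ∃ b, (f ^ b) x = u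
  · obtain ⟨b, hb⟩ := hu
    obtain ⟨k, hk, hka, hreturn, -, hiter⟩ := exists_first_return ha (Or.inr (hb ▸ hper b))
    rcases hreturn with hkt | hku
    · exact absurd (by rw [pow_add, Equiv.Perm.mul_apply, hb, hkt]) (ht (k + b))
    · rw [hiter k hk le_rfl, Equiv.swap_apply_right] at hku
      exact absurd hku (hfar k (by omega)).2
  push Not at hu
  have hiter : ∀ k, (f ^ k) x = (e ^ k) x := fun k => by
    rcases Nat.eq_zero_or_pos k with rfl | hk
    · rfl
    · rw [hf, pow_mul_swap_apply hk fun j _ _ => ⟨ht j, hu j⟩,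
        Equiv.swap_apply_of_ne_of_ne (by exact ht 0) (by exact hu 0)]
  obtain ⟨b, hb⟩ := hs x a ha haL (hiter a ▸ hx)
  exact ⟨b, mem_erase.2 ⟨ht b, hiter b ▸ hb⟩⟩

/-- A permutation which agrees with `e₀` on the set `P` of protected vertices, and whose arcs from
the other vertices match labels and lie in `H`, except for those leaving `T` that may not be in `H`.
-/
structure PartialFactor (H : V → V → Prop) (o i : V → Bool) (e₀ : Equiv.Perm V) (P : Finset V)
    (L : ℕ) (e : Equiv.Perm V) (T : Finset V) : Prop where
  disjoint : ∀ t ∈ T, t ∉ P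
  agree : ∀ v ∈ P, e v = e₀ v
  label : ∀ v ∉ P, o v = i (e v)
  arc : ∀ v ∉ P, v ∉ T → H v (e v)
  short : ShortCyclesMeet L e T

variable {H : V → V → Prop} {o i : V → Bool} {e₀ : Equiv.Perm V} {P : Finset V} {L : ℕ}
  {e : Equiv.Perm V} {T : Finset V}

lemma PartialFactor.erase (h : PartialFactor H o i e₀ P L e T) {t : V} (ht : H t (e t))
    (hs : ShortCyclesMeet L e (T.erase t)) : PartialFactor H o i e₀ P L e (T.erase t) where
  disjoint v hv := h.disjoint v (mem_of_mem_erase hv)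
  agree := h.agree
  label := h.label
  arc v hv hvT := by
    rcases eq_or_ne v t with rfl | hvt
    · exact ht
    · exact h.arc v hv fun hv' => hvT (mem_erase.2 ⟨hvt, hv'⟩)
  short := hs

lemma PartialFactor.mul_swap (hH : ∀ x y, H x y → o x = i y) (h : PartialFactor H o i e₀ P L e T)
    {t u : V} (ht : t ∈ T) (hu : u ∉ P) (harc : H t (e u))
    (hs : ShortCyclesMeet L (e * Equiv.swap t u) (T.erase t)) :
    PartialFactor H o i e₀ P L (e * Equiv.swap t u) (insert u (T.erase t)) where
  disjoint v hv := by
    rcases mem_insert.1 hv with rfl | hv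
    · exact hu
    · exact h.disjoint v (mem_of_mem_erase hv)
  agree v hv := by
    rw [Equiv.Perm.mul_apply, Equiv.swap_apply_of_ne_of_ne, h.agree v hv]
    · exact fun hvt => h.disjoint t ht (hvt ▸ hv)
    · exact fun hvu => hu (hvu ▸ hv)
  label v hv := by
    rw [Equiv.Perm.mul_apply, Equiv.swap_apply_def]
    split_ifs with hvt hvu
    · rw [hvt, hH _ _ harc]
    · rw [hvu, h.label u hu, ← hH _ _ harc, h.label t (h.disjoint t ht)]
    · exact h.label v hv
  arc v hv hvT := by
    rw [mem_insert, mem_erase, not_or, not_and] at hvT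
    rw [Equiv.Perm.mul_apply, Equiv.swap_apply_def]
    split_ifs with hvt hvu
    · exact hvt ▸ harc
    · exact absurd hvu hvT.1
    · exact h.arc v hv (hvT.2 hvt)
  short x a ha haL hx := by
    obtain ⟨b, hb⟩ := hs x a ha haL hx
    exact ⟨b, mem_insert_of_mem hb⟩

lemma exists_mem_notMem_forall_pow_apply_ne (e : Equiv.Perm V) (t : V) {S W : Finset V}
    (h : #W + 2 * L < #S) :
    ∃ u ∈ S, u ∉ W ∧ ∀ a < L, (e ^ a) u ≠ t ∧ (e ^ a) t ≠ u := by
  set F := (range L).image fun a => (e ^ a) t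
  set B := (range L).image fun a => (e ^ a).symm t
  have hFL : #F ≤ L := card_image_le.trans_eq (card_range L)
  have hBL : #B ≤ L := card_image_le.trans_eq (card_range L)
  have hcard := card_union_le W (F ∪ B)
  have hcard' := card_union_le F B
  obtain ⟨u, hu, hunion⟩ := exists_mem_notMem_of_card_lt (S := S) (U := W ∪ (F ∪ B)) (by omega)
  simp only [mem_union, not_or] at hunion
  obtain ⟨huW, huF, huB⟩ := hunion
  refine ⟨u, hu, huW, fun a ha => ⟨fun hau => huB ?_, fun hat => huF ?_⟩⟩
  · exact mem_image.2 ⟨a, mem_range.2 ha, by rw [← hau, Equiv.symm_apply_apply]⟩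
  · exact mem_image.2 ⟨a, mem_range.2 ha, hat⟩

lemma card_le_card_image_sdiff_add (e : Equiv.Perm V) (B P : Finset V) :
    #B ≤ #((B \ P).image e) + #P := by
  rw [card_image_of_injective _ e.injective, add_comm]
  exact tsub_le_iff_left.1 (le_card_sdiff P B)

lemma getElem_mem_dropLast_iff {P : List V} (hnd : P.Nodup) {k : ℕ} (hk : k < P.length) :
    P[k] ∈ P.dropLast ↔ k + 1 < P.length := by
  rw [List.mem_iff_getElem]
  constructor
  · rintro ⟨m, hm, hmk⟩
    rw [List.getElem_dropLast, hnd.getElem_inj_iff] at hmk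
    rw [List.length_dropLast] at hm
    omega
  · exact fun h => ⟨k, by rw [List.length_dropLast]; omega, List.getElem_dropLast _⟩

lemma pow_apply_getElem {P : List V} (hP : P.IsChain fun u v => e u = v) {k b : ℕ}
    (h : k + b < P.length) : (e ^ b) P[k] = P[k + b] := by
  induction b with
  | zero => simp
  | succ b ih =>
    rw [pow_succ', Equiv.Perm.mul_apply, ih (by omega)]
    exact List.isChain_iff_getElem.1 hP (k + b) h

lemma exists_pow_apply_notMem_dropLast {P : List V} (hnd : P.Nodup)
    (hP : P.IsChain fun u v => e u = v) (x : V) : ∃ b : ℕ, (e ^ b) x ∉ P.dropLast := by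
  by_cases hx : x ∈ P
  · obtain ⟨k, hk, rfl⟩ := List.mem_iff_getElem.1 hx
    refine ⟨P.length - 1 - k, ?_⟩
    rw [pow_apply_getElem hP (by omega), getElem_mem_dropLast_iff hnd]
    omega
  · exact ⟨0, fun h => hx (List.mem_of_mem_dropLast h)⟩

variable [Fintype V] {D τ g r : ℕ}

/-- The vertices `t` which can be repaired in `k` swaps when their arc should enter `s`. -/
noncomputable def repairSet (H : V → V → Prop) (r : ℕ) (P : Finset V) (e : Equiv.Perm V)
    (s : V) : ℕ → Finset V
  | 0 => inNbrs H s
  | k + 1 => robustIn H r ((repairSet H r P e s k \ P).image e)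

lemma le_card_filter_of_mem_repairSet {s t : V} {k : ℕ} (ht : t ∈ repairSet H r P e s (k + 1)) :
    r ≤ #((repairSet H r P e s k \ P).filter fun u => H t (e u)) := by
  rw [repairSet, mem_robustIn] at ht
  refine ht.trans ((card_le_card fun y hy => ?_).trans (card_image_le (f := e)))
  rw [mem_inter, mem_outNbrs, mem_image] at hy
  obtain ⟨hty, u, hu, rfl⟩ := hy
  exact mem_image_of_mem e (mem_filter.2 ⟨hu, hty⟩)

-- In the induction, `f` differs from the permutation `e` defining the repair sets only on the set
-- `W` of the vertices whose arcs have already been swapped.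
lemma PartialFactor.repair (hH : ∀ x y, H x y → o x = i y) {s t : V} {k : ℕ}
    {f : Equiv.Perm V} {W : Finset V} (h : PartialFactor H o i e₀ P L f T) (htT : t ∈ T)
    (ht : t ∈ repairSet H r P e s k) (hW : ∀ v ∉ W, f v = e v) (htW : t ∈ W) (hts : f t = s)
    (hr : #W + k + 2 * L + 1 ≤ r) (hk : k = 0 → ShortCyclesMeet L f (T.erase t)) :
    ∃ f' T', PartialFactor H o i e₀ P L f' T' ∧ #T' < #T := by
  induction k generalizing f T W t with
  | zero =>
    rw [repairSet, mem_inNbrs, ← hts] at ht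
    exact ⟨f, T.erase t, h.erase ht (hk rfl), card_erase_lt_of_mem htT⟩
  | succ k ih =>
    have hcard := le_card_filter_of_mem_repairSet ht
    obtain ⟨u, hu, huW, hfar⟩ := exists_mem_notMem_forall_pow_apply_ne (L := L) f t (W := W)
      (S := (repairSet H r P e s k \ P).filter fun u => H t (e u)) (by omega)
    rw [mem_filter, mem_sdiff] at hu
    obtain ⟨⟨hu, huP⟩, harc⟩ := hu
    have htu : t ≠ u := fun htu => huW (htu ▸ htW)
    have hs := h.short.mul_swap hfar htu
    have hswap := h.mul_swap hH htT huP (hW u huW ▸ harc) hs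
    have hTpos := card_pos.2 ⟨t, htT⟩
    by_cases huT : u ∈ T
    · refine ⟨_, _, hswap, ?_⟩
      rw [insert_eq_self.2 (mem_erase.2 ⟨htu.symm, huT⟩)]
      exact card_erase_lt_of_mem htT
    have huT' : u ∉ T.erase t := fun h' => huT (mem_of_mem_erase h')
    have hTcard : #(insert u (T.erase t)) = #T := by
      rw [card_insert_of_notMem huT', card_erase_of_mem htT, Nat.sub_add_cancel hTpos]
    have hWcard := card_insert_le u W
    obtain ⟨f', T', hf', hT'⟩ := ih hswap (mem_insert_self u _) hu (W := insert u W) (by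
        intro v hv
        rw [mem_insert, not_or] at hv
        rw [Equiv.Perm.mul_apply, Equiv.swap_apply_of_ne_of_ne _ hv.1, hW v hv.2]
        exact fun hvt => hv.2 (hvt ▸ htW))
      (mem_insert_self u W) (by simp [hts]) (by omega) fun _ => by rwa [erase_insert huT']
    exact ⟨f', T', hf', hTcard ▸ hT'⟩

lemma image_sdiff_subset_labelClass (he : ∀ v ∉ P, o v = i (e v)) {B : Finset V} {j : Bool}
    (hB : B ⊆ labelClass o j) : (B \ P).image e ⊆ labelClass i j := by
  intro y hy
  obtain ⟨v, hv, rfl⟩ := mem_image.1 hy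
  rw [mem_sdiff] at hv
  rw [mem_labelClass, ← he v hv.2]
  exact mem_labelClass.1 (hB hv.1)

namespace LabelledExpander

lemma card_repairSet (hE : LabelledExpander H o i D τ g r) (hr : 0 < r) (hP : 2 * #P ≤ g)
    (hD : 2 * τ + #P ≤ D) (he : ∀ v ∉ P, o v = i (e v)) (s : V) (k : ℕ) :
    repairSet H r P e s k ⊆ labelClass o (i s) ∧ τ + #P ≤ #(repairSet H r P e s k) ∧
      (#(labelClass o (i s)) ≤ #(repairSet H r P e s k) + τ ∨
        k * g ≤ 2 * #(repairSet H r P e s k)) := by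
  have hin := hE.indeg s
  have hlabel : D ≤ #(labelClass o (i s)) := hin.trans (card_le_card (hE.inNbrs_subset s))
  induction k with
  | zero => exact ⟨hE.inNbrs_subset s, by rw [repairSet]; omega, by simp⟩
  | succ k ih =>
    obtain ⟨hsub, hcard, hgrow⟩ := ih
    have himage := image_sdiff_subset_labelClass he hsub
    have hloss := card_le_card_image_sdiff_add e (repairSet H r P e s k) P
    have hexpand := hE.expand_in _ _ himage (by omega)
    rw [repairSet, Nat.add_mul]
    exact ⟨hE.robustIn_subset hr himage, by omega, by omega⟩

lemma mem_repairSet (hE : LabelledExpander H o i D τ g r) (hr : 0 < r) {K : ℕ}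
    (hK : Fintype.card V ≤ K * g) (hP : 2 * #P ≤ g) (hD : 2 * τ + #P ≤ D)
    (hDr : r + τ + g + #P ≤ D) (he : ∀ v ∉ P, o v = i (e v)) {s t : V} (hts : o t = i s) :
    t ∈ repairSet H r P e s (2 * K + 1) := by
  obtain ⟨hsub, -, hgrow⟩ := hE.card_repairSet hr hP hD he s (2 * K)
  have hlarge : #(labelClass o (i s)) ≤ #(repairSet H r P e s (2 * K)) + τ := by
    have hV := card_le_univ (labelClass o (i s))
    rw [Nat.mul_assoc] at hgrow
    omega
  have hloss := card_le_card_image_sdiff_add e (repairSet H r P e s (2 * K)) P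
  have hout := hE.outdeg t
  have hbal := hE.balanced' (i s)
  have hunion := card_le_card
    (union_subset (hts ▸ hE.outNbrs_subset t) (image_sdiff_subset_labelClass he hsub))
  have hadd := card_union_add_card_inter (outNbrs H t) ((repairSet H r P e s (2 * K) \ P).image e)
  rw [repairSet, mem_robustIn]
  omega

lemma exists_partialFactor_empty (hE : LabelledExpander H o i D τ g r) {K : ℕ}
    (hK : Fintype.card V ≤ K * g) (hP : 2 * #P ≤ g) (hD : 2 * τ + #P ≤ D)
    (hDr : r + τ + g + #P ≤ D) (hL : 2 * K + 2 * L + 3 ≤ r)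
    (h : PartialFactor H o i e₀ P L e T) : ∃ e', PartialFactor H o i e₀ P L e' ∅ := by
  induction hm : #T using Nat.strong_induction_on generalizing e T with
  | _ m ih =>
    rcases T.eq_empty_or_nonempty with rfl | ⟨t, ht⟩
    · exact ⟨e, h⟩
    have hrepair := hE.mem_repairSet (by omega) hK hP hD hDr h.label (h.label t (h.disjoint t ht))
    obtain ⟨f, T', hf, hT'⟩ := h.repair hE.label ht hrepair (W := {t}) (fun _ _ => rfl)
      (mem_singleton_self t) rfl (by rw [card_singleton]; omega) (by omega)
    exact ih _ (hm ▸ hT') hf rfl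

end LabelledExpander

lemma exists_perm_of_card_eq (h : ∀ j, #(labelClass o j) = #(labelClass i j)) :
    ∃ e : Equiv.Perm V, ∀ v, o v = i (e v) := by
  have hfiber : ∀ j, Nonempty ({v // o v = j} ≃ {v // i v = j}) := fun j =>
    ⟨Fintype.equivOfCardEq (by rw [Fintype.card_subtype, Fintype.card_subtype]; exact h j)⟩
  exact ⟨Equiv.ofFiberEquiv fun j => (hfiber j).some,
    fun v => (Equiv.ofFiberEquiv_map (fun j => (hfiber j).some) v).symm⟩

lemma exists_perm_of_path (h : ∀ j, #(labelClass o j) = #(labelClass i j)) {P : List V}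
    (hnd : P.Nodup) (hP : P.IsChain fun u v => o u = i v) :
    ∃ e : Equiv.Perm V, (∀ v, o v = i (e v)) ∧ P.IsChain fun u v => e u = v := by
  induction P with
  | nil =>
    obtain ⟨e, he⟩ := exists_perm_of_card_eq h
    exact ⟨e, he, by simp⟩
  | cons a P ih =>
    obtain ⟨haP, hnd⟩ := List.nodup_cons.1 hnd
    obtain ⟨e, he, hchain⟩ := ih hnd hP.tail
    rcases P with _ | ⟨b, P⟩
    · exact ⟨e, he, by simp⟩
    have hab : o a = i b := (List.isChain_cons_cons.1 hP).1
    refine ⟨e * Equiv.swap a (e.symm b), fun v => ?_, List.isChain_cons_cons.2 ⟨by simp, ?_⟩⟩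
    · rw [Equiv.Perm.mul_apply, Equiv.swap_apply_def]
      split_ifs with hva hvb
      · rw [hva, hab, Equiv.apply_symm_apply]
      · rw [hvb, ← he, hab, he, Equiv.apply_symm_apply]
      · exact he v
    · rw [List.isChain_iff_getElem] at hchain ⊢
      intro k hk
      rw [Equiv.Perm.mul_apply, Equiv.swap_apply_of_ne_of_ne, hchain k hk]
      · exact fun hka => haP (hka ▸ List.getElem_mem _)
      · intro hkb
        have hkb' : (b :: P)[k + 1] = (b :: P)[0] := by
          rw [← hchain k hk, hkb, Equiv.apply_symm_apply, List.getElem_cons_zero]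
        exact absurd ((List.Nodup.getElem_inj_iff hnd).1 hkb') k.succ_ne_zero

lemma LabelledExpander.exists_factor (hE : LabelledExpander H o i D τ g r) {K : ℕ}
    (hK : Fintype.card V ≤ K * g) {o' : V → Bool} {P : List V} (hnd : P.Nodup)
    (ho : ∀ v ∉ P.dropLast, o' v = o v) (hbal : ∀ j, #(labelClass o' j) = #(labelClass i j))
    (hP : P.IsChain fun u v => o' u = i v) (hPg : 2 * P.length ≤ g) (hD : 2 * τ + P.length ≤ D)
    (hDr : r + τ + g + P.length ≤ D) (hL : 2 * K + 2 * L + 3 ≤ r) :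
    ∃ e : Equiv.Perm V, (P.IsChain fun u v => e u = v) ∧ (∀ v ∉ P.dropLast, H v (e v)) ∧
      ∀ x a, 0 < a → a < L → (e ^ a) x ≠ x := by
  obtain ⟨e₀, he₀, hchain⟩ := exists_perm_of_path hbal hnd hP
  have hcard : #P.dropLast.toFinset ≤ P.length :=
    (List.toFinset_card_le _).trans (by rw [List.length_dropLast]; omega)
  have hstart : PartialFactor H o i e₀ P.dropLast.toFinset L e₀ (univ \ P.dropLast.toFinset) :=
    { disjoint := fun t ht => (mem_sdiff.1 ht).2
      agree := fun _ _ => rfl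
      label := fun v hv => (ho v (by simpa using hv)).symm.trans (he₀ v)
      arc := fun v hv hv' => absurd (mem_sdiff.2 ⟨mem_univ v, hv⟩) hv'
      short := fun x a _ _ _ => by
        simpa using exists_pow_apply_notMem_dropLast hnd hchain x }
  obtain ⟨e, he⟩ := hE.exists_partialFactor_empty hK (by omega) (by omega) (by omega) hL hstart
  refine ⟨e, ?_, fun v hv => he.arc v (by simpa using hv) (notMem_empty v), fun x a ha haL hx => ?_⟩
  · rw [List.isChain_iff_getElem] at hchain ⊢
    intro k hk
    rw [he.agree _ (List.mem_toFinset.2 ((getElem_mem_dropLast_iff hnd (by omega)).2 hk))]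
    exact hchain k hk
  · obtain ⟨b, hb⟩ := he.short x a ha haL hx
    exact notMem_empty _ hb

end Factor

section FactorToHamiltonCycle

variable {V : Type*}

/-- The cycle of `e` through `x`, as the list starting with `x`. -/
noncomputable def orbitList (e : Equiv.Perm V) (x : V) : List V :=
  (List.range (Function.minimalPeriod e x)).map fun k => (e ^ k) x

variable {H R : V → V → Prop} {o i : V → Bool} {m L : ℕ} {X Y Z : List V} {e : Equiv.Perm V} {x : V}

lemma length_orbitList (e : Equiv.Perm V) (x : V) :
    (orbitList e x).length = Function.minimalPeriod e x := by simp [orbitList]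

lemma getElem_orbitList {k : ℕ} (hk : k < (orbitList e x).length) :
    (orbitList e x)[k] = (e ^ k) x := by simp [orbitList]

lemma pow_length_orbitList (e : Equiv.Perm V) (x : V) : (e ^ (orbitList e x).length) x = x := by
  rw [length_orbitList, ← Equiv.Perm.iterate_eq_pow]
  exact Function.iterate_minimalPeriod

lemma coe_orbitList (e : Equiv.Perm V) (x : V) :
    (orbitList e x : Cycle V) = Function.periodicOrbit e x := by
  simp only [orbitList, Function.periodicOrbit, Equiv.Perm.iterate_eq_pow]

lemma nodup_orbitList (e : Equiv.Perm V) (x : V) : (orbitList e x).Nodup := by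
  rw [← Cycle.nodup_coe_iff, coe_orbitList]
  exact Function.nodup_periodicOrbit

lemma isChain_orbitList (e : Equiv.Perm V) (x : V) :
    (orbitList e x).IsChain fun u v => e u = v := by
  rw [List.isChain_iff_getElem]
  intro k hk
  rw [getElem_orbitList, getElem_orbitList, pow_succ', Equiv.Perm.mul_apply]

lemma head_orbitList (h : orbitList e x ≠ []) : (orbitList e x).head h = x := by
  rw [List.head_eq_getElem, getElem_orbitList, pow_zero, Equiv.Perm.one_apply]

lemma apply_getLast_orbitList (h : orbitList e x ≠ []) : e ((orbitList e x).getLast h) = x := by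
  rw [List.getLast_eq_getElem, getElem_orbitList, ← Equiv.Perm.mul_apply, ← pow_succ',
    Nat.sub_add_cancel (List.length_pos_of_ne_nil h), pow_length_orbitList]

section Finite

variable [Finite V]

lemma orbitList_ne_nil (e : Equiv.Perm V) (x : V) : orbitList e x ≠ [] := by
  rw [← List.length_pos_iff_ne_nil, length_orbitList]
  exact Function.minimalPeriod_pos_of_mem_periodicPts
    (Function.Injective.mem_periodicPts e.injective x)

lemma mem_orbitList {v : V} : v ∈ orbitList e x ↔ e.SameCycle x v := by
  rw [← Cycle.mem_coe_iff, coe_orbitList, Function.mem_periodicOrbit_iff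
    (Function.Injective.mem_periodicPts e.injective x)]
  simp only [Equiv.Perm.iterate_eq_pow]
  exact ⟨fun ⟨k, hk⟩ => ⟨k, by simpa using hk⟩, fun h => h.exists_nat_pow_eq⟩

lemma apply_mem_orbitList {v : V} : e v ∈ orbitList e x ↔ v ∈ orbitList e x := by
  rw [mem_orbitList, mem_orbitList, Equiv.Perm.sameCycle_apply_right]

lemma isPath_orbitList (h : ∀ v ∈ orbitList e x, H v (e v)) :
    IsPath H (orbitList e x) where
  chain := by
    refine (isChain_orbitList e x).imp_of_mem_imp fun u _ hu _ => ?_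
    rintro rfl
    exact h u hu
  nodup := nodup_orbitList e x
  ne_nil := orbitList_ne_nil e x

lemma isPrefix_orbitList {P : List V} (hP : P.IsChain fun u v => e u = v) (hnd : P.Nodup)
    (hne : P ≠ []) : P <+: orbitList e (P.head hne) := by
  have := List.length_pos_of_ne_nil hne
  have hiter : ∀ k, ∀ hk : k < P.length, (e ^ k) (P.head hne) = P[k] := fun k hk => by
    simpa only [List.head_eq_getElem, Nat.zero_add] using
      pow_apply_getElem hP (k := 0) (b := k) (by omega)
  have hle : P.length ≤ (orbitList e (P.head hne)).length := by
    by_contra! hlt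
    have hclosed := hiter _ hlt
    rw [pow_length_orbitList] at hclosed
    have hzero := hnd.getElem_inj_iff.1 ((List.head_eq_getElem hne).symm.trans hclosed)
    exact orbitList_ne_nil e _ (List.length_eq_zero_iff.1 hzero.symm)
  exact List.prefix_iff_getElem.2 ⟨hle, fun k hk => by rw [getElem_orbitList, hiter]⟩

lemma Absorber.exists_insert_orbit (hH : ∀ x y, H x y → o x = i y)
    (hZ : Absorber H (fun t s => o t = i s) (m + 1) Z) (hd : (orbitList e x).Disjoint Z)
    (h : ∀ v ∈ orbitList e x, H v (e v)) :
    ∃ Z', IsInsertion Z (orbitList e x) Z' ∧ Absorber H (fun t s => o t = i s) m Z' := by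
  have hne := orbitList_ne_nil e x
  refine hZ.2 _ (isPath_orbitList h) hd x ?_ ((orbitList e x).getLast hne) ?_ ?_
  · rw [List.head?_eq_some_head hne, head_orbitList]
    exact Option.mem_some_self x
  · exact List.getLast?_eq_getLast_of_ne_nil hne
  · simpa only [apply_getLast_orbitList] using hH _ _ (h _ (List.getLast_mem hne))

end Finite

variable [Fintype V]

lemma exists_spanning_path_of_absorber (hH : ∀ x y, H x y → o x = i y) (hR : ∀ x y, H x y → R x y)
    (hlong : ∀ x a, 0 < a → a < L → (e ^ a) x ≠ x)
    (hZ : Absorber H (fun t s => o t = i s) m Z) (hP : IsPath R (X ++ Z ++ Y))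
    (harc : ∀ v ∉ X ++ Z ++ Y, H v (e v)) (hclosed : ∀ v, e v ∈ X ++ Z ++ Y ↔ v ∈ X ++ Z ++ Y)
    (hcard : Fintype.card V ≤ (X ++ Z ++ Y).length + m * L) :
    ∃ C, IsPath R C ∧ C.head? = (X ++ Z ++ Y).head? ∧ C.getLast? = (X ++ Z ++ Y).getLast? ∧
      ∀ v, v ∈ C := by
  induction m generalizing Z with
  | zero =>
    refine ⟨_, hP, rfl, rfl, fun v => ?_⟩
    have hnd := List.toFinset_card_of_nodup hP.nodup
    have huniv : (X ++ Z ++ Y).toFinset = univ :=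
      (card_eq_iff_eq_univ _).1 ((card_le_univ _).antisymm (by omega))
    exact List.mem_toFinset.1 (huniv ▸ mem_univ v)
  | succ m ih =>
    by_cases hall : ∀ v, v ∈ X ++ Z ++ Y
    · exact ⟨_, hP, rfl, rfl, hall⟩
    push Not at hall
    obtain ⟨s, hs⟩ := hall
    have horbit : ∀ k : ℕ, (e ^ k) s ∉ X ++ Z ++ Y := fun k => by
      induction k with
      | zero => exact hs
      | succ k ih => rwa [pow_succ', Equiv.Perm.mul_apply, hclosed]
    have hd : (orbitList e s).Disjoint (X ++ Z ++ Y) := fun v hv => by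
      obtain ⟨k, hk, rfl⟩ := List.mem_iff_getElem.1 hv
      exact getElem_orbitList hk ▸ horbit k
    obtain ⟨Z', hins, hZ'⟩ := hZ.exists_insert_orbit hH (fun v hv hvZ => hd hv (by simp [hvZ]))
      fun v hv => harc v (hd hv)
    have hins' := hins.context X Y
    have hmem : ∀ v, v ∈ X ++ Z' ++ Y ↔ v ∈ X ++ Z ++ Y ∨ v ∈ orbitList e s := fun v => by
      rw [hins'.perm.mem_iff, List.mem_append]
    have hL : L ≤ (orbitList e s).length := not_lt.1 fun hlt =>
      hlong s _ (List.length_pos_of_ne_nil (orbitList_ne_nil e s)) hlt (pow_length_orbitList e s)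
    have hlen := hins'.perm.length_eq.trans List.length_append
    have hR' : IsPath R Z' := ⟨hZ'.isPath.chain.imp hR, hZ'.isPath.nodup, hZ'.isPath.ne_nil⟩
    obtain ⟨C, hC, hhead, hlast, hC'⟩ := ih hZ'
      (hins.isPath hP hZ.isPath.ne_nil hR' (nodup_orbitList e s) hd)
      (fun v hv => harc v fun hv' => hv ((hmem v).2 (Or.inl hv')))
      (fun v => by rw [hmem, hmem, hclosed, apply_mem_orbitList])
      (by rw [Nat.add_mul] at hcard; omega)
    exact ⟨C, hC, hhead.trans hins'.head, hlast.trans hins'.last, hC'⟩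

lemma IsPath.exists_isHamCycle {C : List V} (hC : IsPath R C) (hall : ∀ v, v ∈ C)
    (hclose : R (C.getLast hC.ne_nil) (C.head hC.ne_nil)) : ∃ f, IsHamCycle R f := by
  have hlen : C.length = Fintype.card V := by
    rw [← List.toFinset_card_of_nodup hC.nodup, ← card_univ]
    exact congrArg card (eq_univ_of_forall fun v => List.mem_toFinset.2 (hall v))
  have hpos := List.length_pos_of_ne_nil hC.ne_nil
  have : NeZero (Fintype.card V) := ⟨by omega⟩
  have hlt : ∀ k : ZMod (Fintype.card V), k.val < C.length := fun k =>
    (ZMod.val_lt k).trans_eq hlen.symm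
  refine ⟨fun k => C[k.val]'(hlt k), ?_, fun k => ?_⟩
  · rw [Fintype.bijective_iff_injective_and_card]
    exact ⟨fun k m h => ZMod.val_injective _ (hC.nodup.getElem_inj_iff.1 h), by rw [ZMod.card]⟩
  · have hk := hlt k
    have hval : (k + 1).val = (k.val + 1) % Fintype.card V := by
      rw [ZMod.val_add, ZMod.val_one_eq_one_mod, Nat.add_mod_mod]
    by_cases h : k.val + 1 < Fintype.card V
    · rw [Nat.mod_eq_of_lt h] at hval
      simp only [hval]
      exact List.isChain_iff_getElem.1 hC.chain _ (by omega)
    · rw [show k.val + 1 = Fintype.card V by omega, Nat.mod_self] at hval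
      simp only [hval, show k.val = C.length - 1 by omega]
      rwa [List.getLast_eq_getElem, List.head_eq_getElem] at hclose

lemma Absorber.exists_isHamCycle (hH : ∀ x y, H x y → o x = i y) (hR : ∀ x y, H x y → R x y)
    (hlong : ∀ x a, 0 < a → a < L → (e ^ a) x ≠ x)
    (hZ : Absorber H (fun t s => o t = i s) m Z) (hP : IsPath R (X ++ Z))
    (heP : (X ++ Z).IsChain fun u v => e u = v) (harc : ∀ v ∉ (X ++ Z).dropLast, H v (e v))
    (hm : Fintype.card V ≤ m * L) : ∃ f, IsHamCycle R f := by
  have hRe : ∀ v, R v (e v) := fun v => by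
    by_cases hv : v ∈ (X ++ Z).dropLast
    · obtain ⟨k, hk, rfl⟩ := List.mem_iff_getElem.1 hv
      rw [List.length_dropLast] at hk
      rw [List.getElem_dropLast, List.isChain_iff_getElem.1 heP k (by omega)]
      exact List.isChain_iff_getElem.1 hP.chain k (by omega)
    · exact hR _ _ (harc v hv)
  have hclosed := fun v => apply_mem_orbitList (e := e) (x := (X ++ Z).head hP.ne_nil) (v := v)
  have hC := isPath_orbitList (e := e) (x := (X ++ Z).head hP.ne_nil) fun v _ => hRe v
  have hlast := (apply_getLast_orbitList hC.ne_nil).trans (head_orbitList hC.ne_nil).symm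
  obtain ⟨Y, hY⟩ := isPrefix_orbitList heP hP.nodup hP.ne_nil
  generalize orbitList e ((X ++ Z).head hP.ne_nil) = C at hclosed hC hlast hY
  subst hY
  obtain ⟨C, hpath, hhead, hlast', hall⟩ := exists_spanning_path_of_absorber hH hR hlong hZ hC
    (fun v hv => harc v fun hv' => hv (List.mem_append_left Y (List.mem_of_mem_dropLast hv')))
    hclosed
    (hm.trans (Nat.le_add_left _ _))
  refine hpath.exists_isHamCycle hall ?_
  rw [List.head?_eq_some_head hpath.ne_nil, List.head?_eq_some_head hC.ne_nil] at hhead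
  rw [List.getLast?_eq_getLast_of_ne_nil hpath.ne_nil,
    List.getLast?_eq_getLast_of_ne_nil hC.ne_nil] at hlast'
  rw [Option.some.inj hhead, Option.some.inj hlast', ← hlast]
  exact hRe _

end FactorToHamiltonCycle

section ExpanderHamilton

variable {V : Type*} {G : V → V → Prop} {M : List (V × V)} {e : V × V}

lemma length_endpoints (M : List (V × V)) : (endpoints M).length = 2 * M.length := by
  induction M with
  | nil => rfl
  | cons e M ih =>
    simp only [endpoints_cons, List.length_cons, ih]
    omega

lemma fst_mem_endpoints (he : e ∈ M) : e.1 ∈ endpoints M :=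
  List.mem_flatMap.2 ⟨e, he, List.mem_cons_self⟩

lemma snd_mem_endpoints (he : e ∈ M) : e.2 ∈ endpoints M :=
  List.mem_flatMap.2 ⟨e, he, List.mem_cons_of_mem _ List.mem_cons_self⟩

lemma IsMatching.snd_ne_fst (hM : IsMatching G M) {e' : V × V} (he : e ∈ M) (he' : e' ∈ M) :
    e.2 ≠ e'.1 := by
  obtain ⟨-, hnd⟩ := hM
  induction M with
  | nil => exact absurd he List.not_mem_nil
  | cons a M ih =>
    simp only [endpoints_cons, List.nodup_cons, List.mem_cons, not_or] at hnd he he'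
    obtain ⟨⟨hne, ha₁⟩, ha₂, hnd⟩ := hnd
    rcases he with rfl | he <;> rcases he' with rfl | he'
    · exact Ne.symm hne
    · exact fun h => ha₂ (h ▸ fst_mem_endpoints he')
    · exact fun h => ha₁ (h ▸ snd_mem_endpoints he)
    · exact ih he he' hnd

variable [Fintype V] {H : V → V → Prop} {o o' i : V → Bool} {D τ g r : ℕ}

/-- A matching `M` whose tails, when given the outlabels `o'` instead of `o`, make the classes of
the two labellings equal in size, and whose edges match these new labels. -/
structure BalancingMatching (G : V → V → Prop) (o i : V → Bool) (M : List (V × V))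
    (o' : V → Bool) : Prop where
  isMatching : IsMatching (fun x y => G x y ∧ o' x = i y) M
  agree : ∀ v ∉ M.map Prod.fst, o' v = o v
  balanced : ∀ j, #(labelClass o' j) = #(labelClass i j)

lemma balancingMatching_nil (G : V → V → Prop) (o : V → Bool) : BalancingMatching G o o [] o :=
  ⟨⟨fun _ he => absurd he List.not_mem_nil, List.nodup_nil⟩, fun _ _ => rfl, fun _ => rfl⟩

lemma Expander.exists_isHamCycle [Nonempty V] (hE : Expander H o i D τ g r)
    (hG : ∀ x y, H x y → G x y) (hτ : 0 < τ) (hM : BalancingMatching G o i M o')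
    {K m L N t : ℕ} {c : ℝ} (hK : Fintype.card V ≤ K * g) (hm : Fintype.card V ≤ m * L)
    (hc1 : c ≤ 1) (hc : c * (Fintype.card V : ℝ) ^ 2 ≤ ((D - N : ℕ) : ℝ) ^ 2)
    (ht : (1 - c) ^ t * (Fintype.card V : ℝ) ^ 2 < 1)
    (hN : (M.length + 1) * (K + 5) + (m + 1) * ((t + 2) * (2 * (K + 3) ^ 2)) ≤ N)
    (hNg : 2 * N ≤ g) (hNr : N ≤ r) (hDr : r + 2 * τ + g + N < D) (hL : 2 * K + 2 * L + 3 ≤ r) :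
    ∃ f, IsHamCycle G f := by
  set U := (endpoints M).toFinset
  have hU : #U ≤ 2 * M.length := (List.toFinset_card_le _).trans_eq (length_endpoints M)
  have hMK : (M.length + 1) * (K + 5) = (M.length + 1) * (K + 3) + 2 * M.length + 2 := by ring
  have hMK' : (M.length + 1) * (K + 3) = M.length * (K + 3) + (K + 3) := by ring
  obtain ⟨Z, hZ, hZU, hZlen⟩ := hE.exists_absorber hτ (by omega) (by omega) hK hc1
    (by omega : N < D) hc hNr (U := U) ht (m := m) (by omega)
  have htail : ∀ v ∉ M.map Prod.fst, ∀ w, H v w → G v w ∧ o' v = i w := fun v hv w hvw =>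
    ⟨hG v w hvw, (hM.agree v hv).trans (hE.label v w hvw)⟩
  have hUtail : ∀ v ∉ U, v ∉ M.map Prod.fst := fun v hv hvM => by
    obtain ⟨e, he, rfl⟩ := List.mem_map.1 hvM
    exact hv (List.mem_toFinset.2 (fst_mem_endpoints he))
  have hZpath : IsPath (fun x y => G x y ∧ o' x = i y) Z :=
    ⟨hZ.isPath.chain.imp_of_mem_imp fun x y hx _ hxy => htail x (hUtail x (hZU x hx)) y hxy,
      hZ.isPath.nodup, hZ.isPath.ne_nil⟩
  have hheads : ∀ e ∈ M, e.2 ∉ M.map Prod.fst := fun e he heM => by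
    obtain ⟨e', he', heq⟩ := List.mem_map.1 heM
    exact hM.isMatching.snd_ne_fst he he' heq.symm
  obtain ⟨X, hX, -, hXM, hXlen⟩ := hE.exists_path_through hK
    (fun x hx => htail x (hUtail x hx)) hZpath hZU hM.isMatching
    (fun v hv => List.mem_toFinset.2 hv) (fun e he => htail e.2 (hheads e he))
    (by omega) (by omega)
  have hdrop : ∀ v ∉ (X ++ Z).dropLast, v ∉ M.map Prod.fst := fun v hv hvM => by
    obtain ⟨e, he, rfl⟩ := List.mem_map.1 hvM
    rw [List.dropLast_append_of_ne_nil hZpath.ne_nil] at hv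
    exact hv (List.mem_append_left _ (hXM e he))
  have hlen : (X ++ Z).length ≤ N := by
    rw [List.length_append]
    omega
  obtain ⟨e, heP, harc, hlong⟩ := hE.exists_factor (L := L) hK hX.nodup
    (fun v hv => hM.agree v (hdrop v hv)) hM.balanced (hX.chain.imp fun _ _ h => h.2)
    (by omega) (by omega) (by omega) hL
  exact hZ.exists_isHamCycle hE.label hG hlong
    ⟨hX.chain.imp fun _ _ h => h.1, hX.nodup, hX.ne_nil⟩ heP harc hm

end ExpanderHamilton

section EdgeCounts

variable {V : Type*}

/-- The number of edges of `H` from `S` to `T`. -/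
noncomputable def numEdges (H : V → V → Prop) (S T : Finset V) : ℕ := #(Rel.interedges H S T)

variable {H G : V → V → Prop} {S S' T T' : Finset V}

lemma numEdges_flip (H : V → V → Prop) (S T : Finset V) :
    numEdges (flip H) S T = numEdges H T S := by
  refine card_bij (fun e _ => e.swap) (fun e he => ?_) (fun _ _ _ _ h => Prod.swap_injective h)
    fun e he => ⟨e.swap, ?_, e.swap_swap⟩
  all_goals
    rw [Rel.mem_interedges_iff] at he ⊢
    exact ⟨he.2.1, he.1, he.2.2⟩

lemma numEdges_mono (hS : S' ⊆ S) (hT : T' ⊆ T) (h : ∀ x ∈ S', ∀ y ∈ T', G x y → H x y) :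
    numEdges G S' T' ≤ numEdges H S T :=
  card_le_card fun e he => by
    rw [Rel.mem_interedges_iff] at he ⊢
    exact ⟨hS he.1, hT he.2.1, h _ he.1 _ he.2.1 he.2.2⟩

lemma numEdges_le_mul (H : V → V → Prop) (S T : Finset V) : numEdges H S T ≤ #S * #T :=
  Rel.card_interedges_le_mul H S T

lemma numEdges_union_left (hS : Disjoint S S') (T : Finset V) :
    numEdges H (S ∪ S') T = numEdges H S T + numEdges H S' T := by
  rw [numEdges, numEdges, numEdges, ← card_union_of_disjoint (Rel.interedges_disjoint_left H hS T)]
  congr 1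
  ext e
  simp only [Rel.mem_interedges_iff, mem_union]
  tauto

lemma numEdges_union_right (hT : Disjoint T T') (S : Finset V) :
    numEdges H S (T ∪ T') = numEdges H S T + numEdges H S T' := by
  simpa only [numEdges_flip] using numEdges_union_left (H := flip H) hT S

/-- Passing to subsets does not increase the number of non-edges, written without subtraction. -/
lemma card_mul_card_add_numEdges_le (hS : S' ⊆ S) (hT : T' ⊆ T) :
    #S' * #T' + numEdges H S T ≤ #S * #T + numEdges H S' T' := by
  have hST := Rel.card_interedges_add_card_interedges_compl H S T
  have hST' := Rel.card_interedges_add_card_interedges_compl H S' T'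
  have hmono := card_le_card (Rel.interedges_mono (r := fun x y => ¬ H x y) hS hT)
  simp only [numEdges]
  omega

variable [Fintype V] {a : ℝ}

lemma numEdges_eq_sum (H : V → V → Prop) (S T : Finset V) :
    numEdges H S T = ∑ x ∈ S, #(outNbrs H x ∩ T) := by
  rw [numEdges, Rel.interedges, card_filter, sum_product]
  refine sum_congr rfl fun x _ => ?_
  rw [← card_filter]
  congr 1
  ext y
  simp [and_comm]

lemma numEdges_le_of_outdeg (h : ∀ x ∈ S, (#(outNbrs H x ∩ T) : ℝ) ≤ a) :
    (numEdges H S T : ℝ) ≤ #S * a := by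
  rw [numEdges_eq_sum, Nat.cast_sum, ← nsmul_eq_mul]
  exact sum_le_card_nsmul S _ a h

lemma numEdges_le_of_indeg (h : ∀ y ∈ T, (#(inNbrs H y ∩ S) : ℝ) ≤ a) :
    (numEdges H S T : ℝ) ≤ #T * a := by
  rw [← numEdges_flip]
  exact numEdges_le_of_outdeg h

lemma le_numEdges_univ_right (h : ∀ x, a ≤ #(outNbrs H x)) (S : Finset V) :
    #S * a ≤ numEdges H S univ := by
  rw [numEdges_eq_sum, Nat.cast_sum, ← nsmul_eq_mul]
  exact card_nsmul_le_sum S _ a fun x _ => by simpa only [inter_univ] using h x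

lemma le_numEdges_univ_left (h : ∀ x, a ≤ #(inNbrs H x)) (S : Finset V) :
    #S * a ≤ numEdges H univ S := by
  rw [← numEdges_flip]
  exact le_numEdges_univ_right h S

lemma numEdges_sdiff_robustIn_le (H : V → V → Prop) (r : ℕ) (A S : Finset V) :
    (numEdges H (A \ robustIn H r S) S : ℝ) ≤ Fintype.card V * r := by
  refine (numEdges_le_of_outdeg fun x hx => ?_).trans
    (mul_le_mul_of_nonneg_right (Nat.cast_le.2 (card_le_univ _)) r.cast_nonneg)
  rw [mem_sdiff, mem_robustIn, not_le] at hx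
  exact_mod_cast hx.2.le

lemma numEdges_sdiff_robustOut_le (H : V → V → Prop) (r : ℕ) (A S : Finset V) :
    (numEdges H S (A \ robustOut H r S) : ℝ) ≤ Fintype.card V * r := by
  rw [← numEdges_flip]
  exact numEdges_sdiff_robustIn_le (flip H) r A S

end EdgeCounts

section Dense

universe u

variable {V : Type*} [Fintype V] {H G : V → V → Prop} {o o' i : V → Bool} {δ τ μ : ℝ}

/-- The density conditions, relative to the number of vertices, that make a labelled digraph a
robust expander. -/
structure Dense (H : V → V → Prop) (o i : V → Bool) (δ τ μ : ℝ) : Prop where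
  label : ∀ x y, H x y → o x = i y
  outdeg : ∀ x, δ * Fintype.card V ≤ #(outNbrs H x)
  indeg : ∀ x, δ * Fintype.card V ≤ #(inNbrs H x)
  block : ∀ j, ∀ S ⊆ labelClass o j, ∀ T ⊆ labelClass i j, τ * Fintype.card V ≤ #S →
    τ * Fintype.card V ≤ #T → #(labelClass i j) - μ * Fintype.card V ≤ #S + #T →
      μ * (Fintype.card V : ℝ) ^ 2 ≤ numEdges H S T
  cut : ∀ S : Finset V, τ * Fintype.card V ≤ #S → #S + τ * Fintype.card V ≤ Fintype.card V →
    μ * (Fintype.card V : ℝ) ^ 2 ≤ numEdges H Sᶜ S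

variable {t r g : ℕ} {S : Finset V} {j : Bool}

lemma Dense.expand_in [Nonempty V] (h : Dense H o i δ τ μ) (hμ : 0 < μ)
    (ht : τ * Fintype.card V ≤ t) (hr : (r : ℝ) ≤ μ / 4 * Fintype.card V)
    (hg : (g : ℝ) ≤ μ / 4 * Fintype.card V)
    (hbal : #(labelClass i j) ≤ #(labelClass o j) + g) (hS : S ⊆ labelClass i j) (hSt : t ≤ #S) :
    #(labelClass o j) ≤ #(robustIn H r S) + t ∨ #S + g ≤ #(robustIn H r S) := by
  by_contra! hsmall
  set R := robustIn H r S
  have hx : (0 : ℝ) < Fintype.card V := Nat.cast_pos.2 Fintype.card_pos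
  have hcard := le_card_sdiff R (labelClass o j)
  have ht' : (t : ℝ) ≤ #(labelClass o j \ R) := Nat.cast_le.2 (by omega)
  have hslack : (#(labelClass i j) : ℝ) ≤ #(labelClass o j \ R) + #S + g + g := by
    exact_mod_cast (by omega)
  have hmany := h.block j _ sdiff_subset S hS (ht.trans ht') (ht.trans (Nat.cast_le.2 hSt))
    (by nlinarith)
  have hfew := numEdges_sdiff_robustIn_le H r (labelClass o j) S
  nlinarith [mul_le_mul_of_nonneg_left hr hx.le, mul_pos hμ (pow_pos hx 2)]

lemma Dense.expand_out [Nonempty V] (h : Dense H o i δ τ μ) (hμ : 0 < μ)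
    (ht : τ * Fintype.card V ≤ t) (hr : (r : ℝ) ≤ μ / 4 * Fintype.card V)
    (hg : (g : ℝ) ≤ μ / 4 * Fintype.card V) (hS : S ⊆ labelClass o j) (hSt : t ≤ #S) :
    #(labelClass i j) ≤ #(robustOut H r S) + t ∨ #S + g ≤ #(robustOut H r S) := by
  by_contra! hsmall
  set R := robustOut H r S
  have hx : (0 : ℝ) < Fintype.card V := Nat.cast_pos.2 Fintype.card_pos
  have hcard := le_card_sdiff R (labelClass i j)
  have ht' : (t : ℝ) ≤ #(labelClass i j \ R) := Nat.cast_le.2 (by omega)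
  have hslack : (#(labelClass i j) : ℝ) ≤ #S + #(labelClass i j \ R) + g := by
    exact_mod_cast (by omega)
  have hmany := h.block j S hS _ sdiff_subset (ht.trans (Nat.cast_le.2 hSt)) (ht.trans ht')
    (by nlinarith)
  have hfew := numEdges_sdiff_robustOut_le H r (labelClass i j) S
  nlinarith [mul_le_mul_of_nonneg_left hr hx.le, mul_pos hμ (pow_pos hx 2)]

lemma Dense.expand_cut [Nonempty V] (h : Dense H o i δ τ μ) (hμ : 0 < μ)
    (ht : τ * Fintype.card V ≤ t) (hr : (r : ℝ) ≤ μ / 4 * Fintype.card V)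
    (hg : (g : ℝ) ≤ μ / 4 * Fintype.card V) (hSt : t ≤ #S) :
    Fintype.card V ≤ #S + t ∨ #S + g ≤ #(S ∪ robustIn H r S) := by
  by_contra! hsmall
  set R := robustIn H r S
  have hx : (0 : ℝ) < Fintype.card V := Nat.cast_pos.2 Fintype.card_pos
  have hSn : (#S : ℝ) + t ≤ Fintype.card V := by exact_mod_cast hsmall.1.le
  have hmany := h.cut S (ht.trans (Nat.cast_le.2 hSt)) (by linarith)
  have hnew : (#(Sᶜ ∩ R) : ℝ) ≤ g := by
    have hdisj : Disjoint S (Sᶜ ∩ R) := disjoint_left.2 fun x hx hx' =>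
      mem_compl.1 (mem_inter.1 hx').1 hx
    have hle := card_le_card (union_subset_union_right inter_subset_right :
      S ∪ (Sᶜ ∩ R) ⊆ S ∪ R)
    rw [card_union_of_disjoint hdisj] at hle
    exact_mod_cast (by omega)
  have hsplit : numEdges H Sᶜ S = numEdges H (Sᶜ \ R) S + numEdges H (Sᶜ ∩ R) S := by
    rw [← numEdges_union_left (disjoint_sdiff_inter _ _), sdiff_union_inter]
  have hfew := numEdges_sdiff_robustIn_le H r Sᶜ S
  have hrest : (numEdges H (Sᶜ ∩ R) S : ℝ) ≤ #(Sᶜ ∩ R) * Fintype.card V :=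
    numEdges_le_of_outdeg fun x _ => Nat.cast_le.2 (card_le_univ _)
  rw [hsplit, Nat.cast_add] at hmany
  nlinarith [mul_le_mul_of_nonneg_left hr hx.le, mul_pos hμ (pow_pos hx 2),
    mul_le_mul_of_nonneg_right (hnew.trans hg) hx.le]

lemma Dense.expander [Nonempty V] (h : Dense H o i δ τ μ) (hμ : 0 < μ) {D : ℕ}
    (hD : (D : ℝ) ≤ δ * Fintype.card V) (ht : τ * Fintype.card V ≤ t)
    (hr : (r : ℝ) ≤ μ / 4 * Fintype.card V) (hg : (g : ℝ) ≤ μ / 4 * Fintype.card V)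
    (hbal : ∀ j, #(labelClass o j) ≤ #(labelClass i j) + g) : Expander H o i D t g r where
  label := h.label
  outdeg x := by exact_mod_cast hD.trans (h.outdeg x)
  indeg x := by exact_mod_cast hD.trans (h.indeg x)
  expand_in j _ := h.expand_in hμ ht hr hg <| by
    have := hbal (!j)
    have := card_labelClass_add o j
    have := card_labelClass_add i j
    omega
  expand_out _ _ := h.expand_out hμ ht hr hg
  balanced := hbal
  cut _ := h.expand_cut hμ ht hr hg

lemma BalancingMatching.card_labelClass_le {M : List (V × V)} (hM : BalancingMatching G o i M o')
    (j : Bool) : #(labelClass o j) ≤ #(labelClass i j) + M.length := by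
  have hsub : labelClass o j ⊆ labelClass o' j ∪ (M.map Prod.fst).toFinset := fun v hv => by
    simp only [mem_union, mem_labelClass, List.mem_toFinset] at hv ⊢
    exact or_iff_not_imp_right.2 fun hvM => (hM.agree v hvM).trans hv
  have htails := (M.map Prod.fst).toFinset_card_le
  rw [List.length_map] at htails
  have hunion := (card_le_card hsub).trans (card_union_le _ _)
  have hbal := hM.balanced j
  omega

lemma exists_nat_le_lt_add_one {y : ℝ} (hy : 0 ≤ y) : ∃ N : ℕ, (N : ℝ) ≤ y ∧ y < N + 1 :=
  ⟨⌊y⌋₊, Nat.floor_le hy, Nat.lt_floor_add_one y⟩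

lemma Dense.exists_isHamCycle_of_large (hH : Dense H o i δ τ μ) (hG : ∀ x y, H x y → G x y)
    (hδ1 : δ ≤ 1) (hτ : 0 < τ) (hτδ : 4 * τ ≤ δ) (hμ : 0 < μ) (hμδ : 4 * μ ≤ δ)
    {M : List (V × V)} (hM : BalancingMatching G o i M o') {K m : ℕ}
    (hK : 8 ≤ K * μ) (hm : 64 ≤ m * μ) (hδn : 16 ≤ δ * Fintype.card V)
    (hμn : 64 * (3 * K + 10) ≤ μ * Fintype.card V)
    (ht : (1 - δ ^ 2 / 4) ^ t * (Fintype.card V : ℝ) ^ 2 < 1)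
    (habs : (m + 1) * ((t + 2) * (2 * (K + 3) ^ 2)) ≤ μ * Fintype.card V / 64)
    (hMl : M.length * (K + 5) ≤ μ * Fintype.card V / 64) :
    ∃ f, IsHamCycle G f := by
  have : Nonempty V := by
    by_contra hV
    rw [not_nonempty_iff] at hV
    norm_num [Fintype.card_eq_zero] at hδn
  set x : ℝ := (Fintype.card V : ℝ) with hx
  have hx0 : 0 < x := Nat.cast_pos.2 Fintype.card_pos
  have hτx : 0 < τ * x := mul_pos hτ hx0
  have : 0 < μ * x := mul_pos hμ hx0
  have hτδx : 4 * τ * x ≤ δ * x := mul_le_mul_of_nonneg_right hτδ hx0.le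
  have hμδx : 4 * μ * x ≤ δ * x := mul_le_mul_of_nonneg_right hμδ hx0.le
  have : (0 : ℝ) ≤ K := K.cast_nonneg
  obtain ⟨D, hD, hD'⟩ := exists_nat_le_lt_add_one (y := δ * x) (by linarith)
  obtain ⟨r, hr, hr'⟩ := exists_nat_le_lt_add_one (y := μ / 4 * x) (by linarith)
  obtain ⟨N, hN, hN'⟩ := exists_nat_le_lt_add_one (y := μ / 16 * x) (by linarith)
  obtain ⟨L, hL, hL'⟩ := exists_nat_le_lt_add_one (y := μ / 32 * x) (by linarith)
  have hT := Nat.le_ceil (τ * x)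
  have hT' := Nat.ceil_lt_add_one hτx.le
  have hMr : (M.length : ℝ) ≤ r := by nlinarith [(Nat.cast_nonneg M.length : (0 : ℝ) ≤ _)]
  have hE : Expander H o i D ⌈τ * x⌉₊ r r := hH.expander hμ hD hT hr hr fun j =>
    (hM.card_labelClass_le j).trans (by exact_mod_cast Nat.add_le_add_left (Nat.cast_le.1 hMr) _)
  have hND : N ≤ D := Nat.cast_le.1 (by linarith : (N : ℝ) ≤ D)
  refine hE.exists_isHamCycle hG (Nat.ceil_pos.2 hτx) hM (K := K) (m := m) (L := L) (N := N)
    (t := t) (c := δ ^ 2 / 4) ?_ ?_ (by nlinarith) ?_ ht ?_ ?_ ?_ ?_ ?_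
  · have hKr : x ≤ K * r := by nlinarith
    exact_mod_cast hx ▸ hKr
  · have hmL : x ≤ m * L := by nlinarith
    exact_mod_cast hx ▸ hmL
  · rw [Nat.cast_sub hND]
    calc δ ^ 2 / 4 * x ^ 2 = (δ * x / 2) ^ 2 := by ring
      _ ≤ ((D : ℝ) - N) ^ 2 := by gcongr; linarith
  · have hsum : ((M.length : ℝ) + 1) * (K + 5) + (m + 1) * ((t + 2) * (2 * (K + 3) ^ 2)) ≤ N := by
      linarith
    exact_mod_cast hsum
  · exact_mod_cast (by linarith : 2 * (N : ℝ) ≤ r)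
  · exact_mod_cast (by linarith : (N : ℝ) ≤ r)
  · exact_mod_cast (by linarith : (r : ℝ) + 2 * ⌈τ * x⌉₊ + r + N < D)
  · exact_mod_cast (by linarith : 2 * (K : ℝ) + 2 * L + 3 ≤ r)

lemma eventually_pow_div_mul_sq_lt_one {c : ℝ} (hc : 0 < c) (hc1 : c ≤ 1) {q : ℕ} (hq : 0 < q) :
    ∀ᶠ n : ℕ in Filter.atTop, (1 - c) ^ (n / q + 1) * (n : ℝ) ^ 2 < 1 := by
  have hlim := tendsto_pow_const_mul_const_pow_of_abs_lt_one 2 (r := 1 - c)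
    (abs_lt.2 ⟨by linarith, by linarith⟩)
  have hsmall := (hlim.const_mul ((q : ℝ) ^ 2)).eventually_lt_const (u := 1) (by simp)
  have hdiv : Filter.Tendsto (fun n => n / q + 1) Filter.atTop Filter.atTop :=
    (Filter.tendsto_add_atTop_nat 1).comp (Nat.tendsto_div_const_atTop hq.ne')
  filter_upwards [hdiv.eventually hsmall] with n hn
  have hle : (n : ℝ) ≤ q * (n / q + 1 : ℕ) := by exact_mod_cast (Nat.lt_mul_div_succ n hq).le
  have : 0 ≤ (1 - c) ^ (n / q + 1) := pow_nonneg (by linarith) _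
  calc (1 - c) ^ (n / q + 1) * (n : ℝ) ^ 2
      ≤ (1 - c) ^ (n / q + 1) * (q * (n / q + 1 : ℕ)) ^ 2 := by gcongr
    _ = q ^ 2 * (((n / q + 1 : ℕ) : ℝ) ^ 2 * (1 - c) ^ (n / q + 1)) := by ring
    _ < 1 := hn

lemma exists_isHamCycle_of_dense (hδ : 0 < δ) (hδ1 : δ ≤ 1) (hτ : 0 < τ) (hτδ : 4 * τ ≤ δ)
    (hμ : 0 < μ) (hμδ : 4 * μ ≤ δ) : ∃ ε : ℝ, 0 < ε ∧ ∃ n₀ : ℕ, ∀ (V : Type u) [Fintype V]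
    (H G : V → V → Prop) (o o' i : V → Bool) (M : List (V × V)), n₀ ≤ Fintype.card V →
    Dense H o i δ τ μ → (∀ x y, H x y → G x y) → BalancingMatching G o i M o' →
    (M.length : ℝ) ≤ ε * Fintype.card V → ∃ f, IsHamCycle G f := by
  obtain ⟨K, hK⟩ := exists_nat_ge (8 / μ)
  obtain ⟨m, hm⟩ := exists_nat_ge (64 / μ)
  rw [div_le_iff₀ hμ] at hK hm
  set B : ℝ := (m + 1) * (2 * (K + 3) ^ 2)
  have : 0 < B := by positivity
  obtain ⟨q, hq⟩ := exists_nat_ge (128 * B / μ)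
  have hq0 : (0 : ℝ) < q := lt_of_lt_of_le (by positivity) hq
  rw [div_le_iff₀ hμ] at hq
  have hlarge := fun C : ℝ => (tendsto_natCast_atTop_atTop (R := ℝ)).eventually_ge_atTop C
  obtain ⟨n₀, hn₀⟩ := Filter.eventually_atTop.1 <|
    (eventually_pow_div_mul_sq_lt_one (c := δ ^ 2 / 4) (by positivity) (by nlinarith)
      (Nat.cast_pos.1 hq0)).and <| (hlarge (16 / δ)).and <|
      (hlarge (64 * (3 * K + 10) / μ)).and (hlarge (128 * (3 * B) / μ))
  refine ⟨μ / (64 * (K + 5)), by positivity, n₀, ?_⟩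
  intro V _ H G o o' i M hn hH hG hM hMl
  obtain ⟨ht, hδn, hμn, hBn⟩ := hn₀ _ hn
  rw [div_le_iff₀' (by assumption)] at hδn hμn hBn
  refine hH.exists_isHamCycle_of_large hG hδ1 hτ hτδ hμ hμδ hM hK hm hδn hμn ht ?_ ?_
  · have hdiv : (q : ℝ) * (Fintype.card V / q : ℕ) ≤ Fintype.card V := by
      exact_mod_cast Nat.mul_div_le _ _
    push_cast
    nlinarith [mul_le_mul_of_nonneg_right hq ((Fintype.card V / q).cast_nonneg (α := ℝ))]
  · calc (M.length : ℝ) * (K + 5) ≤ μ / (64 * (K + 5)) * Fintype.card V * (K + 5) := by gcongr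
      _ = μ * Fintype.card V / 64 := by field_simp

end Dense

section NearExtremal

variable {V : Type*} [Fintype V] {G : V → V → Prop} {p q o i : V → Bool} {δ τ μ ε ζ : ℝ}

/-- The vertices with labels `s` and `t`. -/
noncomputable def cell (p q : V → Bool) (s t : Bool) : Finset V := labelClass p s ∩ labelClass q t

@[simp] lemma mem_cell {s t : Bool} {x : V} : x ∈ cell p q s t ↔ p x = s ∧ q x = t := by
  simp [cell]

lemma cell_swap (p q : V → Bool) (s t : Bool) : cell q p s t = cell p q t s := inter_comm _ _

lemma disjoint_cell {s t s' t' : Bool} (h : (s, t) ≠ (s', t')) :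
    Disjoint (cell p q s t) (cell p q s' t') :=
  disjoint_left.2 fun x hx hx' => by
    rw [mem_cell] at hx hx'
    exact h (Prod.ext (hx.1.symm.trans hx'.1) (hx.2.symm.trans hx'.2))

lemma labelClass_left_eq (p q : V → Bool) (s : Bool) :
    labelClass p s = cell p q s s ∪ cell p q s (!s) := by
  ext x
  cases s <;> cases h : q x <;> simp [h]

lemma labelClass_right_eq (p q : V → Bool) (s : Bool) :
    labelClass q s = cell p q s s ∪ cell p q (!s) s := by
  rw [labelClass_left_eq q p, cell_swap p q, cell_swap p q]

lemma card_labelClass_left (p q : V → Bool) (s : Bool) :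
    #(labelClass p s) = #(cell p q s s) + #(cell p q s (!s)) := by
  rw [labelClass_left_eq p q, card_union_of_disjoint (disjoint_cell (by simp))]

lemma card_labelClass_right (p q : V → Bool) (s : Bool) :
    #(labelClass q s) = #(cell p q s s) + #(cell p q (!s) s) := by
  rw [card_labelClass_left q p, cell_swap p q, cell_swap p q]

lemma card_cells (p q : V → Bool) (s t : Bool) :
    #(cell p q s t) + #(cell p q (!s) t) + (#(cell p q s (!t)) + #(cell p q (!s) (!t))) =
      Fintype.card V := by
  have h := card_labelClass_add p s
  rw [card_labelClass_left p q, card_labelClass_left p q] at h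
  cases s <;> cases t <;> simp only [Bool.not_false, Bool.not_true] at h ⊢ <;> omega

/-- A labelled digraph close to the extremal example: the four cells have almost equal size, almost
all edges from each cell to the next one in the cyclic order are present, and there are many edges
inside the cells with two equal labels and between the two other cells. -/
structure NearExtremal (G : V → V → Prop) (p q : V → Bool) (ε : ℝ) : Prop where
  size : ∀ s t, (1 / 4 - ε) * Fintype.card V ≤ #(cell p q s t)
  full : ∀ s t, (#(cell p q s t) : ℝ) * #(cell p q (!t) s) - ε * (Fintype.card V : ℝ) ^ 2 ≤
    numEdges G (cell p q s t) (cell p q (!t) s)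
  half : ∀ s t, (Fintype.card V : ℝ) ^ 2 / 40 ≤ numEdges G (cell p q s t) (cell p q t s)

protected lemma NearExtremal.flip (h : NearExtremal G p q ε) : NearExtremal (flip G) q p ε where
  size s t := cell_swap p q s t ▸ h.size t s
  full s t := by
    rw [cell_swap p q, cell_swap p q, numEdges_flip, mul_comm]
    simpa only [Bool.not_not] using h.full s (!t)
  half s t := by
    rw [cell_swap p q, cell_swap p q, numEdges_flip]
    exact h.half s t

lemma NearExtremal.mono {ε' : ℝ} (h : NearExtremal G p q ε) (hε : ε ≤ ε') :
    NearExtremal G p q ε' where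
  size s t := (mul_le_mul_of_nonneg_right (by linarith) (Nat.cast_nonneg _)).trans (h.size s t)
  full s t := (sub_le_sub_left (mul_le_mul_of_nonneg_right hε (sq_nonneg _)) _).trans (h.full s t)
  half := h.half

lemma NearExtremal.card_cell_le (h : NearExtremal G p q ε) (s t : Bool) :
    (#(cell p q s t) : ℝ) ≤ (1 / 4 + 3 * ε) * Fintype.card V := by
  have hsum : (#(cell p q s t) : ℝ) + #(cell p q (!s) t) +
      (#(cell p q s (!t)) + #(cell p q (!s) (!t))) = Fintype.card V := by
    exact_mod_cast card_cells p q s t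
  linarith [h.size (!s) t, h.size s (!t), h.size (!s) (!t)]

/-- The vertices of `S` with labels `s` and `t` that avoid the exceptional set `W`. -/
noncomputable def cleanPart (p q : V → Bool) (W : Finset V) (s t : Bool) (S : Finset V) :
    Finset V := (cell p q s t ∩ S) \ W

variable {W S T : Finset V} {s t j : Bool}

lemma mem_cleanPart {x : V} :
    x ∈ cleanPart p q W s t S ↔ (p x = s ∧ q x = t) ∧ x ∈ S ∧ x ∉ W := by
  rw [cleanPart, mem_sdiff, mem_inter, mem_cell, and_assoc]

lemma cleanPart_subset_cell : cleanPart p q W s t S ⊆ cell p q s t :=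
  sdiff_subset.trans inter_subset_left

lemma cleanPart_subset : cleanPart p q W s t S ⊆ S := sdiff_subset.trans inter_subset_right

lemma cleanPart_swap (p q : V → Bool) (W : Finset V) (s t : Bool) (S : Finset V) :
    cleanPart q p W s t S = cleanPart p q W t s S := by rw [cleanPart, cell_swap, cleanPart]

lemma card_le_cleanPart_add (hW : ∀ v ∉ W, o v = p v) (hS : S ⊆ labelClass o j) :
    #S ≤ #(cleanPart p q W j j S) + #(cleanPart p q W j (!j) S) + #W := by
  have hsub : S ⊆ cleanPart p q W j j S ∪ cleanPart p q W j (!j) S ∪ W := fun v hv => by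
    simp only [mem_union, mem_cleanPart]
    by_cases hvW : v ∈ W
    · exact Or.inr hvW
    · have hp : p v = j := (hW v hvW).symm.trans (mem_labelClass.1 (hS hv))
      cases h : q v <;> cases j <;> simp [hv, hvW, hp]
  exact (card_le_card hsub).trans ((card_union_le _ _).trans
    (Nat.add_le_add_right (card_union_le _ _) _))

lemma card_inter_labelClass_le_add (hW : ∀ v ∉ W, o v = p v) (S : Finset V) (j : Bool) :
    #(S ∩ labelClass p j) ≤ #(S ∩ labelClass o j) + #W := by
  refine (card_le_card fun v hv => ?_).trans (card_union_le _ _)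
  rw [mem_inter, mem_labelClass] at hv
  rw [mem_union, mem_inter, mem_labelClass]
  exact or_iff_not_imp_right.2 fun hvW => ⟨hv.1, (hW v hvW).trans hv.2⟩

lemma card_labelClass_le_add (hW : ∀ v ∉ W, o v = p v) (j : Bool) :
    #(labelClass p j) ≤ #(labelClass o j) + #W := by
  simpa only [univ_inter] using card_inter_labelClass_le_add hW univ j

lemma card_cell_le_cleanPart_add (p q : V → Bool) (W S : Finset V) (s t : Bool) :
    #(cell p q s t) ≤ #(cleanPart p q W s t Sᶜ) + #(cleanPart p q W s t S) + #W := by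
  have hsub : cell p q s t ⊆ cleanPart p q W s t Sᶜ ∪ cleanPart p q W s t S ∪ W := fun v hv => by
    rw [mem_cell] at hv
    simp only [mem_union, mem_cleanPart, mem_compl]
    tauto
  exact (card_le_card hsub).trans ((card_union_le _ _).trans
    (Nat.add_le_add_right (card_union_le _ _) _))

lemma card_le_of_forall_cleanPart_le {a : ℝ} (h : ∀ s t, (#(cleanPart p q W s t S) : ℝ) ≤ a) :
    (#S : ℝ) ≤ 4 * a + #W := by
  have hsub : S ⊆ (univ.biUnion fun e : Bool × Bool => cleanPart p q W e.1 e.2 S) ∪ W :=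
    fun v hv => by
      simp only [mem_union, mem_biUnion, mem_univ, true_and, mem_cleanPart]
      exact or_iff_not_imp_right.2 fun hvW => ⟨(p v, q v), ⟨rfl, rfl⟩, hv, hvW⟩
  have hcard : (#S : ℝ) ≤ ∑ e : Bool × Bool, (#(cleanPart p q W e.1 e.2 S) : ℝ) + #W := by
    exact_mod_cast (card_le_card hsub).trans ((card_union_le _ _).trans
      (Nat.add_le_add_right card_biUnion_le _))
  have hsum : ∑ e : Bool × Bool, (#(cleanPart p q W e.1 e.2 S) : ℝ) ≤ 4 * a := by
    simpa using sum_le_card_nsmul univ (fun e : Bool × Bool =>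
      (#(cleanPart p q W e.1 e.2 S) : ℝ)) a fun e _ => h e.1 e.2
  linarith

lemma le_numEdges_cleanPart (hW : ∀ v ∉ W, o v = p v ∧ i v = q v) (s t u : Bool)
    (S T : Finset V) :
    (#(cleanPart p q W s t S) : ℝ) * #(cleanPart p q W u s T) +
      numEdges G (cell p q s t) (cell p q u s) - #(cell p q s t) * #(cell p q u s) ≤
        numEdges (fun x y => G x y ∧ o x = i y) S T := by
  have hmissing := card_mul_card_add_numEdges_le (H := G)
    (cleanPart_subset_cell (p := p) (q := q) (W := W) (s := s) (t := t) (S := S))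
    (cleanPart_subset_cell (p := p) (q := q) (W := W) (s := u) (t := s) (S := T))
  have hmono := numEdges_mono (G := G) (H := fun x y => G x y ∧ o x = i y)
    (cleanPart_subset (p := p) (q := q) (W := W) (s := s) (t := t) (S := S))
    (cleanPart_subset (p := p) (q := q) (W := W) (s := u) (t := s) (S := T))
    fun x hx y hy hxy => by
      rw [mem_cleanPart] at hx hy
      exact ⟨hxy, by rw [(hW x hx.2.2).1, (hW y hy.2.2).2, hx.1.1, hy.1.2]⟩
  have hsum : (#(cleanPart p q W s t S) : ℝ) * #(cleanPart p q W u s T) +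
      numEdges G (cell p q s t) (cell p q u s) ≤ #(cell p q s t) * #(cell p q u s) +
        numEdges (fun x y => G x y ∧ o x = i y) S T := by
    exact_mod_cast hmissing.trans (Nat.add_le_add_left hmono _)
  linarith

lemma NearExtremal.cleanPart_lt_or_cleanPart_lt (h : NearExtremal G p q ε)
    (hW : ∀ v ∉ W, o v = p v ∧ i v = q v) (hζ : 0 ≤ ζ) (hμε : μ + ε ≤ ζ ^ 2)
    (hfew : (numEdges (fun x y => G x y ∧ o x = i y) S T : ℝ) < μ * (Fintype.card V : ℝ) ^ 2)
    (s t : Bool) : #(cleanPart p q W s t S) < ζ * Fintype.card V ∨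
      #(cleanPart p q W (!t) s T) < ζ * Fintype.card V := by
  by_contra! hlarge
  have hmul := mul_le_mul hlarge.1 hlarge.2 (by positivity) (by positivity)
  have hedges := le_numEdges_cleanPart (G := G) hW s t (!t) S T
  have hfull := h.full s t
  nlinarith [mul_le_mul_of_nonneg_right hμε (sq_nonneg (Fintype.card V : ℝ))]

lemma NearExtremal.sq_div_le_numEdges (h : NearExtremal G p q ε)
    (hW : ∀ v ∉ W, o v = p v ∧ i v = q v) (hζ : 0 ≤ ζ) (hζ1 : ζ ≤ 1 / 1000) (hε : ε ≤ ζ)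
    (hlarge : (1 / 2 - 12 * ζ) * Fintype.card V ≤
      #(cleanPart p q W s t S) + #(cleanPart p q W t s T)) :
    (Fintype.card V : ℝ) ^ 2 / 100 ≤ numEdges (fun x y => G x y ∧ o x = i y) S T := by
  have hedges := le_numEdges_cleanPart (G := G) hW s t t S T
  have hhalf := h.half s t
  have hcell : ∀ s t, (#(cell p q s t) : ℝ) ≤ (1 / 4 + 3 * ζ) * Fintype.card V := fun s t =>
    (h.card_cell_le s t).trans (by gcongr)
  have hpart : ∀ s t S, (#(cleanPart p q W s t S) : ℝ) ≤ (1 / 4 + 3 * ζ) * Fintype.card V :=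
    fun s t S => (Nat.cast_le.2 (card_le_card cleanPart_subset_cell)).trans (hcell s t)
  have hlow : (1 / 4 - 15 * ζ) * (Fintype.card V : ℝ) * ((1 / 4 - 15 * ζ) * Fintype.card V) ≤
      #(cleanPart p q W s t S) * #(cleanPart p q W t s T) :=
    mul_le_mul (by linarith [hpart t s T]) (by linarith [hpart s t S])
      (mul_nonneg (by linarith) (Nat.cast_nonneg _)) (Nat.cast_nonneg _)
  have hup := mul_le_mul (hcell s t) (hcell t s) (Nat.cast_nonneg _) (by positivity)
  nlinarith [sq_nonneg (Fintype.card V : ℝ), sq_nonneg (ζ * Fintype.card V),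
    mul_le_mul_of_nonneg_right hζ1 (sq_nonneg (Fintype.card V : ℝ))]

lemma NearExtremal.numEdges_block (h : NearExtremal G p q ε)
    (hW : ∀ v ∉ W, o v = p v ∧ i v = q v) (hζ : 0 < ζ) (hζ1 : ζ ≤ 1 / 1000) (hτ : 8 * ζ ≤ τ)
    (hε : ε ≤ ζ ^ 2 / 2) (hμ : μ ≤ ζ ^ 2 / 2) (hWζ : (#W : ℝ) ≤ ζ * Fintype.card V)
    (hx : 0 < (Fintype.card V : ℝ)) (hS : S ⊆ labelClass o j) (hT : T ⊆ labelClass i j)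
    (hSτ : τ * Fintype.card V ≤ #S) (hTτ : τ * Fintype.card V ≤ #T)
    (hST : #(labelClass i j) - μ * Fintype.card V ≤ #S + #T) :
    μ * (Fintype.card V : ℝ) ^ 2 ≤ numEdges (fun x y => G x y ∧ o x = i y) S T := by
  by_contra! hfew
  set x : ℝ := (Fintype.card V : ℝ)
  have hεζ : ε ≤ ζ := by nlinarith
  have hμζ : μ ≤ ζ := by nlinarith
  have hμx : μ * x ≤ ζ * x := mul_le_mul_of_nonneg_right hμζ hx.le
  have hεx : ε * x ≤ ζ * x := mul_le_mul_of_nonneg_right hεζ hx.le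
  have hτx : 8 * ζ * x ≤ τ * x := mul_le_mul_of_nonneg_right hτ hx.le
  have hμ1 : μ * x ^ 2 ≤ x ^ 2 / 100 := by nlinarith [sq_nonneg x]
  have hScard : (#S : ℝ) ≤ #(cleanPart p q W j j S) + #(cleanPart p q W j (!j) S) + #W := by
    exact_mod_cast card_le_cleanPart_add (fun v hv => (hW v hv).1) hS
  have hTcard : (#T : ℝ) ≤ #(cleanPart p q W j j T) + #(cleanPart p q W (!j) j T) + #W := by
    have hcard := card_le_cleanPart_add (q := p) (fun v hv => (hW v hv).2) hT
    rw [cleanPart_swap p q, cleanPart_swap p q] at hcard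
    exact_mod_cast hcard
  have hclass : (#(cell p q j j) : ℝ) + #(cell p q (!j) j) ≤ #(labelClass i j) + #W := by
    have hle := card_labelClass_le_add (p := q) (fun v hv => (hW v hv).2) j
    rw [card_labelClass_right p q] at hle
    exact_mod_cast hle
  have hcell₁ := h.size j j
  have hcell₂ := h.size (!j) j
  have hpair₁ := h.cleanPart_lt_or_cleanPart_lt hW hζ.le (by linarith) hfew j j
  have hpair₂ := h.cleanPart_lt_or_cleanPart_lt hW hζ.le (by linarith) hfew j (!j)
  rw [Bool.not_not] at hpair₂
  rcases hpair₁ with hS₁ | hT₁ <;> rcases hpair₂ with hS₂ | hT₂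
  · linarith
  · exact absurd (h.sq_div_le_numEdges hW hζ.le hζ1 hεζ (s := j) (t := !j) (by linarith))
      (not_le.2 (hfew.trans_le hμ1))
  · exact absurd (h.sq_div_le_numEdges hW hζ.le hζ1 hεζ (s := j) (t := j) (by linarith))
      (not_le.2 (hfew.trans_le hμ1))
  · linarith

lemma forall_or_forall_not_of_rotate {P : Bool → Bool → Prop} (h : ∀ s t, P (!t) s → P s t) :
    (∀ s t, P s t) ∨ ∀ s t, ¬ P s t := by
  have h₁ := h false false
  have h₂ := h false true
  have h₃ := h true false
  have h₄ := h true true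
  simp only [Bool.forall_bool, Bool.not_false, Bool.not_true] at *
  tauto

lemma NearExtremal.numEdges_cut (h : NearExtremal G p q ε)
    (hW : ∀ v ∉ W, o v = p v ∧ i v = q v) (hζ : 0 < ζ) (hζ1 : ζ ≤ 1 / 1000) (hτ : 8 * ζ ≤ τ)
    (hε : ε ≤ ζ ^ 2 / 2) (hμ : μ ≤ ζ ^ 2 / 2) (hWζ : (#W : ℝ) ≤ ζ * Fintype.card V)
    (hx : 0 < (Fintype.card V : ℝ)) (hSτ : τ * Fintype.card V ≤ #S)
    (hSn : #S + τ * Fintype.card V ≤ Fintype.card V) :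
    μ * (Fintype.card V : ℝ) ^ 2 ≤ numEdges (fun x y => G x y ∧ o x = i y) Sᶜ S := by
  by_contra! hfew
  set x : ℝ := (Fintype.card V : ℝ) with hx_def
  have hεζ : ε ≤ ζ := by nlinarith
  have hεx : ε * x ≤ ζ * x := mul_le_mul_of_nonneg_right hεζ hx.le
  have hτx : 8 * ζ * x ≤ τ * x := mul_le_mul_of_nonneg_right hτ hx.le
  have hζx : 1000 * ζ * x ≤ 1 * x := mul_le_mul_of_nonneg_right (by linarith) hx.le
  have hpair := h.cleanPart_lt_or_cleanPart_lt hW hζ.le (by linarith) hfew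
  have hrotate : ∀ s t, ζ * x ≤ #(cleanPart p q W (!t) s S) → ζ * x ≤ #(cleanPart p q W s t S) :=
    fun s t hst => by
      have hsmall := (hpair s t).resolve_right hst.not_gt
      have hcell : (#(cell p q s t) : ℝ) ≤
          #(cleanPart p q W s t Sᶜ) + #(cleanPart p q W s t S) + #W := by
        exact_mod_cast card_cell_le_cleanPart_add p q W S s t
      linarith [h.size s t]
  rcases forall_or_forall_not_of_rotate
    (P := fun s t => ζ * x ≤ #(cleanPart p q W s t S)) hrotate with hlarge | hsmall
  · have hcompl := card_le_of_forall_cleanPart_le (p := p) (q := q) (W := W) (S := Sᶜ)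
      fun s t => ((hpair s t).resolve_right (hlarge _ _).not_gt).le
    have hsum : (#Sᶜ : ℝ) + #S = x := by
      rw [hx_def]
      exact_mod_cast card_compl_add_card S
    linarith [mul_pos hζ hx]
  · linarith [card_le_of_forall_cleanPart_le fun s t => (not_le.1 (hsmall s t)).le, mul_pos hζ hx]

lemma outNbrs_and_eq (G : V → V → Prop) (o i : V → Bool) (v : V) :
    outNbrs (fun x y => G x y ∧ o x = i y) v = outNbrs G v ∩ labelClass i (o v) := by
  ext y
  rw [mem_outNbrs, mem_inter, mem_outNbrs, mem_labelClass, eq_comm]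

lemma inNbrs_and_eq (G : V → V → Prop) (o i : V → Bool) (v : V) :
    inNbrs (fun x y => G x y ∧ o x = i y) v = inNbrs G v ∩ labelClass o (i v) := by
  ext x
  rw [mem_inNbrs, mem_inter, mem_inNbrs, mem_labelClass]

lemma NearExtremal.dense (h : NearExtremal G p q ε) (hW : ∀ v ∉ W, o v = p v ∧ i v = q v)
    [Nonempty V] (hζ : 0 < ζ) (hζ1 : ζ ≤ 1 / 1000) (hτ : 8 * ζ ≤ τ) (hε : ε ≤ ζ ^ 2 / 2)
    (hμ : μ ≤ ζ ^ 2 / 2) (hWζ : (#W : ℝ) ≤ ζ * Fintype.card V)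
    (hWδ : (#W : ℝ) ≤ δ * Fintype.card V)
    (hout : ∀ v, 2 * δ * Fintype.card V ≤ #(outNbrs G v ∩ labelClass q (o v)))
    (hin : ∀ v, 2 * δ * Fintype.card V ≤ #(inNbrs G v ∩ labelClass p (i v))) :
    Dense (fun x y => G x y ∧ o x = i y) o i δ τ μ := by
  have hx : 0 < (Fintype.card V : ℝ) := Nat.cast_pos.2 Fintype.card_pos
  refine ⟨fun _ _ hxy => hxy.2, fun v => ?_, fun v => ?_,
    fun _ _ hS _ hT => h.numEdges_block hW hζ hζ1 hτ hε hμ hWζ hx hS hT,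
    fun _ => h.numEdges_cut hW hζ hζ1 hτ hε hμ hWζ hx⟩
  · rw [outNbrs_and_eq]
    have hcard : (#(outNbrs G v ∩ labelClass q (o v)) : ℝ) ≤
        #(outNbrs G v ∩ labelClass i (o v)) + #W := by
      exact_mod_cast card_inter_labelClass_le_add (fun v hv => (hW v hv).2) _ _
    linarith [hout v]
  · rw [inNbrs_and_eq]
    have hcard : (#(inNbrs G v ∩ labelClass p (i v)) : ℝ) ≤
        #(inNbrs G v ∩ labelClass o (i v)) + #W := by
      exact_mod_cast card_inter_labelClass_le_add (fun v hv => (hW v hv).1) _ _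
    linarith [hin v]

end NearExtremal

section Matching

variable {V : Type*} [Fintype V] {G : V → V → Prop} {S T U : Finset V} {d : ℕ}

lemma numEdges_le_of_cover (hout : ∀ x ∈ S, #(outNbrs G x ∩ T) ≤ d)
    (hin : ∀ y ∈ T, #(inNbrs G y ∩ S) ≤ d)
    (hU : ∀ x ∈ S, x ∉ U → ∀ y ∈ T, y ∉ U → ¬ G x y) : numEdges G S T ≤ 2 * #U * d := by
  have hcover : numEdges G S T ≤ numEdges G (S ∩ U) T + numEdges G S (T ∩ U) := by
    refine (card_le_card fun e he => ?_).trans (card_union_le _ _)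
    simp only [mem_union, Rel.mem_interedges_iff, mem_inter] at he ⊢
    obtain ⟨hS, hT, hG⟩ := he
    by_contra! hnot
    exact hU e.1 hS (fun h => hnot.1 ⟨hS, h⟩ hT hG) e.2 hT (fun h => hnot.2 hS ⟨hT, h⟩ hG) hG
  have hleft : numEdges G (S ∩ U) T ≤ #(S ∩ U) * d := by
    exact_mod_cast numEdges_le_of_outdeg (a := d) fun x hx =>
      Nat.cast_le.2 (hout x (mem_inter.1 hx).1)
  have hright : numEdges G S (T ∩ U) ≤ #(T ∩ U) * d := by
    exact_mod_cast numEdges_le_of_indeg (a := d) fun y hy =>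
      Nat.cast_le.2 (hin y (mem_inter.1 hy).1)
  have hS := Nat.mul_le_mul_right d (card_le_card (inter_subset_right : S ∩ U ⊆ U))
  have hT := Nat.mul_le_mul_right d (card_le_card (inter_subset_right : T ∩ U ⊆ U))
  linarith

lemma exists_isMatching_of_lt_numEdges (hG : IsOriented G)
    (hout : ∀ x ∈ S, #(outNbrs G x ∩ T) ≤ d) (hin : ∀ y ∈ T, #(inNbrs G y ∩ S) ≤ d)
    (k : ℕ) (hk : 4 * k * d < numEdges G S T) :
    ∃ M : List (V × V), M.length = k ∧ IsMatching (fun x y => G x y ∧ x ∈ S ∧ y ∈ T) M := by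
  induction k with
  | zero => exact ⟨[], rfl, fun _ he => absurd he List.not_mem_nil, List.nodup_nil⟩
  | succ k ih =>
    obtain ⟨M, hMk, hM⟩ := ih (lt_of_le_of_lt (by gcongr; omega) hk)
    set U := (endpoints M).toFinset with hU
    have hfree : ∃ x ∈ S, x ∉ U ∧ ∃ y ∈ T, y ∉ U ∧ G x y := by
      by_contra! hcover
      have hcard : #U ≤ 2 * (k + 1) :=
        (List.toFinset_card_le _).trans (by rw [length_endpoints]; omega)
      have hmul := Nat.mul_le_mul_right d (Nat.mul_le_mul_left 2 hcard)
      rw [← mul_assoc] at hmul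
      exact ((numEdges_le_of_cover hout hin hcover).trans hmul).not_gt hk
    obtain ⟨x, hxS, hx, y, hyT, hy, hxy⟩ := hfree
    rw [hU, List.mem_toFinset] at hx hy
    have hne : x ≠ y := fun h => hG x y hxy (by rwa [h] at hxy ⊢)
    refine ⟨(x, y) :: M, by rw [List.length_cons, hMk],
      List.forall_mem_cons.2 ⟨⟨hxy, hxS, hyT⟩, hM.1⟩, ?_⟩
    simp only [endpoints_cons, List.nodup_cons, List.mem_cons, not_or]
    exact ⟨⟨hne, hx⟩, hy, hM.nodup⟩

end Matching

section Semidegree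

variable {V : Type*} {G : V → V → Prop}

lemma isOriented_flip (hG : IsOriented G) : IsOriented (flip G) := fun x y => hG y x

lemma disjoint_interedges_flip (hG : IsOriented G) (X Y : Finset V) :
    Disjoint (Rel.interedges G X Y) (Rel.interedges (flip G) X Y) :=
  disjoint_left.2 fun _ he he' =>
    hG _ _ (Rel.mem_interedges_iff.1 he).2.2 (Rel.mem_interedges_iff.1 he').2.2

lemma numEdges_add_numEdges_swap_le (hG : IsOriented G) (X Y : Finset V) :
    numEdges G X Y + numEdges G Y X ≤ #X * #Y := by
  rw [← numEdges_flip G X Y, numEdges, numEdges,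
    ← card_union_of_disjoint (disjoint_interedges_flip hG X Y), ← card_product]
  exact card_le_card (union_subset (filter_subset _ _) (filter_subset _ _))

lemma two_mul_numEdges_self_add_card_le (hG : IsOriented G) (X : Finset V) :
    2 * numEdges G X X + #X ≤ #X * #X := by
  have hsub : Rel.interedges G X X ∪ Rel.interedges (flip G) X X ⊆ X.offDiag := fun e he => by
    rw [mem_union, Rel.mem_interedges_iff, Rel.mem_interedges_iff] at he
    rw [mem_offDiag]
    rcases he with ⟨h₁, h₂, h⟩ | ⟨h₁, h₂, h⟩
    all_goals exact ⟨h₁, h₂, fun heq => hG _ _ h (by simpa only [heq, flip] using h)⟩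
  have hle := card_le_card hsub
  rw [card_union_of_disjoint (disjoint_interedges_flip hG X X), offDiag_card] at hle
  have hflip : #(Rel.interedges (flip G) X X) = numEdges G X X := numEdges_flip G X X
  have hself := Nat.le_mul_self #X
  simp only [numEdges] at hflip ⊢
  omega

variable [Fintype V] {o i : V → Bool} {a : ℝ}

/-- The minimum semidegree of `G` is at least `a`. -/
structure MinSemidegreeGE (G : V → V → Prop) (a : ℝ) : Prop where
  out : ∀ x, a ≤ #(outNbrs G x)
  in_ : ∀ x, a ≤ #(inNbrs G x)

protected lemma MinSemidegreeGE.flip (h : MinSemidegreeGE G a) : MinSemidegreeGE (flip G) a :=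
  ⟨h.in_, h.out⟩

lemma MinSemidegreeGE.mono {b : ℝ} (h : MinSemidegreeGE G b) (hab : a ≤ b) :
    MinSemidegreeGE G a :=
  ⟨fun x => hab.trans (h.out x), fun x => hab.trans (h.in_ x)⟩

lemma minSemidegreeGE_iff :
    MinSemidegreeGE G a ↔ ∀ x, a ≤ outDeg G x ∧ a ≤ inDeg G x := by
  have hout : ∀ x, #(outNbrs G x) = outDeg G x := fun x => by
    rw [outDeg, Nat.card_eq_fintype_card, Fintype.card_subtype, outNbrs]
  have hin : ∀ x, #(inNbrs G x) = inDeg G x := fun x => by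
    rw [inDeg, Nat.card_eq_fintype_card, Fintype.card_subtype, inNbrs]
  refine ⟨fun h x => ⟨hout x ▸ h.out x, hin x ▸ h.in_ x⟩, fun h => ⟨fun x => ?_, fun x => ?_⟩⟩
  · exact (hout x).symm ▸ (h x).1
  · exact (hin x).symm ▸ (h x).2

lemma numEdges_univ_left (q : V → Bool) (s : Bool) (X : Finset V) :
    numEdges G univ X = numEdges G (labelClass q s) X + numEdges G (labelClass q (!s)) X := by
  rw [← numEdges_union_left (disjoint_labelClass q s), labelClass_union]

lemma numEdges_univ_right (q : V → Bool) (s : Bool) (X : Finset V) :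
    numEdges G X univ = numEdges G X (labelClass q s) + numEdges G X (labelClass q (!s)) := by
  rw [← numEdges_union_right (disjoint_labelClass q s), labelClass_union]

lemma numEdges_labelClass_left (o i : V → Bool) (s : Bool) (T : Finset V) :
    numEdges G (labelClass o s) T =
      numEdges G (cell o i s s) T + numEdges G (cell o i s (!s)) T := by
  rw [labelClass_left_eq o i, numEdges_union_left (disjoint_cell (by simp))]

lemma numEdges_labelClass_right (o i : V → Bool) (s : Bool) (S : Finset V) :
    numEdges G S (labelClass i s) =
      numEdges G S (cell o i s s) + numEdges G S (cell o i (!s) s) := by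
  rw [labelClass_right_eq o i, numEdges_union_right (disjoint_cell (by simp))]

lemma MinSemidegreeGE.le_numEdges_equal_cell (h : MinSemidegreeGE G a) (hG : IsOriented G)
    (o i : V → Bool) (s : Bool) :
    #(cell o i s s) * (a - (#(cell o i s s) - 1) / 2 - #(cell o i (!s) s)) ≤
      numEdges G (cell o i s s) (labelClass i (!s)) := by
  have hdeg := le_numEdges_univ_right h.out (cell o i s s)
  rw [numEdges_univ_right i s, numEdges_labelClass_right o i, Nat.cast_add, Nat.cast_add] at hdeg
  have hself : 2 * (numEdges G (cell o i s s) (cell o i s s) : ℝ) + #(cell o i s s) ≤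
      #(cell o i s s) * #(cell o i s s) := by
    exact_mod_cast two_mul_numEdges_self_add_card_le hG _
  have hmul : (numEdges G (cell o i s s) (cell o i (!s) s) : ℝ) ≤
      #(cell o i s s) * #(cell o i (!s) s) := by
    exact_mod_cast numEdges_le_mul G _ _
  linarith

lemma MinSemidegreeGE.le_numEdges_unequal_cell (h : MinSemidegreeGE G a) (hG : IsOriented G)
    (o i : V → Bool) (s : Bool) :
    #(cell o i s (!s)) *
        (2 * a - #(cell o i s s) - #(cell o i (!s) s) - #(cell o i (!s) (!s))) ≤
      numEdges G (cell o i s (!s)) (labelClass i (!s)) +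
        numEdges G (labelClass o s) (cell o i s (!s)) := by
  set D := cell o i s (!s)
  have hout := le_numEdges_univ_right h.out D
  have hin := le_numEdges_univ_left h.in_ D
  rw [numEdges_univ_right i s, numEdges_labelClass_right o i, Nat.cast_add, Nat.cast_add] at hout
  rw [numEdges_univ_left o s, numEdges_labelClass_left o i (!s), Bool.not_not, Nat.cast_add,
    Nat.cast_add] at hin
  have hA : (numEdges G D (cell o i s s) : ℝ) ≤ #D * #(cell o i s s) := by
    exact_mod_cast numEdges_le_mul G _ _
  have hB : (numEdges G D (cell o i (!s) s) : ℝ) + numEdges G (cell o i (!s) s) D ≤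
      #D * #(cell o i (!s) s) := by
    exact_mod_cast numEdges_add_numEdges_swap_le hG _ _
  have hC : (numEdges G (cell o i (!s) (!s)) D : ℝ) ≤ #(cell o i (!s) (!s)) * #D := by
    exact_mod_cast numEdges_le_mul G _ _
  linarith

lemma mul_le_of_mul_le_of_le {P x m b : ℝ} (h : x * b ≤ P) (hP : 0 ≤ P) (hm : 0 ≤ m)
    (hx : m ≤ x) : m * b ≤ P := by
  rcases le_total 0 b with hb | hb
  · exact (mul_le_mul_of_nonneg_right hx hb).trans h
  · exact (mul_nonpos_of_nonneg_of_nonpos hm hb).trans hP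

lemma MinSemidegreeGE.le_numEdges_labelClass
    (h : MinSemidegreeGE G ((3 * (Fintype.card V : ℝ) - 4) / 8)) (hG : IsOriented G)
    (hcell : ∀ s t, (Fintype.card V : ℝ) / 5 ≤ #(cell o i s t)) {k : ℕ} (hk : 0 < k) {s : Bool}
    (hlabel : #(labelClass o s) = #(labelClass i s) + k) :
    (k : ℝ) * Fintype.card V / 20 ≤ numEdges G (labelClass o s) (labelClass i (!s)) := by
  set x : ℝ := (Fintype.card V : ℝ) with hx
  have hx0 : 0 ≤ x / 5 := by positivity
  have hA := mul_le_of_mul_le_of_le (h.le_numEdges_equal_cell hG o i s) (Nat.cast_nonneg _) hx0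
    (hcell s s)
  have hC := mul_le_of_mul_le_of_le (h.flip.le_numEdges_equal_cell (isOriented_flip hG) i o (!s))
    (Nat.cast_nonneg _) hx0 (by simpa only [cell_swap o i] using hcell (!s) (!s))
  rw [numEdges_flip, cell_swap o i, cell_swap o i, Bool.not_not] at hC
  have hD := mul_le_of_mul_le_of_le (h.le_numEdges_unequal_cell hG o i s) (by positivity) hx0
    (hcell s (!s))
  have hE₁ : (numEdges G (labelClass o s) (labelClass i (!s)) : ℝ) =
      numEdges G (cell o i s s) (labelClass i (!s)) +
        numEdges G (cell o i s (!s)) (labelClass i (!s)) := by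
    exact_mod_cast numEdges_labelClass_left o i s _
  have hE₂ : (numEdges G (labelClass o s) (labelClass i (!s)) : ℝ) =
      numEdges G (labelClass o s) (cell o i (!s) (!s)) +
        numEdges G (labelClass o s) (cell o i s (!s)) := by
    simpa only [Bool.not_not, Nat.cast_add] using
      congrArg (Nat.cast : ℕ → ℝ) (numEdges_labelClass_right (G := G) o i (!s) (labelClass o s))
  have hdiff : (#(cell o i s (!s)) : ℝ) = #(cell o i (!s) s) + k := by
    rw [card_labelClass_left o i, card_labelClass_right o i] at hlabel
    exact_mod_cast (by omega : #(cell o i s (!s)) = #(cell o i (!s) s) + k)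
  have hcells : (#(cell o i s s) : ℝ) + #(cell o i (!s) s) +
      (#(cell o i s (!s)) + #(cell o i (!s) (!s))) = x := by
    rw [hx]
    exact_mod_cast card_cells o i s s
  have hk1 : (1 : ℝ) ≤ k := Nat.one_le_cast.2 hk
  have hexcess : (k : ℝ) / 2 ≤
      ((3 * x - 4) / 8 - (#(cell o i s s) - 1) / 2 - #(cell o i (!s) s)) +
      ((3 * x - 4) / 8 - (#(cell o i (!s) (!s)) - 1) / 2 - #(cell o i (!s) s)) +
      (2 * ((3 * x - 4) / 8) - #(cell o i s s) - #(cell o i (!s) s) - #(cell o i (!s) (!s))) := by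
    linarith
  linarith [mul_le_mul_of_nonneg_left hexcess hx0]

end Semidegree

section Relabelling

variable {V : Type*} [Fintype V] {G : V → V → Prop} {p q o i : V → Bool} {ε θ a : ℝ}

/-- The vertices that have other labels in `o` and `i` than in `p` and `q`. -/
noncomputable def relabelled (p q o i : V → Bool) : Finset V :=
  univ.filter fun v => o v ≠ p v ∨ i v ≠ q v

@[simp] lemma mem_relabelled {v : V} : v ∈ relabelled p q o i ↔ o v ≠ p v ∨ i v ≠ q v := by
  simp [relabelled]

lemma relabelled_swap (p q o i : V → Bool) : relabelled q p i o = relabelled p q o i := by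
  ext v
  rw [mem_relabelled, mem_relabelled, or_comm]

lemma card_relabelled_update_left_le (p q o i : V → Bool) (v : V) (b : Bool) :
    #(relabelled p q (Function.update o v b) i) ≤ #(relabelled p q o i) + 1 := by
  refine (card_le_card fun u hu => ?_).trans (card_insert_le v _)
  rw [mem_insert]
  refine or_iff_not_imp_left.2 fun huv => ?_
  rwa [mem_relabelled, Function.update_of_ne huv, ← mem_relabelled] at hu

lemma card_relabelled_update_right_le (p q o i : V → Bool) (v : V) (b : Bool) :
    #(relabelled p q o (Function.update i v b)) ≤ #(relabelled p q o i) + 1 := by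
  rw [← relabelled_swap, ← relabelled_swap p]
  exact card_relabelled_update_left_le q p i o v b

lemma card_labelClass_update_not {v : V} {s : Bool} (hv : o v = s) :
    #(labelClass (Function.update o v (!s)) s) + 1 = #(labelClass o s) := by
  have hmem : v ∈ labelClass o s := mem_labelClass.2 hv
  have herase : labelClass (Function.update o v (!s)) s = (labelClass o s).erase v := by
    ext u
    rcases eq_or_ne u v with rfl | huv
    · simp
    · simp [huv]
  rw [herase, card_erase_add_one hmem]

lemma card_labelClass_update {v : V} {s : Bool} (hv : o v = !s) :
    #(labelClass (Function.update o v s) s) = #(labelClass o s) + 1 := by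
  have hnot := card_labelClass_update_not hv
  have hadd := card_labelClass_add o s
  have hadd' := card_labelClass_add (Function.update o v s) s
  rw [Bool.not_not] at hnot
  omega

/-- Labels of least imbalance, among those whose imbalance exceeds the original one by at most the
number of relabelled vertices that is saved, cannot be improved by changing one label. -/
lemma exists_unimprovable_labels {P Q : V → Bool → Prop} {k : ℕ} {s : Bool}
    (hP : ∀ v, P v (o v)) (hQ : ∀ v, Q v (i v))
    (hk : #(labelClass o s) = #(labelClass i s) + k) :
    ∃ (o' i' : V → Bool) (k' : ℕ), (∀ v, P v (o' v)) ∧ (∀ v, Q v (i' v)) ∧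
      #(labelClass o' s) = #(labelClass i' s) + k' ∧
      #(relabelled p q o' i') + k' ≤ #(relabelled p q o i) + k ∧
      (0 < k' → (∀ v, o' v = s → ¬ P v (!s)) ∧ ∀ v, i' v = (!s) → ¬ Q v s) := by
  set R : ℕ → Prop := fun k' => ∃ o' i' : V → Bool, (∀ v, P v (o' v)) ∧ (∀ v, Q v (i' v)) ∧
    #(labelClass o' s) = #(labelClass i' s) + k' ∧
    #(relabelled p q o' i') + k' ≤ #(relabelled p q o i) + k
  have hR : ∃ k', R k' := ⟨k, o, i, hP, hQ, hk, le_rfl⟩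
  obtain ⟨o', i', hP', hQ', hk', hle⟩ := Nat.find_spec hR
  refine ⟨o', i', Nat.find hR, hP', hQ', hk', hle, fun hpos => ?_⟩
  have hmin : ¬ R (Nat.find hR - 1) := Nat.find_min hR (by omega)
  refine ⟨fun v hv hPv => hmin ?_, fun v hv hQv => hmin ?_⟩
  · have hcard := card_labelClass_update_not hv
    have hrel := card_relabelled_update_left_le p q o' i' v (!s)
    exact ⟨Function.update o' v (!s), i',
      (Function.forall_update_iff o' P).2 ⟨hPv, fun u _ => hP' u⟩, hQ', by omega, by omega⟩
  · have hcard := card_labelClass_update hv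
    have hrel := card_relabelled_update_right_le p q o' i' v s
    exact ⟨o', Function.update i' v s, hP',
      (Function.forall_update_iff i' Q).2 ⟨hQv, fun u _ => hQ' u⟩, by omega, by omega⟩

lemma NearExtremal.card_filter_outNbrs_lt_le [Nonempty V] (h : NearExtremal G p q ε)
    (hε : ε ≤ 1 / 16) (hθ : θ ≤ 1 / 16) (s t : Bool) :
    (#((cell p q s t).filter fun v =>
      (#(outNbrs G v ∩ labelClass q s) : ℝ) < θ * Fintype.card V) : ℝ) ≤
        8 * ε * Fintype.card V := by
  set B := (cell p q s t).filter fun v =>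
    (#(outNbrs G v ∩ labelClass q s) : ℝ) < θ * Fintype.card V
  have hx : (0 : ℝ) < Fintype.card V := Nat.cast_pos.2 Fintype.card_pos
  have hmissing : (#B : ℝ) * #(cell p q (!t) s) + numEdges G (cell p q s t) (cell p q (!t) s) ≤
      #(cell p q s t) * #(cell p q (!t) s) + numEdges G B (cell p q (!t) s) := by
    exact_mod_cast card_mul_card_add_numEdges_le (filter_subset _ _) subset_rfl
  have hfew : (numEdges G B (cell p q (!t) s) : ℝ) ≤ #B * (θ * Fintype.card V) :=
    numEdges_le_of_outdeg fun x hx => le_trans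
      (Nat.cast_le.2 (card_le_card (inter_subset_inter_left inter_subset_right)))
      (mem_filter.1 hx).2.le
  have hfull := h.full s t
  have hsize := h.size (!t) s
  set x : ℝ := (Fintype.card V : ℝ)
  have hgap : 1 / 8 * x ≤ #(cell p q (!t) s) - θ * x := by nlinarith
  have hmul := mul_le_mul_of_nonneg_left hgap (Nat.cast_nonneg #B)
  exact le_of_mul_le_mul_right (by linarith : (#B : ℝ) * x ≤ 8 * ε * x * x) hx

lemma card_le_inter_labelClass_add (S : Finset V) (q : V → Bool) (s : Bool) :
    #S ≤ #(S ∩ labelClass q s) + #(S ∩ labelClass q (!s)) := by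
  refine le_trans (card_le_card ?_) (card_union_le _ _)
  rw [← inter_union_distrib_left, labelClass_union, inter_univ]

lemma exists_le_card_inter_labelClass {S : Finset V} (hS : 2 * a ≤ #S) (q : V → Bool)
    (s : Bool) :
    ∃ t, a ≤ #(S ∩ labelClass q t) ∧ (t ≠ s → (#(S ∩ labelClass q s) : ℝ) < a) := by
  rcases lt_or_ge (#(S ∩ labelClass q s) : ℝ) a with hlt | hle
  · have hadd : (#S : ℝ) ≤ #(S ∩ labelClass q s) + #(S ∩ labelClass q (!s)) := by
      exact_mod_cast card_le_inter_labelClass_add S q s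
    exact ⟨!s, by linarith, fun _ => hlt⟩
  · exact ⟨s, hle, fun h => absurd rfl h⟩

lemma NearExtremal.exists_labels [Nonempty V] (h : NearExtremal G p q ε) (hε : ε ≤ 1 / 16)
    (hθ : θ ≤ 1 / 16) (hdeg : MinSemidegreeGE G (2 * (θ * Fintype.card V))) :
    ∃ o i : V → Bool, (∀ v, θ * Fintype.card V ≤ #(outNbrs G v ∩ labelClass q (o v))) ∧
      (∀ v, θ * Fintype.card V ≤ #(inNbrs G v ∩ labelClass p (i v))) ∧
      (#(relabelled p q o i) : ℝ) ≤ 64 * ε * Fintype.card V := by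
  choose o ho ho' using fun v => exists_le_card_inter_labelClass (hdeg.out v) q (p v)
  choose i hi hi' using fun v => exists_le_card_inter_labelClass (hdeg.in_ v) p (q v)
  refine ⟨o, i, ho, hi, ?_⟩
  set B : Bool × Bool → Finset V := fun e =>
    ((cell p q e.1 e.2).filter fun v =>
      (#(outNbrs G v ∩ labelClass q e.1) : ℝ) < θ * Fintype.card V) ∪
    ((cell p q e.1 e.2).filter fun v =>
      (#(inNbrs G v ∩ labelClass p e.2) : ℝ) < θ * Fintype.card V)
  have hsub : relabelled p q o i ⊆ univ.biUnion B := fun v hv => by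
    rw [mem_biUnion]
    refine ⟨(p v, q v), mem_univ _, mem_union.2 ((mem_relabelled.1 hv).imp (fun hne => ?_)
      fun hne => ?_)⟩
    · exact mem_filter.2 ⟨mem_cell.2 ⟨rfl, rfl⟩, ho' v hne⟩
    · exact mem_filter.2 ⟨mem_cell.2 ⟨rfl, rfl⟩, hi' v hne⟩
  have hcard : ∀ e, (#(B e) : ℝ) ≤ 16 * ε * Fintype.card V := fun e => by
    have hout := h.card_filter_outNbrs_lt_le hε hθ e.1 e.2
    have hin := h.flip.card_filter_outNbrs_lt_le hε hθ e.2 e.1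
    rw [cell_swap p q] at hin
    have hunion : (#(B e) : ℝ) ≤ _ := Nat.cast_le.2 (card_union_le _ _)
    rw [Nat.cast_add] at hunion
    exact hunion.trans ((add_le_add hout hin).trans_eq (by ring))
  calc (#(relabelled p q o i) : ℝ) ≤ ∑ e, (#(B e) : ℝ) := by
        exact_mod_cast (card_le_card hsub).trans card_biUnion_le
    _ ≤ ∑ _e : Bool × Bool, 16 * ε * Fintype.card V := sum_le_sum fun e _ => hcard e
    _ = 64 * ε * Fintype.card V := by
      rw [sum_const, card_univ, nsmul_eq_mul]
      norm_num
      ring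

end Relabelling

section Balancing

variable {V : Type*} {G : V → V → Prop} {M : List (V × V)}

lemma IsMatching.nodup_map_fst (hM : IsMatching G M) : (M.map Prod.fst).Nodup := by
  obtain ⟨-, hnd⟩ := hM
  induction M with
  | nil => exact List.nodup_nil
  | cons e M ih =>
    simp only [endpoints_cons, List.nodup_cons, List.mem_cons, not_or] at hnd
    refine List.nodup_cons.2 ⟨fun he => hnd.1.2 ?_, ih hnd.2.2⟩
    obtain ⟨e', he', heq⟩ := List.mem_map.1 he
    exact heq ▸ fst_mem_endpoints he'

variable [Fintype V] {p q o i : V → Bool} {W : Finset V} {s : Bool} {k : ℕ}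

lemma exists_balancingMatching
    (hM : IsMatching (fun x y => G x y ∧ x ∈ labelClass o s ∧ y ∈ labelClass i (!s)) M)
    (hlabel : #(labelClass o s) = #(labelClass i s) + M.length) :
    ∃ o', BalancingMatching G o i M o' := by
  set T := (M.map Prod.fst).toFinset
  have hTcard : #T = M.length := by
    rw [List.toFinset_card_of_nodup hM.nodup_map_fst, List.length_map]
  have hTo : T ⊆ labelClass o s := fun v hv => by
    obtain ⟨e, he, rfl⟩ := List.mem_map.1 (List.mem_toFinset.1 hv)
    exact (hM.1 e he).2.1
  have hclass : labelClass (fun v => if v ∈ T then !s else o v) s = labelClass o s \ T := by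
    ext v
    by_cases h : v ∈ T <;> simp [h]
  have hcard : #(labelClass (fun v => if v ∈ T then !s else o v) s) = #(labelClass i s) := by
    rw [hclass, card_sdiff_of_subset hTo]
    omega
  refine ⟨fun v => if v ∈ T then !s else o v, ⟨fun e he => ⟨(hM.1 e he).1, ?_⟩, hM.nodup⟩,
    fun v hv => if_neg fun hvT => hv (List.mem_toFinset.1 hvT), fun j => ?_⟩
  · rw [if_pos (List.mem_toFinset.2 (List.mem_map_of_mem he)), mem_labelClass.1 (hM.1 e he).2.2]
  · rcases eq_or_ne j s with rfl | hj
    · exact hcard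
    · have hadd := card_labelClass_add (fun v => if v ∈ T then !s else o v) s
      have hadd' := card_labelClass_add i s
      rw [Bool.eq_not_of_ne hj]
      omega

lemma card_cell_le_add (hW : ∀ v ∉ W, o v = p v ∧ i v = q v) (s t : Bool) :
    #(cell p q s t) ≤ #(cell o i s t) + #W := by
  refine (card_le_card fun v hv => ?_).trans (card_union_le _ _)
  rw [mem_cell] at hv
  rw [mem_union, mem_cell]
  exact or_iff_not_imp_right.2 fun hvW => ⟨(hW v hvW).1.trans hv.1, (hW v hvW).2.trans hv.2⟩

lemma MinSemidegreeGE.exists_isMatching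
    (h : MinSemidegreeGE G ((3 * (Fintype.card V : ℝ) - 4) / 8)) (hG : IsOriented G)
    [Nonempty V] (hcell : ∀ s t, (Fintype.card V : ℝ) / 5 ≤ #(cell o i s t))
    (hW : ∀ v ∉ W, o v = p v ∧ i v = q v) (hWcard : (#W : ℝ) ≤ Fintype.card V / 400)
    (hlabel : #(labelClass o s) = #(labelClass i s) + k)
    (hk : 0 < k →
      (∀ v, o v = s → ¬ 1 / 400 * (Fintype.card V : ℝ) ≤ #(outNbrs G v ∩ labelClass q (!s))) ∧
      ∀ v, i v = (!s) → ¬ 1 / 400 * (Fintype.card V : ℝ) ≤ #(inNbrs G v ∩ labelClass p s)) :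
    ∃ M : List (V × V), M.length = k ∧
      IsMatching (fun x y => G x y ∧ x ∈ labelClass o s ∧ y ∈ labelClass i (!s)) M := by
  rcases Nat.eq_zero_or_pos k with rfl | hk0
  · exact ⟨[], rfl, fun _ he => absurd he List.not_mem_nil, List.nodup_nil⟩
  obtain ⟨hfewOut, hfewIn⟩ := hk hk0
  have hx : (0 : ℝ) < Fintype.card V := Nat.cast_pos.2 Fintype.card_pos
  refine exists_isMatching_of_lt_numEdges (d := ⌊(Fintype.card V : ℝ) / 200⌋₊) hG
    (fun x hx => Nat.le_floor ?_) (fun y hy => Nat.le_floor ?_) k ?_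
  · have hle : (#(outNbrs G x ∩ labelClass i (!s)) : ℝ) ≤
        #(outNbrs G x ∩ labelClass q (!s)) + #W := by
      exact_mod_cast card_inter_labelClass_le_add (fun v hv => (hW v hv).2.symm) _ _
    linarith [not_le.1 (hfewOut x (mem_labelClass.1 hx))]
  · have hle : (#(inNbrs G y ∩ labelClass o s) : ℝ) ≤
        #(inNbrs G y ∩ labelClass p s) + #W := by
      exact_mod_cast card_inter_labelClass_le_add (fun v hv => (hW v hv).1.symm) _ _
    linarith [not_le.1 (hfewIn y (mem_labelClass.1 hy))]
  · have hedges := h.le_numEdges_labelClass hG hcell hk0 hlabel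
    have hfloor := Nat.floor_le (a := (Fintype.card V : ℝ) / 200) (by positivity)
    have hkpos : (0 : ℝ) < k := Nat.cast_pos.2 hk0
    have hmul := mul_le_mul_of_nonneg_left hfloor (by positivity : (0 : ℝ) ≤ 4 * k)
    exact_mod_cast (by linarith [mul_pos hkpos hx] :
      (4 * k * ⌊(Fintype.card V : ℝ) / 200⌋₊ : ℝ) <
        numEdges G (labelClass o s) (labelClass i (!s)))

variable {ε : ℝ}

lemma NearExtremal.card_labelClass_le (h : NearExtremal G p q ε)
    (hW : ∀ v ∉ W, o v = p v ∧ i v = q v) (s : Bool) :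
    (#(labelClass o s) : ℝ) ≤ #(labelClass i s) + 2 * #W + 4 * (ε * Fintype.card V) := by
  have ho : (#(labelClass o s) : ℝ) ≤ #(labelClass p s) + #W := by
    exact_mod_cast card_labelClass_le_add (fun v hv => (hW v hv).1.symm) s
  have hi : (#(labelClass q s) : ℝ) ≤ #(labelClass i s) + #W := by
    exact_mod_cast card_labelClass_le_add (fun v hv => (hW v hv).2) s
  rw [card_labelClass_left p q, Nat.cast_add] at ho
  rw [card_labelClass_right p q, Nat.cast_add] at hi
  linarith [h.size (!s) s, h.card_cell_le s (!s)]

lemma exists_card_labelClass_le (o i : V → Bool) :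
    ∃ s, #(labelClass i s) ≤ #(labelClass o s) := by
  by_contra! hlt
  have hadd := card_labelClass_add o false
  have hadd' := card_labelClass_add i false
  have := hlt false
  have := hlt true
  simp only [Bool.not_false] at hadd hadd'
  omega

lemma forall_notMem_relabelled (p q o i : V → Bool) :
    ∀ v ∉ relabelled p q o i, o v = p v ∧ i v = q v := fun v hv => by simpa using hv

lemma NearExtremal.exists_unimprovable_labels [Nonempty V] (h : NearExtremal G p q ε)
    (hε : ε ≤ 1 / 16) (hdeg : MinSemidegreeGE G (2 * (1 / 400 * (Fintype.card V : ℝ)))) :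
    ∃ (o i : V → Bool) (s : Bool) (k : ℕ),
      (∀ v, 1 / 400 * (Fintype.card V : ℝ) ≤ #(outNbrs G v ∩ labelClass q (o v))) ∧
      (∀ v, 1 / 400 * (Fintype.card V : ℝ) ≤ #(inNbrs G v ∩ labelClass p (i v))) ∧
      #(labelClass o s) = #(labelClass i s) + k ∧
      (#(relabelled p q o i) : ℝ) + k ≤ 196 * ε * Fintype.card V ∧
      (0 < k →
        (∀ v, o v = s → ¬ 1 / 400 * (Fintype.card V : ℝ) ≤ #(outNbrs G v ∩ labelClass q (!s))) ∧
        ∀ v, i v = (!s) → ¬ 1 / 400 * (Fintype.card V : ℝ) ≤ #(inNbrs G v ∩ labelClass p s)) := by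
  obtain ⟨o₀, i₀, hout₀, hin₀, hrel₀⟩ := h.exists_labels hε (by norm_num) hdeg
  obtain ⟨s, hs⟩ := exists_card_labelClass_le o₀ i₀
  obtain ⟨k₀, hk₀⟩ := Nat.exists_eq_add_of_le hs
  obtain ⟨o, i, k, hout, hin, hk, hrel, hstuck⟩ :=
    OrientedHamilton.exists_unimprovable_labels (p := p) (q := q) (s := s)
      (P := fun v s => 1 / 400 * (Fintype.card V : ℝ) ≤ #(outNbrs G v ∩ labelClass q s))
      (Q := fun v s => 1 / 400 * (Fintype.card V : ℝ) ≤ #(inNbrs G v ∩ labelClass p s))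
      hout₀ hin₀ hk₀
  refine ⟨o, i, s, k, hout, hin, hk, ?_, hstuck⟩
  have himbalance := h.card_labelClass_le (forall_notMem_relabelled p q o₀ i₀) s
  rw [hk₀, Nat.cast_add] at himbalance
  have hrel' : (#(relabelled p q o i) : ℝ) + k ≤ #(relabelled p q o₀ i₀) + k₀ := by
    exact_mod_cast hrel
  linarith

lemma NearExtremal.exists_balancingMatching [Nonempty V] (h : NearExtremal G p q ε)
    (hdeg : MinSemidegreeGE G ((3 * (Fintype.card V : ℝ) - 4) / 8)) (hG : IsOriented G)
    (hε : ε ≤ 1 / 80000) (hn : 10 ≤ Fintype.card V) :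
    ∃ (o i : V → Bool) (M : List (V × V)) (o' : V → Bool), BalancingMatching G o i M o' ∧
      (∀ v, 1 / 400 * (Fintype.card V : ℝ) ≤ #(outNbrs G v ∩ labelClass q (o v))) ∧
      (∀ v, 1 / 400 * (Fintype.card V : ℝ) ≤ #(inNbrs G v ∩ labelClass p (i v))) ∧
      (#(relabelled p q o i) : ℝ) + M.length ≤ 196 * ε * Fintype.card V := by
  have hx : (10 : ℝ) ≤ Fintype.card V := by exact_mod_cast hn
  have hεx : ε * Fintype.card V ≤ 1 / 80000 * Fintype.card V :=
    mul_le_mul_of_nonneg_right hε (Nat.cast_nonneg _)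
  obtain ⟨o, i, s, k, hout, hin, hk, hrel, hstuck⟩ := h.exists_unimprovable_labels (by linarith)
    ⟨fun v => le_trans (by linarith) (hdeg.out v), fun v => le_trans (by linarith) (hdeg.in_ v)⟩
  have hW := forall_notMem_relabelled p q o i
  have hWcard : (#(relabelled p q o i) : ℝ) ≤ Fintype.card V / 400 := by
    linarith [k.cast_nonneg (α := ℝ)]
  have hcell : ∀ s t, (Fintype.card V : ℝ) / 5 ≤ #(cell o i s t) := fun s t => by
    have hle : (#(cell p q s t) : ℝ) ≤ #(cell o i s t) + #(relabelled p q o i) := by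
      exact_mod_cast card_cell_le_add hW s t
    linarith [h.size s t]
  obtain ⟨M, rfl, hM⟩ := hdeg.exists_isMatching hG hcell hW hWcard hk hstuck
  obtain ⟨o', ho'⟩ := OrientedHamilton.exists_balancingMatching hM hk
  exact ⟨o, i, M, o', ho', hout, hin, hrel⟩

universe u

lemma exists_isHamCycle_of_nearExtremal : ∃ ε : ℝ, 0 < ε ∧ ∃ n₀ : ℕ, ∀ (V : Type u) [Fintype V]
    (G : V → V → Prop) (p q : V → Bool), n₀ ≤ Fintype.card V → IsOriented G →
    MinSemidegreeGE G ((3 * (Fintype.card V : ℝ) - 4) / 8) → NearExtremal G p q ε →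
    ∃ f, IsHamCycle G f := by
  set ζ : ℝ := 1 / 25600 with hζ
  obtain ⟨ε₀, hε₀, n₁, hdense⟩ := exists_isHamCycle_of_dense (δ := 1 / 800) (τ := 1 / 3200)
    (μ := ζ ^ 2 / 2) (by norm_num) (by norm_num) (by norm_num) (by norm_num) (by norm_num [hζ])
    (by norm_num [hζ])
  obtain ⟨ε, hε, hεζ, hεε₀⟩ : ∃ ε : ℝ, 0 < ε ∧ ε ≤ ζ ^ 2 / 2 ∧ 196 * ε ≤ ε₀ :=
    ⟨min (ζ ^ 2 / 2) (ε₀ / 196), lt_min (by norm_num [hζ]) (by positivity), min_le_left _ _, by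
      linarith [min_le_right (ζ ^ 2 / 2) (ε₀ / 196)]⟩
  have hεζ' : 196 * ε ≤ ζ := by
    rw [hζ] at hεζ ⊢
    norm_num at hεζ ⊢
    linarith
  refine ⟨ε, hε, max n₁ 10, fun V _ G p q hn hG hdeg hne => ?_⟩
  have : Nonempty V := Fintype.card_pos_iff.1 (by omega)
  obtain ⟨o, i, M, o', hM, hout, hin, hrel⟩ := hne.exists_balancingMatching hdeg hG
    (by linarith) (by omega)
  have hx : 0 ≤ (Fintype.card V : ℝ) := Nat.cast_nonneg _
  have hWζ : (#(relabelled p q o i) : ℝ) ≤ ζ * Fintype.card V :=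
    (le_add_of_nonneg_right M.length.cast_nonneg).trans
      (hrel.trans (mul_le_mul_of_nonneg_right hεζ' hx))
  refine hdense V (fun x y => G x y ∧ o x = i y) G o o' i M (by omega) ?_ (fun _ _ h => h.1) hM
    ((le_add_of_nonneg_left (Nat.cast_nonneg _)).trans
      (hrel.trans (mul_le_mul_of_nonneg_right hεε₀ hx)))
  exact hne.dense (forall_notMem_relabelled p q o i) (by norm_num [hζ]) (by norm_num [hζ])
    (by norm_num [hζ]) hεζ le_rfl hWζ
    (hWζ.trans (mul_le_mul_of_nonneg_right (by norm_num [hζ]) hx))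
    (fun v => by linarith [hout v]) fun v => by linarith [hin v]

end Balancing

section SparsePair

variable {V : Type*} [Fintype V] {G : V → V → Prop} {p q : V → Bool} {s : Bool} {μ : ℝ}

/-- An oriented graph on `n` vertices of minimum semidegree at least `(3 / 8 - μ) * n` together with
two large sets, the vertices of outlabel `s` and those of inlabel `!s`, such that only few edges
lead from the first set to the second. -/
structure SparsePair (G : V → V → Prop) (p q : V → Bool) (s : Bool) (μ : ℝ) : Prop where
  oriented : IsOriented G
  semidegree : MinSemidegreeGE G ((3 / 8 - μ) * Fintype.card V)
  le_card_left : (Fintype.card V : ℝ) / 16 ≤ #(labelClass p s)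
  le_card_right : (Fintype.card V : ℝ) / 16 ≤ #(labelClass q (!s))
  le_card_add : (1 - μ) * Fintype.card V ≤ #(labelClass p s) + #(labelClass q (!s))
  numEdges_lt : (numEdges G (labelClass p s) (labelClass q (!s)) : ℝ) <
    μ * Fintype.card V * Fintype.card V

namespace SparsePair

protected lemma flip (h : SparsePair G p q s μ) : SparsePair (flip G) q p (!s) μ where
  oriented := isOriented_flip h.oriented
  semidegree := h.semidegree.flip
  le_card_left := h.le_card_right
  le_card_right := by simpa only [Bool.not_not] using h.le_card_left
  le_card_add := by simpa only [Bool.not_not, add_comm] using h.le_card_add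
  numEdges_lt := by simpa only [Bool.not_not, numEdges_flip] using h.numEdges_lt

lemma card_pos (h : SparsePair G p q s μ) : (0 : ℝ) < Fintype.card V := by
  refine (Nat.cast_nonneg _).lt_of_ne fun h0 => ?_
  have hlt := h.numEdges_lt
  rw [← h0, mul_zero] at hlt
  exact hlt.not_ge (Nat.cast_nonneg _)

lemma mul_card_pos (h : SparsePair G p q s μ) : 0 < μ * Fintype.card V :=
  pos_of_mul_pos_left ((Nat.cast_nonneg _).trans_lt h.numEdges_lt) h.card_pos.le

lemma card_cells (h : SparsePair G p q s μ) :
    (#(cell p q s s) : ℝ) + #(cell p q (!s) s) + (#(cell p q s (!s)) + #(cell p q (!s) (!s))) =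
        Fintype.card V ∧
      (Fintype.card V : ℝ) / 16 ≤ #(cell p q s s) + #(cell p q s (!s)) ∧
      (Fintype.card V : ℝ) / 16 ≤ #(cell p q (!s) (!s)) + #(cell p q s (!s)) ∧
      (#(cell p q (!s) s) : ℝ) ≤ #(cell p q s (!s)) + μ * Fintype.card V := by
  have hcells : (#(cell p q s s) : ℝ) + #(cell p q (!s) s) +
      (#(cell p q s (!s)) + #(cell p q (!s) (!s))) = Fintype.card V := by
    exact_mod_cast OrientedHamilton.card_cells p q s s
  have hleft := h.le_card_left
  have hright := h.le_card_right
  have hadd := h.le_card_add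
  rw [card_labelClass_left p q, Nat.cast_add] at hleft hadd
  rw [card_labelClass_right p q, Bool.not_not, Nat.cast_add] at hright hadd
  exact ⟨hcells, hleft, hright, by linarith⟩

lemma card_mul_le_numEdges_add_left (h : SparsePair G p q s μ) {X : Finset V}
    (hX : X ⊆ labelClass p s) :
    #X * ((3 / 8 - μ) * Fintype.card V) ≤ numEdges G X (cell p q s s) +
      numEdges G X (cell p q (!s) s) + μ * Fintype.card V * Fintype.card V := by
  have hdeg := le_numEdges_univ_right h.semidegree.out X
  rw [numEdges_univ_right q s, numEdges_labelClass_right p q, Nat.cast_add, Nat.cast_add] at hdeg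
  have hsparse : (numEdges G X (labelClass q (!s)) : ℝ) ≤
      numEdges G (labelClass p s) (labelClass q (!s)) := by
    exact_mod_cast numEdges_mono hX subset_rfl fun _ _ _ _ hxy => hxy
  linarith [h.numEdges_lt]

lemma equal_cell_mul_le (h : SparsePair G p q s μ) :
    #(cell p q s s) * ((3 / 8 - μ) * Fintype.card V) ≤ (#(cell p q s s) : ℝ) * #(cell p q s s) / 2 +
      numEdges G (cell p q s s) (cell p q (!s) s) + μ * Fintype.card V * Fintype.card V := by
  have hself : 2 * (numEdges G (cell p q s s) (cell p q s s) : ℝ) + #(cell p q s s) ≤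
      #(cell p q s s) * #(cell p q s s) := by
    exact_mod_cast two_mul_numEdges_self_add_card_le h.oriented _
  have : (0 : ℝ) ≤ #(cell p q s s) := Nat.cast_nonneg _
  linarith [h.card_mul_le_numEdges_add_left (X := cell p q s s) inter_subset_left]

lemma card_mul_le_numEdges_add_right (h : SparsePair G p q s μ) {Y : Finset V}
    (hY : Y ⊆ labelClass q (!s)) :
    #Y * ((3 / 8 - μ) * Fintype.card V) ≤ numEdges G (cell p q (!s) (!s)) Y +
      numEdges G (cell p q (!s) s) Y + μ * Fintype.card V * Fintype.card V := by
  have hin := h.flip.card_mul_le_numEdges_add_left hY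
  rwa [numEdges_flip, numEdges_flip, cell_swap p q, cell_swap p q, Bool.not_not] at hin

lemma unequal_cell_mul_le (h : SparsePair G p q s μ) :
    #(cell p q s (!s)) * (2 * ((3 / 8 - μ) * Fintype.card V)) ≤
      numEdges G (cell p q s (!s)) (cell p q s s) +
        #(cell p q s (!s)) * (#(cell p q (!s) s) + #(cell p q (!s) (!s))) +
          2 * (μ * Fintype.card V) * Fintype.card V := by
  have hswap : (numEdges G (cell p q s (!s)) (cell p q (!s) s) : ℝ) +
      numEdges G (cell p q (!s) s) (cell p q s (!s)) ≤ #(cell p q s (!s)) * #(cell p q (!s) s) := by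
    exact_mod_cast numEdges_add_numEdges_swap_le h.oriented _ _
  have hmul : (numEdges G (cell p q (!s) (!s)) (cell p q s (!s)) : ℝ) ≤
      #(cell p q (!s) (!s)) * #(cell p q s (!s)) := by
    exact_mod_cast numEdges_le_mul G _ _
  linarith [h.card_mul_le_numEdges_add_left (X := cell p q s (!s)) inter_subset_left,
    h.card_mul_le_numEdges_add_right (Y := cell p q s (!s)) inter_subset_right]

lemma le_of_mul_le {x e z w : ℝ} (hx : 0 < x) (he : 0 ≤ e) (hz : x / 100 ≤ z)
    (hzw : z * w ≤ e * x) : w ≤ 100 * e := by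
  by_contra! hw
  have hle : x / 100 * w ≤ z * w := mul_le_mul_of_nonneg_right hz (by linarith)
  have hlt : x / 100 * (100 * e) < x / 100 * w := mul_lt_mul_of_pos_left hw (by positivity)
  linarith

lemma le_card_of_le_equal_cell (h : SparsePair G p q s μ)
    (hA : (Fintype.card V : ℝ) / 100 ≤ #(cell p q s s)) :
    (3 / 8 - μ) * Fintype.card V ≤
      (#(cell p q s s) : ℝ) / 2 + #(cell p q (!s) s) + 100 * (μ * Fintype.card V) := by
  have hmul : (numEdges G (cell p q s s) (cell p q (!s) s) : ℝ) ≤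
      #(cell p q s s) * #(cell p q (!s) s) := by
    exact_mod_cast numEdges_le_mul G _ _
  have hle := le_of_mul_le h.card_pos h.mul_card_pos.le hA
    (w := (3 / 8 - μ) * Fintype.card V - #(cell p q s s) / 2 - #(cell p q (!s) s))
    (by linarith [h.equal_cell_mul_le])
  linarith

lemma le_card_of_le_unequal_cell (h : SparsePair G p q s μ)
    (hD : (Fintype.card V : ℝ) / 100 ≤ #(cell p q s (!s))) :
    (3 / 8 - μ) * Fintype.card V ≤
      (#(cell p q s s) : ℝ) + #(cell p q (!s) s) + 100 * (μ * Fintype.card V) := by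
  have hA : (numEdges G (cell p q s (!s)) (cell p q s s) : ℝ) ≤
      #(cell p q s (!s)) * #(cell p q s s) := by
    exact_mod_cast numEdges_le_mul G _ _
  have hB : (numEdges G (cell p q s (!s)) (cell p q (!s) s) : ℝ) ≤
      #(cell p q s (!s)) * #(cell p q (!s) s) := by
    exact_mod_cast numEdges_le_mul G _ _
  have hle := le_of_mul_le h.card_pos h.mul_card_pos.le hD
    (w := (3 / 8 - μ) * Fintype.card V - #(cell p q s s) - #(cell p q (!s) s))
    (by linarith [h.card_mul_le_numEdges_add_left (X := cell p q s (!s)) inter_subset_left])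
  linarith

lemma two_mul_le_card_of_le_unequal_cell (h : SparsePair G p q s μ)
    (hD : (Fintype.card V : ℝ) / 100 ≤ #(cell p q s (!s))) :
    2 * ((3 / 8 - μ) * Fintype.card V) ≤ (#(cell p q s s) : ℝ) + #(cell p q (!s) s) +
      #(cell p q (!s) (!s)) + 200 * (μ * Fintype.card V) := by
  have hA : (numEdges G (cell p q s (!s)) (cell p q s s) : ℝ) ≤
      #(cell p q s (!s)) * #(cell p q s s) := by
    exact_mod_cast numEdges_le_mul G _ _
  have hle := le_of_mul_le h.card_pos (e := 2 * (μ * Fintype.card V))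
    (by linarith [h.mul_card_pos]) hD
    (w := 2 * ((3 / 8 - μ) * Fintype.card V) - #(cell p q s s) - #(cell p q (!s) s) -
      #(cell p q (!s) (!s)))
    (by linarith [h.unequal_cell_mul_le])
  linarith

lemma le_card_unequal_cell (h : SparsePair G p q s μ) (hμ : μ ≤ 1 / 1000000) :
    (Fintype.card V : ℝ) / 100 ≤ #(cell p q s (!s)) := by
  by_contra! hD
  obtain ⟨hcells, hleft, hright, hBD⟩ := h.card_cells
  have hμx := mul_le_mul_of_nonneg_right hμ h.card_pos.le
  have hA := h.le_card_of_le_equal_cell (by linarith)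
  have hC := h.flip.le_card_of_le_equal_cell (by rw [cell_swap p q]; linarith)
  rw [cell_swap p q, cell_swap p q, Bool.not_not] at hC
  linarith [h.card_pos]

lemma le_card_cells (h : SparsePair G p q s μ) (hμ : μ ≤ 1 / 1000000) :
    (1 / 4 - 1000 * μ) * Fintype.card V ≤ #(cell p q s s) ∧
      (1 / 4 - 1000 * μ) * Fintype.card V ≤ #(cell p q (!s) s) ∧
      (1 / 4 - 1000 * μ) * Fintype.card V ≤ #(cell p q s (!s)) ∧
      (1 / 4 - 1000 * μ) * Fintype.card V ≤ #(cell p q (!s) (!s)) := by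
  have hD := h.le_card_unequal_cell hμ
  have hD₁ := h.le_card_of_le_unequal_cell hD
  have hD₂ := h.flip.le_card_of_le_unequal_cell (by rwa [cell_swap p q, Bool.not_not])
  have hD₃ := h.two_mul_le_card_of_le_unequal_cell hD
  rw [cell_swap p q, cell_swap p q, Bool.not_not] at hD₂
  obtain ⟨hcells, -, -, hBD⟩ := h.card_cells
  have hμx := mul_le_mul_of_nonneg_right hμ h.card_pos.le
  have hA := h.le_card_of_le_equal_cell (by linarith)
  have hC := h.flip.le_card_of_le_equal_cell (by rw [cell_swap p q]; linarith)
  rw [cell_swap p q, cell_swap p q, Bool.not_not] at hC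
  refine ⟨?_, ?_, ?_, ?_⟩ <;> linarith

lemma card_cells_le (h : SparsePair G p q s μ) (hμ : μ ≤ 1 / 1000000) :
    (#(cell p q s s) : ℝ) ≤ (1 / 4 + 3000 * μ) * Fintype.card V ∧
      (#(cell p q (!s) s) : ℝ) ≤ (1 / 4 + 3000 * μ) * Fintype.card V := by
  obtain ⟨hA, hB, hD, hC⟩ := h.le_card_cells hμ
  constructor <;> linarith [h.card_cells.1]

lemma sq_div_forty_le {x z w : ℝ} (hx : 0 < x) (hμ : μ ≤ 1 / 1000000)
    (hz : (1 / 4 - 1000 * μ) * x ≤ z) (hw : (1 / 8 - 4000 * μ) * x ≤ w) :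
    x ^ 2 / 40 + μ * x * x ≤ z * w := by
  have hμx := mul_le_mul_of_nonneg_right hμ hx.le
  have hμxx := mul_le_mul_of_nonneg_right hμx hx.le
  have hmul : 249 / 1000 * x * (121 / 1000 * x) ≤ z * w :=
    mul_le_mul (by linarith) (by linarith) (by positivity) (by linarith)
  linarith [mul_pos hx hx]

lemma le_numEdges_equal_cell_self (h : SparsePair G p q s μ) (hμ : μ ≤ 1 / 1000000) :
    (Fintype.card V : ℝ) ^ 2 / 40 ≤ numEdges G (cell p q s s) (cell p q s s) := by
  have hmul : (numEdges G (cell p q s s) (cell p q (!s) s) : ℝ) ≤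
      #(cell p q s s) * #(cell p q (!s) s) := by
    exact_mod_cast numEdges_le_mul G _ _
  have hlarge := sq_div_forty_le h.card_pos hμ (h.le_card_cells hμ).1
    (w := (3 / 8 - μ) * Fintype.card V - #(cell p q (!s) s))
    (by linarith [(h.card_cells_le hμ).2, h.mul_card_pos])
  linarith [h.card_mul_le_numEdges_add_left (X := cell p q s s) inter_subset_left]

lemma le_numEdges_unequal_cell (h : SparsePair G p q s μ) (hμ : μ ≤ 1 / 1000000) :
    (Fintype.card V : ℝ) ^ 2 / 40 ≤ numEdges G (cell p q s (!s)) (cell p q (!s) s) := by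
  have hmul : (numEdges G (cell p q s (!s)) (cell p q s s) : ℝ) ≤
      #(cell p q s (!s)) * #(cell p q s s) := by
    exact_mod_cast numEdges_le_mul G _ _
  have hlarge := sq_div_forty_le h.card_pos hμ (h.le_card_cells hμ).2.2.1
    (w := (3 / 8 - μ) * Fintype.card V - #(cell p q s s))
    (by linarith [(h.card_cells_le hμ).1, h.mul_card_pos])
  linarith [h.card_mul_le_numEdges_add_left (X := cell p q s (!s)) inter_subset_left]

lemma le_numEdges_from_equal_cell (h : SparsePair G p q s μ) (hμ : μ ≤ 1 / 1000000) :
    (#(cell p q s s) : ℝ) * #(cell p q (!s) s) - 10000 * μ * (Fintype.card V : ℝ) ^ 2 ≤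
      numEdges G (cell p q s s) (cell p q (!s) s) := by
  obtain ⟨hA, hB⟩ := h.card_cells_le hμ
  have hle : #(cell p q s s) * ((#(cell p q s s) : ℝ) / 2 + #(cell p q (!s) s) -
      (3 / 8 - μ) * Fintype.card V) ≤ Fintype.card V * (9000 * (μ * Fintype.card V)) :=
    mul_le_mul_of_nonneg (Nat.cast_le.2 (card_le_univ _)) (by linarith [h.mul_card_pos])
      (Nat.cast_nonneg _) (by linarith [h.mul_card_pos])
  linarith [h.equal_cell_mul_le, mul_pos h.mul_card_pos h.card_pos]

lemma le_numEdges_to_equal_cell (h : SparsePair G p q s μ) (hμ : μ ≤ 1 / 1000000) :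
    (#(cell p q s (!s)) : ℝ) * #(cell p q s s) - 10000 * μ * (Fintype.card V : ℝ) ^ 2 ≤
      numEdges G (cell p q s (!s)) (cell p q s s) := by
  obtain ⟨-, -, hD, -⟩ := h.le_card_cells hμ
  have hle : #(cell p q s (!s)) * ((#(cell p q s s) : ℝ) + #(cell p q (!s) s) +
      #(cell p q (!s) (!s)) - 2 * ((3 / 8 - μ) * Fintype.card V)) ≤
        Fintype.card V * (9000 * (μ * Fintype.card V)) :=
    mul_le_mul_of_nonneg (Nat.cast_le.2 (card_le_univ _))
      (by linarith [h.mul_card_pos, h.card_cells.1])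
      (Nat.cast_nonneg _) (by linarith [h.mul_card_pos])
  linarith [h.unequal_cell_mul_le, mul_pos h.mul_card_pos h.card_pos]

lemma nearExtremal (h : SparsePair G p q s μ) (hμ : μ ≤ 1 / 1000000) :
    NearExtremal G p q (10000 * μ) := by
  obtain ⟨hA, hB, hD, hC⟩ := h.le_card_cells hμ
  have hhalfA := h.le_numEdges_equal_cell_self hμ
  have hhalfC := h.flip.le_numEdges_equal_cell_self hμ
  have hhalfD := h.le_numEdges_unequal_cell hμ
  have hhalfB := h.flip.le_numEdges_unequal_cell hμ
  have hfullA := h.le_numEdges_from_equal_cell hμ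
  have hfullB := h.flip.le_numEdges_from_equal_cell hμ
  have hfullD := h.le_numEdges_to_equal_cell hμ
  have hfullC := h.flip.le_numEdges_to_equal_cell hμ
  simp only [numEdges_flip, cell_swap p q, Bool.not_not] at hhalfC hhalfB hfullB hfullC
  have hμx := h.mul_card_pos
  refine ⟨fun t u => ?_, fun t u => ?_, fun t u => ?_⟩
  all_goals cases s <;> cases t <;> cases u <;>
    simp only [Bool.not_false, Bool.not_true] at * <;> linarith

end SparsePair

end SparsePair

section Dichotomy

variable {V : Type*} [Fintype V] {G : V → V → Prop} {μ τ δ : ℝ}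

lemma dense_const (hμ : 0 < μ) (hτ : 0 < τ) (hn : 0 < Fintype.card V)
    (hdeg : MinSemidegreeGE G (δ * Fintype.card V))
    (hpair : ∀ S T : Finset V, τ * Fintype.card V ≤ #S → τ * Fintype.card V ≤ #T →
      (1 - μ) * Fintype.card V ≤ #S + #T → μ * (Fintype.card V : ℝ) ^ 2 ≤ numEdges G S T) :
    Dense G (fun _ => false) (fun _ => false) δ τ μ where
  label _ _ _ := rfl
  outdeg := hdeg.out
  indeg := hdeg.in_
  block
  | false, S, _, T, _, hS, hT, hST => hpair S T hS hT <| by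
      have huniv : labelClass (fun _ : V => false) false = univ := by ext v; simp
      rw [huniv, card_univ] at hST
      linarith
  | true, S, hS, _, _, hSc, _, _ => by
      have hempty : S = ∅ := eq_empty_of_forall_notMem fun v hv => by simpa using hS hv
      have hpos : 0 < τ * Fintype.card V := by positivity
      rw [hempty, card_empty, Nat.cast_zero] at hSc
      exact absurd hSc hpos.not_ge
  cut S hS hSc := by
    have hcompl : (#Sᶜ : ℝ) + #S = Fintype.card V := by exact_mod_cast card_compl_add_card S
    have hpos : 0 < μ * Fintype.card V := by positivity
    exact hpair _ _ (by linarith) hS (by linarith)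

lemma sparsePair_of_numEdges_lt (hG : IsOriented G)
    (hdeg : MinSemidegreeGE G ((3 / 8 - μ) * Fintype.card V)) {S T : Finset V}
    (hS : 1 / 16 * (Fintype.card V : ℝ) ≤ #S) (hT : 1 / 16 * (Fintype.card V : ℝ) ≤ #T)
    (hST : (1 - μ) * Fintype.card V ≤ #S + #T)
    (hlt : (numEdges G S T : ℝ) < μ * (Fintype.card V : ℝ) ^ 2) :
    SparsePair G (fun v => decide (v ∉ S)) (fun v => decide (v ∈ T)) false μ := by
  have hS_eq : labelClass (fun v => decide (v ∉ S)) false = S := by ext v; simp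
  have hT_eq : labelClass (fun v => decide (v ∈ T)) (!false) = T := by ext v; simp
  exact ⟨hG, hdeg, by rw [hS_eq]; linarith, by rw [hT_eq]; linarith, by rwa [hS_eq, hT_eq],
    by rw [hS_eq, hT_eq]; linarith⟩

lemma dense_or_nearExtremal (hμ : 0 < μ) (hμ1 : μ ≤ 1 / 1000000)
    (hn : 0 < Fintype.card V) (hG : IsOriented G)
    (hdeg : MinSemidegreeGE G ((3 / 8 - μ) * Fintype.card V)) :
    Dense G (fun _ => false) (fun _ => false) (1 / 4) (1 / 16) μ ∨
      ∃ p q, NearExtremal G p q (10000 * μ) := by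
  refine or_iff_not_imp_right.2 fun hne => dense_const hμ (by norm_num) hn
    (hdeg.mono (mul_le_mul_of_nonneg_right (by linarith) (Nat.cast_nonneg _)))
    fun S T hS hT hST => ?_
  by_contra! hlt
  exact hne ⟨_, _, (sparsePair_of_numEdges_lt hG hdeg hS hT hST hlt).nearExtremal hμ1⟩

end Dichotomy

end OrientedHamilton

/-- There exists n₀ such that every oriented graph on n ≥ n₀ vertices with minimum
semidegree at least (3n − 4)/8 contains a Hamilton cycle. -/
theorem oriented_hamilton_min_semidegree :
    ∃ n₀ : ℕ, ∀ (V : Type) [Fintype V] (G : V → V → Prop),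
      IsOriented G →
      n₀ ≤ Fintype.card V →
      (∀ x : V, (3 * (Fintype.card V : ℝ) - 4) / 8 ≤ (outDeg G x : ℝ) ∧
        (3 * (Fintype.card V : ℝ) - 4) / 8 ≤ (inDeg G x : ℝ)) →
      ∃ f : ZMod (Fintype.card V) → V, IsHamCycle G f := by
  obtain ⟨ε, hε, n₁, hextremal⟩ := OrientedHamilton.exists_isHamCycle_of_nearExtremal
  obtain ⟨μ, hμ, hμ1, hμε⟩ : ∃ μ : ℝ, 0 < μ ∧ μ ≤ 1 / 1000000 ∧ 10000 * μ ≤ ε :=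
    ⟨min (1 / 1000000) (ε / 10000), lt_min (by norm_num) (by positivity), min_le_left _ _,
      (le_div_iff₀' (by norm_num)).1 (min_le_right _ _)⟩
  obtain ⟨ε', hε', n₂, hdense⟩ := OrientedHamilton.exists_isHamCycle_of_dense (δ := 1 / 4)
    (τ := 1 / 16) (μ := μ) (by norm_num) (by norm_num) (by norm_num) (by norm_num) hμ (by linarith)
  obtain ⟨n₃, hn₃⟩ := exists_nat_ge (1 / (2 * μ))
  refine ⟨n₁ + n₂ + n₃ + 1, fun V _ G hG hn hd => ?_⟩
  have hdeg := OrientedHamilton.minSemidegreeGE_iff.2 hd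
  have hlarge : 1 / 2 ≤ μ * Fintype.card V := by
    have hle : (n₃ : ℝ) ≤ Fintype.card V := Nat.cast_le.2 (by omega)
    linarith [(div_le_iff₀' (by positivity)).1 (hn₃.trans hle)]
  obtain hG' | ⟨p, q, hpq⟩ := OrientedHamilton.dense_or_nearExtremal hμ hμ1 (by omega) hG
    (hdeg.mono (by linarith))
  · exact hdense V G G _ _ _ [] (by omega) hG' (fun _ _ => id)
      (OrientedHamilton.balancingMatching_nil G _) (by
        rw [List.length_nil, Nat.cast_zero]
        positivity)
  · exact hextremal V G p q (by omega) hG hdeg (hpq.mono hμε)
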